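/- (From the multi-succedent to the single-succedent system, and the grand equivalence.) If mℓIGL ⊢ x:A then ℓIGL ⊢ x:A. Consequently, combining this with soundness of ℓIGL, the passage from birelational to predicate validity, and completeness of mℓIGL, the following are equivalent for every modal formula A: (i) ℓIGL ⊢ x:A; (ii) birel-IGL ⊨ A; (iii) pred-IGL ⊨ A; (iv) mℓIGL ⊢ x:A. -/

import Mathlib

namespace IGL

/-- Modal formulas over propositional symbols indexed by naturals. -/
inductive Formula : Type
  | atom : ℕ → Formula
  | bot  : Formula
  | and  : Formula → Formula → Formula
  | or   : Formula → Formula → Formula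
  | imp  : Formula → Formula → Formula
  | box  : Formula → Formula
  | dia  : Formula → Formula

/-- ¬A abbreviates A → ⊥. -/
def Formula.neg (A : Formula) : Formula := Formula.imp A Formula.bot

/-- Löb's axiom □(□A→A)→□A. -/
def lobAx (A : Formula) : Formula :=
  Formula.imp (Formula.box (Formula.imp (Formula.box A) A)) (Formula.box A)

/-- Boolean evaluation of a formula, treating modal (sub)formulas and atoms as
propositional atoms; used to define substitution instances of classical
propositional tautologies. -/
def evalCPL (v : Formula → Bool) : Formula → Bool
  | Formula.atom n  => v (Formula.atom n)
  | Formula.bot     => false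
  | Formula.and A B => evalCPL v A && evalCPL v B
  | Formula.or  A B => evalCPL v A || evalCPL v B
  | Formula.imp A B => !evalCPL v A || evalCPL v B
  | Formula.box A   => v (Formula.box A)
  | Formula.dia A   => v (Formula.dia A)

/-- A (substitution instance of a) theorem of classical propositional logic. -/
def Taut (A : Formula) : Prop := ∀ v, evalCPL v A = true

/-- The modal logic K: classical propositional logic, axiom k, modus ponens, necessitation. -/
inductive KProof : Formula → Prop
  | taut {A : Formula} : Taut A → KProof A
  | axK (A B : Formula) :
      KProof (Formula.imp (Formula.box (Formula.imp A B))
        (Formula.imp (Formula.box A) (Formula.box B)))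
  | mp {A B : Formula} : KProof (Formula.imp A B) → KProof A → KProof B
  | nec {A : Formula} : KProof A → KProof (Formula.box A)

/-- The modal logic K4: K plus axiom 4. -/
inductive K4Proof : Formula → Prop
  | taut {A : Formula} : Taut A → K4Proof A
  | axK (A B : Formula) :
      K4Proof (Formula.imp (Formula.box (Formula.imp A B))
        (Formula.imp (Formula.box A) (Formula.box B)))
  | ax4 (A : Formula) :
      K4Proof (Formula.imp (Formula.box A) (Formula.box (Formula.box A)))
  | mp {A B : Formula} : K4Proof (Formula.imp A B) → K4Proof A → K4Proof B
  | nec {A : Formula} : K4Proof A → K4Proof (Formula.box A)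

/-- Gödel–Löb logic GL: K4 plus Löb's axiom. -/
inductive GLProof : Formula → Prop
  | taut {A : Formula} : Taut A → GLProof A
  | axK (A B : Formula) :
      GLProof (Formula.imp (Formula.box (Formula.imp A B))
        (Formula.imp (Formula.box A) (Formula.box B)))
  | ax4 (A : Formula) :
      GLProof (Formula.imp (Formula.box A) (Formula.box (Formula.box A)))
  | axLob (A : Formula) : GLProof (lobAx A)
  | mp {A B : Formula} : GLProof (Formula.imp A B) → GLProof A → GLProof B
  | nec {A : Formula} : GLProof A → GLProof (Formula.box A)

/-- Classical relational (Kripke) satisfaction. -/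
def sat {W : Type} (R : W → W → Prop) (V : W → ℕ → Prop) : W → Formula → Prop
  | w, Formula.atom n  => V w n
  | _, Formula.bot     => False
  | w, Formula.and A B => sat R V w A ∧ sat R V w B
  | w, Formula.or  A B => sat R V w A ∨ sat R V w B
  | w, Formula.imp A B => sat R V w A → sat R V w B
  | w, Formula.box A   => ∀ v, R w v → sat R V v A
  | w, Formula.dia A   => ∃ v, R w v ∧ sat R V v A

/-- A frame satisfies `A` if every model based on it satisfies `A` at every world. -/
def FrameSat (W : Type) (R : W → W → Prop) (A : Formula) : Prop :=
  ∀ (V : W → ℕ → Prop) (w : W), sat R V w A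

/-- A relation is terminating if it admits no infinite path. -/
def Terminating {α : Type} (r : α → α → Prop) : Prop :=
  ¬ ∃ f : ℕ → α, ∀ n, r (f n) (f (n + 1))

/-! ### Labelled sequents -/

/-- A labelled formula `x : A`. -/
abbrev LFormula := ℕ × Formula

/-- A labelled sequent `R, Γ ⇒ Δ`: a set of relational atoms and two
multisets of labelled formulas. -/
structure Sequent : Type where
  rel : Set (ℕ × ℕ)
  left : Multiset LFormula
  right : Multiset LFormula

/-- Variables occurring in a set of relational atoms. -/
def relVars (R : Set (ℕ × ℕ)) : Set ℕ := {z | ∃ w, (z, w) ∈ R ∨ (w, z) ∈ R}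

/-- Labels occurring in a multiset of labelled formulas. -/
def mLabels (Γ : Multiset LFormula) : Set ℕ := {z | ∃ A, (z, A) ∈ Γ}

/-- The variables/labels occurring in a sequent. -/
def Sequent.vars (S : Sequent) : Set ℕ := relVars S.rel ∪ mLabels S.left ∪ mLabels S.right

/-- `y` is a fresh label for the sequent `S`. -/
def Fresh (y : ℕ) (S : Sequent) : Prop := y ∉ S.vars

/-- A sequent has exactly one formula on the right-hand side. -/
def SingleRHS (S : Sequent) : Prop := Multiset.card S.right = 1

/-- Rule instances of the standard labelled calculi, presented as a relation
between a conclusion and its list of premisses.  The flag `tr` enables the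
transitivity rule (giving ℓK4 rather than ℓK), the flag `thn` enables the
relational thinning rule `th`, and the flag `ir` imposes the restriction that
the →-right and □-right rules have exactly one formula on the RHS (giving the
multi-succedent intuitionistic system mℓIK4). -/
inductive Rule (tr thn ir : Bool) : Sequent → List Sequent → Prop
  | id (R : Set (ℕ × ℕ)) (x p : ℕ) :
      Rule tr thn ir ⟨R, {(x, Formula.atom p)}, {(x, Formula.atom p)}⟩ []
  | cut (R : Set (ℕ × ℕ)) (Γ Γ' Δ Δ' : Multiset LFormula) (x : ℕ) (A : Formula) :
      Rule tr thn ir ⟨R, Γ + Γ', Δ + Δ'⟩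
        [⟨R, Γ, (x, A) ::ₘ Δ⟩, ⟨R, (x, A) ::ₘ Γ', Δ'⟩]
  | wkL (R : Set (ℕ × ℕ)) (Γ Δ : Multiset LFormula) (x : ℕ) (A : Formula) :
      Rule tr thn ir ⟨R, (x, A) ::ₘ Γ, Δ⟩ [⟨R, Γ, Δ⟩]
  | wkR (R : Set (ℕ × ℕ)) (Γ Δ : Multiset LFormula) (x : ℕ) (A : Formula) :
      Rule tr thn ir ⟨R, Γ, (x, A) ::ₘ Δ⟩ [⟨R, Γ, Δ⟩]
  | ctrL (R : Set (ℕ × ℕ)) (Γ Δ : Multiset LFormula) (x : ℕ) (A : Formula) :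
      Rule tr thn ir ⟨R, (x, A) ::ₘ Γ, Δ⟩ [⟨R, (x, A) ::ₘ (x, A) ::ₘ Γ, Δ⟩]
  | ctrR (R : Set (ℕ × ℕ)) (Γ Δ : Multiset LFormula) (x : ℕ) (A : Formula) :
      Rule tr thn ir ⟨R, Γ, (x, A) ::ₘ Δ⟩ [⟨R, Γ, (x, A) ::ₘ (x, A) ::ₘ Δ⟩]
  | th (R R' : Set (ℕ × ℕ)) (Γ Δ : Multiset LFormula) :
      thn = true → Rule tr thn ir ⟨R ∪ R', Γ, Δ⟩ [⟨R, Γ, Δ⟩]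
  | botL (R : Set (ℕ × ℕ)) (Γ Δ : Multiset LFormula) (x : ℕ) :
      Rule tr thn ir ⟨R, (x, Formula.bot) ::ₘ Γ, Δ⟩ []
  | impL (R : Set (ℕ × ℕ)) (Γ Γ' Δ Δ' : Multiset LFormula) (x : ℕ) (A B : Formula) :
      Rule tr thn ir ⟨R, (x, Formula.imp A B) ::ₘ (Γ + Γ'), Δ + Δ'⟩
        [⟨R, Γ, (x, A) ::ₘ Δ⟩, ⟨R, (x, B) ::ₘ Γ', Δ'⟩]
  | impR (R : Set (ℕ × ℕ)) (Γ Δ : Multiset LFormula) (x : ℕ) (A B : Formula) :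
      (ir = true → Δ = 0) →
      Rule tr thn ir ⟨R, Γ, (x, Formula.imp A B) ::ₘ Δ⟩ [⟨R, (x, A) ::ₘ Γ, (x, B) ::ₘ Δ⟩]
  | andL₁ (R : Set (ℕ × ℕ)) (Γ Δ : Multiset LFormula) (x : ℕ) (A B : Formula) :
      Rule tr thn ir ⟨R, (x, Formula.and A B) ::ₘ Γ, Δ⟩ [⟨R, (x, A) ::ₘ Γ, Δ⟩]
  | andL₂ (R : Set (ℕ × ℕ)) (Γ Δ : Multiset LFormula) (x : ℕ) (A B : Formula) :
      Rule tr thn ir ⟨R, (x, Formula.and A B) ::ₘ Γ, Δ⟩ [⟨R, (x, B) ::ₘ Γ, Δ⟩]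
  | orL (R : Set (ℕ × ℕ)) (Γ Δ : Multiset LFormula) (x : ℕ) (A B : Formula) :
      Rule tr thn ir ⟨R, (x, Formula.or A B) ::ₘ Γ, Δ⟩
        [⟨R, (x, A) ::ₘ Γ, Δ⟩, ⟨R, (x, B) ::ₘ Γ, Δ⟩]
  | orR₁ (R : Set (ℕ × ℕ)) (Γ Δ : Multiset LFormula) (x : ℕ) (A B : Formula) :
      Rule tr thn ir ⟨R, Γ, (x, Formula.or A B) ::ₘ Δ⟩ [⟨R, Γ, (x, A) ::ₘ Δ⟩]
  | orR₂ (R : Set (ℕ × ℕ)) (Γ Δ : Multiset LFormula) (x : ℕ) (A B : Formula) :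
      Rule tr thn ir ⟨R, Γ, (x, Formula.or A B) ::ₘ Δ⟩ [⟨R, Γ, (x, B) ::ₘ Δ⟩]
  | andR (R : Set (ℕ × ℕ)) (Γ Δ : Multiset LFormula) (x : ℕ) (A B : Formula) :
      Rule tr thn ir ⟨R, Γ, (x, Formula.and A B) ::ₘ Δ⟩
        [⟨R, Γ, (x, A) ::ₘ Δ⟩, ⟨R, Γ, (x, B) ::ₘ Δ⟩]
  | diaL (R : Set (ℕ × ℕ)) (Γ Δ : Multiset LFormula) (x y : ℕ) (A : Formula) :
      Fresh y ⟨R, (x, Formula.dia A) ::ₘ Γ, Δ⟩ →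
      Rule tr thn ir ⟨R, (x, Formula.dia A) ::ₘ Γ, Δ⟩
        [⟨insert (x, y) R, (y, A) ::ₘ Γ, Δ⟩]
  | diaR (R : Set (ℕ × ℕ)) (Γ Δ : Multiset LFormula) (x y : ℕ) (A : Formula) :
      (x, y) ∈ R →
      Rule tr thn ir ⟨R, Γ, (x, Formula.dia A) ::ₘ Δ⟩ [⟨R, Γ, (y, A) ::ₘ Δ⟩]
  | boxR (R : Set (ℕ × ℕ)) (Γ Δ : Multiset LFormula) (x y : ℕ) (A : Formula) :
      (ir = true → Δ = 0) →
      Fresh y ⟨R, Γ, (x, Formula.box A) ::ₘ Δ⟩ →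
      Rule tr thn ir ⟨R, Γ, (x, Formula.box A) ::ₘ Δ⟩
        [⟨insert (x, y) R, Γ, (y, A) ::ₘ Δ⟩]
  | boxL (R : Set (ℕ × ℕ)) (Γ Δ : Multiset LFormula) (x y : ℕ) (A : Formula) :
      (x, y) ∈ R →
      Rule tr thn ir ⟨R, (x, Formula.box A) ::ₘ Γ, Δ⟩ [⟨R, (y, A) ::ₘ Γ, Δ⟩]
  | trans (R : Set (ℕ × ℕ)) (Γ Δ : Multiset LFormula) (x y z : ℕ) :
      tr = true → (x, y) ∈ R → (y, z) ∈ R →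
      Rule tr thn ir ⟨R, Γ, Δ⟩ [⟨insert (x, z) R, Γ, Δ⟩]

/-- The labelled calculus ℓK. -/
def RuleLK : Sequent → List Sequent → Prop := Rule false true false

/-- The labelled calculus ℓK4 (= ℓK + transitivity rule). -/
def RuleLK4 : Sequent → List Sequent → Prop := Rule true true false

/-- ℓK4 without the thinning rule th. -/
def RuleLK4NoTh : Sequent → List Sequent → Prop := Rule true false false

/-- The multi-succedent intuitionistic calculus mℓIK4: ℓK4 where the →-right
and □-right rules must have exactly one formula on the RHS. -/
def RuleMLIK4 : Sequent → List Sequent → Prop := Rule true true true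

/-- The single-succedent intuitionistic calculus ℓIK4: the restriction of ℓK4
to sequents with exactly one formula on the RHS. -/
def RuleLIK4 : Sequent → List Sequent → Prop :=
  fun S ps => RuleLK4 S ps ∧ SingleRHS S ∧ ∀ p ∈ ps, SingleRHS p

/-- ℓIK4 without the thinning rule th. -/
def RuleLIK4NoTh : Sequent → List Sequent → Prop :=
  fun S ps => RuleLK4NoTh S ps ∧ SingleRHS S ∧ ∀ p ∈ ps, SingleRHS p

/-- Finite (wellfounded) derivability from a set of rule instances. -/
inductive Deriv (rule : Sequent → List Sequent → Prop) : Sequent → Prop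
  | step (S : Sequent) (prems : List Sequent) :
      rule S prems → (∀ S' ∈ prems, Deriv rule S') → Deriv rule S

/-! ### Non-wellfounded proofs -/

/-- A (possibly infinite) preproof of `S₀`: a tree of sequents, given as a
partial labelling of finite paths (lists of child indices), whose root is `S₀`
and in which every node is the conclusion of a rule instance whose premisses
are exactly its children. -/
structure Preproof (rule : Sequent → List Sequent → Prop) (S₀ : Sequent) : Type where
  node : List ℕ → Option Sequent
  root : node [] = some S₀
  children : ∀ p S, node p = some S →
    ∃ prems : List Sequent, rule S prems ∧ ∀ i : ℕ, node (p ++ [i]) = prems[i]?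

/-- The path of length `n` along the branch determined by `f`. -/
def branchPath (f : ℕ → ℕ) (n : ℕ) : List ℕ := (List.range n).map f

/-- An infinite sequence of sequents (a branch) has a progressing trace:
from some point on there are labels `x i` occurring in the `i`-th sequent with
either `x (i+1) = x i` or the relational atom `(x i) R (x (i+1))` occurring in
the `i`-th sequent, the latter happening infinitely often. -/
def Progressing (Sb : ℕ → Sequent) : Prop :=
  ∃ (k : ℕ) (x : ℕ → ℕ),
    (∀ i, k ≤ i → x i ∈ (Sb i).vars) ∧
    (∀ i, k ≤ i → x (i + 1) = x i ∨ (x i, x (i + 1)) ∈ (Sb i).rel) ∧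
    (∀ n, ∃ i, n ≤ i ∧ k ≤ i ∧ (x i, x (i + 1)) ∈ (Sb i).rel)

/-- `S₀` has an ∞-proof: a preproof all of whose infinite branches have a
progressing trace. -/
def InfProof (rule : Sequent → List Sequent → Prop) (S₀ : Sequent) : Prop :=
  ∃ P : Preproof rule S₀,
    ∀ (f : ℕ → ℕ) (Sb : ℕ → Sequent),
      (∀ n, P.node (branchPath f n) = some (Sb n)) → Progressing Sb

/-! ### Birelational semantics -/

/-- A birelational model on the set of worlds `W`: an intuitionistic partial
order `le`, an accessibility relation `acc` satisfying the frame conditions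
(F1) and (F2), and a monotone valuation. -/
structure Birel (W : Type) : Type where
  le : W → W → Prop
  le_refl : ∀ w, le w w
  le_trans : ∀ u v w, le u v → le v w → le u w
  le_antisymm : ∀ u v, le u v → le v u → u = v
  acc : W → W → Prop
  F1 : ∀ w w' v, le w w' → acc w v → ∃ v', le v v' ∧ acc w' v'
  F2 : ∀ w v v', acc w v → le v v' → ∃ w', le w w' ∧ acc w' v'
  val : W → ℕ → Prop
  val_mono : ∀ w w', le w w' → ∀ p, val w p → val w' p

/-- Birelational satisfaction. -/
def bsat {W : Type} (B : Birel W) : W → Formula → Prop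
  | w, Formula.atom p  => B.val w p
  | _, Formula.bot     => False
  | w, Formula.and A C => bsat B w A ∧ bsat B w C
  | w, Formula.or  A C => bsat B w A ∨ bsat B w C
  | w, Formula.imp A C => ∀ w', B.le w w' → bsat B w' A → bsat B w' C
  | w, Formula.box A   => ∀ w' v, B.le w w' → B.acc w' v → bsat B v A
  | w, Formula.dia A   => ∃ v, B.acc w v ∧ bsat B v A

/-- Membership in the class birel-IGL: the accessibility relation is
transitive and the composite ≤;R is terminating. -/
def BirelIGL {W : Type} (B : Birel W) : Prop :=
  Transitive B.acc ∧ Terminating (fun u v => ∃ m, B.le u m ∧ B.acc m v)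

/-- An interpretation of a sequent into a birelational model: a map on labels
sending relational atoms of the sequent to accessibility-related worlds. -/
def Interp {W : Type} (B : Birel W) (I : ℕ → W) (S : Sequent) : Prop :=
  ∀ x y, (x, y) ∈ S.rel → B.acc (I x) (I y)

/-- `B, I ⊨ S`. -/
def seqSat {W : Type} (B : Birel W) (I : ℕ → W) (S : Sequent) : Prop :=
  (∀ q ∈ S.left, bsat B (I q.1) q.2) → ∃ q ∈ S.right, bsat B (I q.1) q.2

/-- `B ⊨ S`: satisfaction under every interpretation. -/
def seqValid {W : Type} (B : Birel W) (S : Sequent) : Prop :=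
  ∀ I : ℕ → W, Interp B I S → seqSat B I S

/-- Conjunction of a nonempty list of formulas `A ∧ B₁ ∧ ... ∧ Bₙ`. -/
def conjList : Formula → List Formula → Formula
  | A, [] => A
  | A, B :: l => Formula.and A (conjList B l)

/-! ### (Quasi-)trees -/

/-- A set of relational atoms is a tree: there is a root from which every
other variable is reachable by a unique path of relational atoms. -/
def IsTree (R : Set (ℕ × ℕ)) : Prop :=
  ∃ x₀ ∈ relVars R, ∀ x ∈ relVars R, x ≠ x₀ →
    ∃! l : List ℕ, l ≠ [] ∧ List.Chain (fun a b => (a, b) ∈ R) x₀ l ∧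
      l.getLast? = some x

/-- A quasi-tree: squeezed between a tree and its transitive closure. -/
def IsQuasiTree (R : Set (ℕ × ℕ)) : Prop :=
  ∃ R₀ : Set (ℕ × ℕ), IsTree R₀ ∧ R₀ ⊆ R ∧
    ∀ q ∈ R, Relation.TransGen (fun a b => (a, b) ∈ R₀) q.1 q.2

/-- The (single-succedent) sequent `R, Γ ⇒ x:A` is quasi-tree-like. -/
def QuasiTreeLike (R : Set (ℕ × ℕ)) (Γ : Multiset LFormula) (x : ℕ) : Prop :=
  (R = ∅ ∧ mLabels Γ ⊆ {x}) ∨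
  (IsQuasiTree R ∧ mLabels Γ ∪ {x} ⊆ relVars R)

/-! ### Kripke predicate structures -/

/-- A Kripke (predicate) structure: partially ordered worlds, growing nonempty
domains, monotone interpretations of the unary predicates, and growing binary
relations on the domains. -/
structure Kripke (W D : Type) : Type where
  le : W → W → Prop
  le_refl : ∀ w, le w w
  le_trans : ∀ u v w, le u v → le v w → le u w
  le_antisymm : ∀ u v, le u v → le v u → u = v
  Dom : W → Set D
  Dom_ne : ∀ w, (Dom w).Nonempty
  Dom_mono : ∀ w w', le w w' → Dom w ⊆ Dom w'
  Pr : W → ℕ → Set D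
  Pr_sub : ∀ w p, Pr w p ⊆ Dom w
  Pr_mono : ∀ w w' p, le w w' → Pr w p ⊆ Pr w' p
  Rel : W → D → D → Prop
  Rel_dom : ∀ w d e, Rel w d e → d ∈ Dom w ∧ e ∈ Dom w
  Rel_mono : ∀ w w' d e, le w w' → Rel w d e → Rel w' d e

/-- Satisfaction `K, w ⊨^ρ ⟨A⟩ₓ` of the standard translation of `A`; since the
translation of `A` at `x` has only `x` free, satisfaction is presented through
the value `d = ρ x` of the environment at `x`. -/
def ksat {W D : Type} (K : Kripke W D) : W → D → Formula → Prop
  | w, d, Formula.atom p  => d ∈ K.Pr w p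
  | _, _, Formula.bot     => False
  | w, d, Formula.and A B => ksat K w d A ∧ ksat K w d B
  | w, d, Formula.or  A B => ksat K w d A ∨ ksat K w d B
  | w, d, Formula.imp A B => ∀ w', K.le w w' → ksat K w' d A → ksat K w' d B
  | w, d, Formula.box A   => ∀ w' e, K.le w w' → K.Rel w' d e → ksat K w' e A
  | w, d, Formula.dia A   => ∃ e, K.Rel w d e ∧ ksat K w e A

/-- Membership in the class pred-IGL: each `R_w` is transitive and the
composite `≤_{D_W} ; R_{D_W}` on pairs `(w, d)` with `d ∈ D_w` is terminating. -/
def PredIGL {W D : Type} (K : Kripke W D) : Prop :=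
  (∀ w, Transitive (K.Rel w)) ∧
  ¬ ∃ (f : ℕ → W) (g : ℕ → D),
      ∀ n, g n ∈ K.Dom (f n) ∧ K.le (f n) (f (n + 1)) ∧
        K.Rel (f (n + 1)) (g n) (g (n + 1))

/-!
Provability in ℓIGL implies provability in mℓIGL because single-succedent rules are multi-succedent
rules. A predicate counterexample is pushed up a branch of an mℓIGL-proof, and a progressing trace
would give an infinite path of `≤ ; R`; hence mℓIGL is sound for pred-IGL. The pairs `(w, d)` with
`d ∈ D_w` form a birelational model, and conversely a birelational model unravels to a predicate
structure whose domain consists of finite paths and whose worlds are the partial maps from paths to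
worlds along which the frame conditions can be propagated.

For completeness of the single-succedent calculus, consider bottom-up proof search as a game in
which the prover chooses a rule and the opponent a premiss, the prover winning an infinite play
if new `◇`-witnesses appear infinitely often below some fixed label. This is a countable union of
Büchi conditions, so if the prover has no winning strategy, the opponent can refute from a set of
nodes on which all plays fail the condition, and saturated nodes then form a Henkin countermodel
in pred-IGL: an infinite path of `≤ ; R` would contain, besides `◇`-witnesses, counterexamples to
only finitely many formulas `□A`, as `□A` is assumed at a counterexample to `□A`. A winning
strategy in turn yields an ℓIGL-proof. The assumption `□A` at the new label is supplied by a cut,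
whose other premiss repeats the conclusion at the new label; a branch following these repetitions
forever has a progressing trace, and on any other branch König's lemma provides one through the
`◇`-witnesses.
-/

open Filter

/-- Validity of a formula in every model of the class birel-IGL. -/
def BirelValid (A : Formula) : Prop :=
  ∀ (W : Type) (B : Birel W), BirelIGL B → ∀ w, bsat B w A

/-- Validity of the standard translation of a formula in every structure of the class pred-IGL;
an environment enters only through the value `d` of the free variable. -/
def PredValid (A : Formula) : Prop :=
  ∀ (W D : Type) (K : Kripke W D), PredIGL K → ∀ w, ∀ d ∈ K.Dom w, ksat K w d A

/-! ### The single-succedent calculus is a fragment of the multi-succedent one -/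

theorem InfProof.mono {rule rule' : Sequent → List Sequent → Prop} {S : Sequent}
    (hrule : ∀ S prems, rule S prems → rule' S prems) (h : InfProof rule S) :
    InfProof rule' S := by
  obtain ⟨⟨node, root, children⟩, hprog⟩ := h
  refine ⟨⟨node, root, fun p S hS => ?_⟩, hprog⟩
  obtain ⟨prems, hr, hprems⟩ := children p S hS
  exact ⟨prems, hrule S prems hr, hprems⟩

theorem RuleLIK4.ruleMLIK4 {S : Sequent} {prems : List Sequent} (h : RuleLIK4 S prems) :
    RuleMLIK4 S prems := by
  obtain ⟨hr, hsingle, -⟩ := h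
  unfold RuleLK4 at hr
  unfold SingleRHS at hsingle
  cases hr with
  | id => exact .id ..
  | cut => exact .cut ..
  | wkL => exact .wkL ..
  | wkR => exact .wkR ..
  | ctrL => exact .ctrL ..
  | ctrR => exact .ctrR ..
  | th _ _ _ _ h => exact .th _ _ _ _ h
  | botL => exact .botL ..
  | impL => exact .impL ..
  | impR => exact .impR _ _ _ _ _ _ (fun _ => by simpa using hsingle)
  | andL₁ => exact .andL₁ ..
  | andL₂ => exact .andL₂ ..
  | orL => exact .orL ..
  | orR₁ => exact .orR₁ ..
  | orR₂ => exact .orR₂ ..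
  | andR => exact .andR ..
  | diaL _ _ _ _ _ _ hfresh => exact .diaL _ _ _ _ _ _ hfresh
  | diaR _ _ _ _ _ _ hxy => exact .diaR _ _ _ _ _ _ hxy
  | boxR _ _ _ _ _ _ _ hfresh => exact .boxR _ _ _ _ _ _ (fun _ => by simpa using hsingle) hfresh
  | boxL _ _ _ _ _ _ hxy => exact .boxL _ _ _ _ _ _ hxy
  | trans _ _ _ _ _ _ htr hxy hyz => exact .trans _ _ _ _ _ _ htr hxy hyz

theorem InfProof.multi_of_single {S : Sequent} (h : InfProof RuleLIK4 S) : InfProof RuleMLIK4 S :=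
  h.mono fun _ _ => RuleLIK4.ruleMLIK4

/-! ### From birelational to predicate validity -/

/-- The birelational model of a Kripke structure: its worlds are the pairs of a world and an
element of its domain, `≤` moves the world and accessibility moves the element. -/
def Kripke.toBirel {W D : Type} (K : Kripke W D) : Birel {p : W × D // p.2 ∈ K.Dom p.1} where
  le p q := K.le p.1.1 q.1.1 ∧ p.1.2 = q.1.2
  le_refl p := ⟨K.le_refl _, rfl⟩
  le_trans _ _ _ h h' := ⟨K.le_trans _ _ _ h.1 h'.1, h.2.trans h'.2⟩
  le_antisymm _ _ h h' := Subtype.ext (Prod.ext (K.le_antisymm _ _ h.1 h'.1) h.2)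
  acc p q := p.1.1 = q.1.1 ∧ K.Rel p.1.1 p.1.2 q.1.2
  F1 := by
    rintro ⟨⟨w, d⟩, _⟩ ⟨⟨w', _⟩, _⟩ ⟨⟨_, e⟩, _⟩ ⟨hle, rfl⟩ ⟨rfl, hrel⟩
    have hrel' := K.Rel_mono _ _ _ _ hle hrel
    exact ⟨⟨(w', e), (K.Rel_dom _ _ _ hrel').2⟩, ⟨hle, rfl⟩, rfl, hrel'⟩
  F2 := by
    rintro ⟨⟨w, d⟩, _⟩ ⟨⟨_, e⟩, _⟩ ⟨⟨w', _⟩, _⟩ ⟨rfl, hrel⟩ ⟨hle, rfl⟩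
    have hrel' := K.Rel_mono _ _ _ _ hle hrel
    exact ⟨⟨(w', d), (K.Rel_dom _ _ _ hrel').1⟩, ⟨hle, rfl⟩, rfl, hrel'⟩
  val p n := p.1.2 ∈ K.Pr p.1.1 n
  val_mono := by
    rintro ⟨⟨w, d⟩, _⟩ ⟨⟨w', _⟩, _⟩ ⟨hle, rfl⟩ p hp
    exact K.Pr_mono _ _ _ hle hp

theorem Kripke.bsat_toBirel_iff {W D : Type} (K : Kripke W D) (A : Formula) {w : W} {d : D}
    (h : d ∈ K.Dom w) : bsat K.toBirel ⟨(w, d), h⟩ A ↔ ksat K w d A := by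
  induction A generalizing w d with
  | atom p => rfl
  | bot => rfl
  | and A B ihA ihB => exact and_congr (ihA h) (ihB h)
  | or A B ihA ihB => exact or_congr (ihA h) (ihB h)
  | imp A B ihA ihB =>
    constructor
    · intro H w' hw hA
      have hd := K.Dom_mono _ _ hw h
      exact (ihB hd).1 (H ⟨(w', d), hd⟩ ⟨hw, rfl⟩ ((ihA hd).2 hA))
    · rintro H ⟨⟨w', _⟩, hd⟩ ⟨hw, rfl⟩ hA
      exact (ihB hd).2 (H w' hw ((ihA hd).1 hA))
  | box A ih =>
    constructor
    · intro H w' e hw hrel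
      have hd := K.Rel_dom _ _ _ hrel
      exact (ih hd.2).1 (H ⟨(w', d), hd.1⟩ ⟨(w', e), hd.2⟩ ⟨hw, rfl⟩ ⟨rfl, hrel⟩)
    · rintro H ⟨⟨w', _⟩, _⟩ ⟨⟨_, e⟩, he⟩ ⟨hw, rfl⟩ ⟨rfl, hrel⟩
      exact (ih he).2 (H _ _ hw hrel)
  | dia A ih =>
    constructor
    · rintro ⟨⟨⟨_, e⟩, he⟩, ⟨rfl, hrel⟩, hA⟩
      exact ⟨e, hrel, (ih he).1 hA⟩
    · rintro ⟨e, hrel, hA⟩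
      have he := (K.Rel_dom _ _ _ hrel).2
      exact ⟨⟨(w, e), he⟩, ⟨rfl, hrel⟩, (ih he).2 hA⟩

theorem PredIGL.birelIGL_toBirel {W D : Type} {K : Kripke W D} (h : PredIGL K) :
    BirelIGL K.toBirel := by
  refine ⟨?_, ?_⟩
  · rintro ⟨⟨w, d⟩, _⟩ ⟨⟨_, d'⟩, _⟩ ⟨⟨_, e⟩, _⟩ ⟨rfl, hrel⟩ ⟨rfl, hrel'⟩
    exact ⟨rfl, h.1 _ hrel hrel'⟩
  · rintro ⟨f, hf⟩
    refine h.2 ⟨fun n => (f n).1.1, fun n => (f n).1.2, fun n => ?_⟩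
    obtain ⟨m, ⟨hle, hel⟩, hworld, hrel⟩ := hf n
    dsimp only
    rw [← hworld, hel]
    exact ⟨hel ▸ (f n).2, hle, hrel⟩

theorem BirelValid.predValid {A : Formula} (h : BirelValid A) : PredValid A :=
  fun _ _ K hK _ _ hd => (K.bsat_toBirel_iff A hd).1 (h _ K.toBirel hK.birelIGL_toBirel _)

/-! ### From predicate to birelational validity -/

theorem exists_extension_of_step {α β : Type*} {P : List α → β → Prop}
    {step : α → List α → β → β → Prop}
    (hstep : ∀ k x b, P x b → ∃ b', P (k :: x) b' ∧ step k x b b')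
    {T : Set (List α)} (hnil : [] ∈ T) {g : List α → β} (hg : ∀ e ∈ T, P e (g e)) :
    ∃ G : List α → β, (∀ e ∈ T, G e = g e) ∧ (∀ e, P e (G e)) ∧
      ∀ k x, k :: x ∉ T → step k x (G x) (G (k :: x)) := by
  classical
  choose! next hnext hnext_step using hstep
  let G : List α → β := fun e =>
    List.rec (g []) (fun k x b => if k :: x ∈ T then g (k :: x) else next k x b) e
  have G_cons (k x) : G (k :: x) = if k :: x ∈ T then g (k :: x) else next k x (G x) := rfl
  have G_good : ∀ e, P e (G e) := by
    intro e
    induction e with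
    | nil => exact hg _ hnil
    | cons k x ih =>
      rw [G_cons]
      split_ifs with hT
      · exact hg _ hT
      · exact hnext k x _ ih
  refine ⟨G, fun e he => ?_, G_good, fun k x hk => ?_⟩
  · cases e with
    | nil => rfl
    | cons k x => rw [G_cons, if_pos he]
  · rw [G_cons, if_neg hk]
    exact hnext_step k x _ (G_good x)

/-- A world of the unravelling of `B`: a tree of names, each name `k :: d` being a child of `d`,
labelled by worlds of `B` so that parents access their children. The natural number in a name only
serves to have unused names available (`bounded`), with which every accessible world of `B` can be
made the label of a child (`full`). -/
@[ext]
structure Unravelling {W : Type} (B : Birel W) : Type where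
  label : List (ℕ × W) → Option W
  root : ∃ a, label [] = some a
  acc_of_cons : ∀ k x a, label (k :: x) = some a → ∃ b, label x = some b ∧ B.acc b a
  bounded : ∃ N, ∀ k x, N ≤ k.1 → label (k :: x) = none
  full : ∀ d a c, label d = some a → B.acc a c → ∃ k, label (k :: d) = some c

namespace Unravelling

variable {W : Type} {B : Birel W}

open Classical in
/-- The labelling `H` together with, for every labelled name, an `N`-indexed child for each
accessible world. -/
noncomputable def saturate (B : Birel W) (H : List (ℕ × W) → Option W) (N : ℕ) :
    List (ℕ × W) → Option W
  | [] => H []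
  | k :: x =>
    if k.1 = N then
      if ∃ b, saturate B H N x = some b ∧ B.acc b k.2 then some k.2 else none
    else H (k :: x)

theorem saturate_eq_some {H : List (ℕ × W) → Option W} {N : ℕ}
    (bounded : ∀ k x, N ≤ k.1 → H (k :: x) = none) {e : List (ℕ × W)} {b : W}
    (h : H e = some b) : saturate B H N e = some b := by
  cases e with
  | nil => exact h
  | cons k x =>
    rw [saturate, if_neg]
    · exact h
    · intro hk
      simp [bounded k x hk.ge] at h

theorem exists_saturation {H : List (ℕ × W) → Option W} {N : ℕ} (root : ∃ a, H [] = some a)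
    (acc_of_cons : ∀ k x a, H (k :: x) = some a → ∃ b, H x = some b ∧ B.acc b a)
    (bounded : ∀ k x, N ≤ k.1 → H (k :: x) = none) :
    ∃ F : Unravelling B, ∀ e b, H e = some b → F.label e = some b := by
  refine ⟨⟨saturate B H N, root, ?_, ⟨N + 1, ?_⟩, ?_⟩, fun e b => saturate_eq_some bounded⟩
  · intro k x a h
    rw [saturate] at h
    split_ifs at h with _ hacc
    · cases h
      exact hacc
    · obtain ⟨b, hb, hba⟩ := acc_of_cons _ _ _ h
      exact ⟨b, saturate_eq_some bounded hb, hba⟩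
  · intro k x hk
    rw [saturate, if_neg (by omega)]
    exact bounded k x (by omega)
  · intro d a c ha hac
    exact ⟨(N, c), by rw [saturate, if_pos rfl, if_pos ⟨a, ha, hac⟩]⟩

theorem exists_label_nil_eq (B : Birel W) (w : W) :
    ∃ F : Unravelling B, F.label [] = some w := by
  classical
  obtain ⟨F, hF⟩ := exists_saturation (B := B) (N := 0)
    (H := fun e => if e = [] then some w else none) ⟨w, rfl⟩ (by simp) (by simp)
  exact ⟨F, hF _ _ rfl⟩

theorem exists_label_of_suffix [IsTrans W B.acc] (F : Unravelling B) {d e : List (ℕ × W)} {a : W}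
    (hde : d <:+ e) (ha : F.label e = some a) :
    ∃ b, F.label d = some b ∧ (d ≠ e → B.acc b a) := by
  induction e generalizing a with
  | nil =>
    obtain rfl := List.suffix_nil.1 hde
    exact ⟨a, ha, fun h => absurd rfl h⟩
  | cons k e ih =>
    rcases List.suffix_cons_iff.1 hde with rfl | hde
    · exact ⟨a, ha, fun h => absurd rfl h⟩
    · obtain ⟨c, hc, hca⟩ := F.acc_of_cons _ _ _ ha
      obtain ⟨b, hb, hbc⟩ := ih hde hc
      refine ⟨b, hb, fun _ => ?_⟩
      by_cases hd : d = e
      · subst hd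
        cases hb.symm.trans hc
        exact hca
      · exact _root_.trans (hbc hd) hca

theorem exists_lift_suffixes (F : Unravelling B) {d : List (ℕ × W)} {a a' : W}
    (ha : F.label d = some a) (hle : B.le a a') :
    ∃ g : List (ℕ × W) → W, g d = a' ∧
      (∀ e, e <:+ d → ∀ b, F.label e = some b → B.le b (g e)) ∧
      ∀ k x, (k :: x) <:+ d → B.acc (g x) (g (k :: x)) := by
  classical
  induction d generalizing a a' with
  | nil =>
    refine ⟨fun _ => a', rfl, fun e he b hb => ?_, fun k x hk => by simp at hk⟩
    rw [List.suffix_nil.1 he, ha] at hb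
    cases hb
    exact hle
  | cons k d ih =>
    obtain ⟨b, hb, hba⟩ := F.acc_of_cons _ _ _ ha
    obtain ⟨b', hbb', hb'a'⟩ := B.F2 _ _ _ hba hle
    obtain ⟨g, hgd, hg_le, hg_acc⟩ := ih hb hbb'
    have hne : ∀ e, e <:+ d → e ≠ k :: d := by
      rintro e he rfl
      simpa using he.length_le
    refine ⟨Function.update g (k :: d) a', Function.update_self .., fun e he c hc => ?_,
      fun j x hx => ?_⟩
    · rcases List.suffix_cons_iff.1 he with rfl | he
      · rw [ha] at hc
        cases hc
        rwa [Function.update_self]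
      · rw [Function.update_of_ne (hne e he)]
        exact hg_le e he c hc
    · rcases List.suffix_cons_iff.1 hx with h | hx
      · cases h
        rwa [Function.update_self, Function.update_of_ne (hne _ List.suffix_rfl), hgd]
      · rw [Function.update_of_ne (hne _ hx),
          Function.update_of_ne (hne _ ((List.suffix_cons _ _).trans hx))]
        exact hg_acc j x hx

theorem exists_lift (F : Unravelling B) {d : List (ℕ × W)} {a a' : W}
    (ha : F.label d = some a) (hle : B.le a a') :
    ∃ G : List (ℕ × W) → W, G d = a' ∧ (∀ e b, F.label e = some b → B.le b (G e)) ∧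
      ∀ k x b, F.label (k :: x) = some b → B.acc (G x) (G (k :: x)) := by
  obtain ⟨g, hgd, hg_le, hg_acc⟩ := F.exists_lift_suffixes ha hle
  have lift_child : ∀ k x w, (∀ b, F.label x = some b → B.le b w) →
      ∃ w', (∀ b, F.label (k :: x) = some b → B.le b w') ∧
        ∀ b, F.label (k :: x) = some b → B.acc w w' := by
    intro k x w hw
    cases hb : F.label (k :: x) with
    | none => simpa using ⟨w⟩
    | some b =>
      obtain ⟨c, hc, hcb⟩ := F.acc_of_cons _ _ _ hb
      simpa using B.F1 c w b (hw c hc) hcb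
  obtain ⟨G, hGg, hG_le, hG_acc⟩ :=
    exists_extension_of_step lift_child (T := {e | e <:+ d}) List.nil_suffix hg_le
  refine ⟨G, (hGg d List.suffix_rfl).trans hgd, hG_le, fun k x b hb => ?_⟩
  by_cases hk : (k :: x) <:+ d
  · rw [hGg _ hk, hGg x ((List.suffix_cons _ _).trans hk)]
    exact hg_acc k x hk
  · exact hG_acc k x hk b hb

theorem exists_extension (F : Unravelling B) {d : List (ℕ × W)} {a a' : W}
    (ha : F.label d = some a) (hle : B.le a a') :
    ∃ F' : Unravelling B, F'.label d = some a' ∧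
      ∀ e b, F.label e = some b → ∃ b', F'.label e = some b' ∧ B.le b b' := by
  obtain ⟨G, hGd, hG_le, hG_acc⟩ := F.exists_lift ha hle
  obtain ⟨N, hN⟩ := F.bounded
  obtain ⟨F', hF'⟩ := exists_saturation (B := B) (N := N)
    (H := fun e => (F.label e).map fun _ => G e)
    (by
      obtain ⟨b, hb⟩ := F.root
      exact ⟨G [], by simp [hb]⟩)
    (by
      intro k x c hc
      obtain ⟨b, hb, rfl⟩ := Option.map_eq_some_iff.1 hc
      obtain ⟨b', hb', -⟩ := F.acc_of_cons _ _ _ hb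
      exact ⟨G x, by simp [hb'], hG_acc _ _ _ hb⟩)
    (fun k x hk => by simp [hN k x hk])
  exact ⟨F', hGd ▸ hF' d _ (by simp [ha]),
    fun e b hb => ⟨G e, hF' _ _ (by simp [hb]), hG_le e b hb⟩⟩

/-- The Kripke structure of all worlds of the unravelling: names are the individuals, a name being
related to its proper extensions, and the order compares labels pointwise. -/
def kripke (B : Birel W) [IsTrans W B.acc] : Kripke (Unravelling B) (List (ℕ × W)) where
  le F F' := ∀ e b, F.label e = some b → ∃ b', F'.label e = some b' ∧ B.le b b'
  le_refl F e b h := ⟨b, h, B.le_refl _⟩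
  le_trans F G H hFG hGH e b hb := by
    obtain ⟨c, hc, hbc⟩ := hFG e b hb
    obtain ⟨c', hc', hcc'⟩ := hGH e c hc
    exact ⟨c', hc', B.le_trans _ _ _ hbc hcc'⟩
  le_antisymm F F' hFF' hF'F := by
    ext e b : 3
    have key : ∀ {G G' : Unravelling B},
        (∀ e b, G.label e = some b → ∃ b', G'.label e = some b' ∧ B.le b b') →
        (∀ e b, G'.label e = some b → ∃ b', G.label e = some b' ∧ B.le b b') →
        G.label e = some b → G'.label e = some b := by
      intro G G' h h' hb
      obtain ⟨c, hc, hbc⟩ := h e b hb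
      obtain ⟨c', hc', hcc'⟩ := h' e c hc
      cases hb.symm.trans hc'
      rw [hc, B.le_antisymm _ _ hbc hcc']
    exact ⟨key hFF' hF'F, key hF'F hFF'⟩
  Dom F := {d | ∃ a, F.label d = some a}
  Dom_ne F := ⟨[], F.root⟩
  Dom_mono F F' h d := fun ⟨a, ha⟩ => (h d a ha).imp fun _ => And.left
  Pr F p := {d | ∃ a, F.label d = some a ∧ B.val a p}
  Pr_sub F p d := fun ⟨a, ha, _⟩ => ⟨a, ha⟩
  Pr_mono F F' p h d := fun ⟨a, ha, hp⟩ =>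
    (h d a ha).imp fun _ hb => ⟨hb.1, B.val_mono _ _ hb.2 _ hp⟩
  Rel F d e := (d <:+ e ∧ d ≠ e) ∧ ∃ a, F.label e = some a
  Rel_dom F d e := fun ⟨⟨hde, _⟩, a, ha⟩ =>
    ⟨(F.exists_label_of_suffix hde ha).imp fun _ => And.left, a, ha⟩
  Rel_mono F F' d e h := fun ⟨hde, a, ha⟩ => ⟨hde, (h e a ha).imp fun _ => And.left⟩

variable [IsTrans W B.acc]

theorem acc_of_kripke_rel {F : Unravelling B} {d e : List (ℕ × W)} {a : W}
    (hde : (kripke B).Rel F d e) (ha : F.label d = some a) :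
    ∃ b, F.label e = some b ∧ B.acc a b := by
  obtain ⟨⟨hsuffix, hne⟩, b, hb⟩ := hde
  obtain ⟨c, hc, hcb⟩ := F.exists_label_of_suffix hsuffix hb
  cases ha.symm.trans hc
  exact ⟨b, hb, hcb hne⟩

theorem kripke_rel_cons {F : Unravelling B} {d : List (ℕ × W)} {k : ℕ × W} {c : W}
    (hc : F.label (k :: d) = some c) : (kripke B).Rel F d (k :: d) :=
  ⟨⟨List.suffix_cons _ _, fun h => by simpa using congrArg List.length h⟩, c, hc⟩

theorem ksat_kripke_iff (A : Formula) {F : Unravelling B} {d : List (ℕ × W)} {a : W}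
    (ha : F.label d = some a) : ksat (kripke B) F d A ↔ bsat B a A := by
  induction A generalizing F d a with
  | atom p =>
    refine ⟨?_, fun hp => ⟨a, ha, hp⟩⟩
    rintro ⟨b, hb, hp⟩
    cases ha.symm.trans hb
    exact hp
  | bot => rfl
  | and A C ihA ihC => exact and_congr (ihA ha) (ihC ha)
  | or A C ihA ihC => exact or_congr (ihA ha) (ihC ha)
  | imp A C ihA ihC =>
    constructor
    · intro H a' hle hA
      obtain ⟨F', ha', hFF'⟩ := F.exists_extension ha hle
      exact (ihC ha').1 (H F' hFF' ((ihA ha').2 hA))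
    · intro H F' hFF' hA
      obtain ⟨b, hb, hab⟩ := hFF' d a ha
      exact (ihC hb).2 (H b hab ((ihA hb).1 hA))
  | box A ih =>
    constructor
    · intro H a' c hle hacc
      obtain ⟨F', ha', hFF'⟩ := F.exists_extension ha hle
      obtain ⟨k, hk⟩ := F'.full _ _ _ ha' hacc
      exact (ih hk).1 (H F' _ hFF' (kripke_rel_cons hk))
    · intro H F' e hFF' hde
      obtain ⟨b, hb, hab⟩ := hFF' d a ha
      obtain ⟨c, hc, hbc⟩ := acc_of_kripke_rel hde hb
      exact (ih hc).2 (H b c hab hbc)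
  | dia A ih =>
    constructor
    · rintro ⟨e, hde, hA⟩
      obtain ⟨c, hc, hac⟩ := acc_of_kripke_rel hde ha
      exact ⟨c, hac, (ih hc).1 hA⟩
    · rintro ⟨c, hac, hA⟩
      obtain ⟨k, hk⟩ := F.full _ _ _ ha hac
      exact ⟨_, kripke_rel_cons hk, (ih hk).2 hA⟩

theorem predIGL_kripke (h : Terminating fun u v => ∃ m, B.le u m ∧ B.acc m v) :
    PredIGL (kripke B) := by
  refine ⟨?_, ?_⟩
  · rintro F d e i ⟨⟨hde, hne⟩, -⟩ ⟨⟨hei, -⟩, hi⟩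
    refine ⟨⟨hde.trans hei, ?_⟩, hi⟩
    rintro rfl
    exact hne (hde.eq_of_length (le_antisymm hde.length_le hei.length_le))
  · rintro ⟨f, g, hfg⟩
    choose a ha using fun n => (hfg n).1
    refine h ⟨a, fun n => ?_⟩
    obtain ⟨m, hm, hle⟩ := (hfg n).2.1 _ _ (ha n)
    obtain ⟨c, hc, hacc⟩ := acc_of_kripke_rel (hfg n).2.2 hm
    cases (ha (n + 1)).symm.trans hc
    exact ⟨m, hle, hacc⟩

end Unravelling

theorem PredValid.birelValid {A : Formula} (h : PredValid A) : BirelValid A := by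
  intro W B hB w
  have : IsTrans W B.acc := ⟨hB.1⟩
  obtain ⟨F, hF⟩ := Unravelling.exists_label_nil_eq B w
  exact (Unravelling.ksat_kripke_iff A hF).1
    (h _ _ _ (Unravelling.predIGL_kripke hB.2) F [] ⟨w, hF⟩)

/-! ### Soundness of the multi-succedent calculus -/

theorem apply_nth_count {α : Type*} {J : ℕ → Prop} [DecidablePred J] (hJ : (Set.ofPred J).Infinite)
    {d : ℕ → α} (hd : ∀ n, ¬ J n → d (n + 1) = d n) (n : ℕ) :
    d (Nat.nth J (Nat.count J n)) = d n := by
  have const : ∀ m, n ≤ m → m ≤ Nat.nth J (Nat.count J n) → d m = d n := by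
    intro m hnm
    induction m, hnm using Nat.le_induction with
    | base => exact fun _ => rfl
    | succ m hnm ih =>
      intro hm
      have hJm : ¬ J m := fun h => by
        have hle := Nat.nth_monotone hJ (Nat.count_monotone J hnm)
        rw [Nat.nth_count h] at hle
        omega
      rw [hd m hJm, ih (by omega)]
  exact const _ (Nat.le_nth_count hJ n) le_rfl

theorem Preproof.exists_branch {rule : Sequent → List Sequent → Prop} {S₀ : Sequent}
    (P : Preproof rule S₀) {σ : Type*} {Inv : Sequent → σ → Prop} {step : Sequent → σ → σ → Prop}
    (h : ∀ S prems a, rule S prems → Inv S a → ∃ S' ∈ prems, ∃ a', step S a a' ∧ Inv S' a')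
    {a₀ : σ} (h₀ : Inv S₀ a₀) :
    ∃ (f : ℕ → ℕ) (Sb : ℕ → Sequent) (a : ℕ → σ),
      (∀ n, P.node (branchPath f n) = some (Sb n)) ∧ (∀ n, Inv (Sb n) (a n)) ∧
      ∀ n, step (Sb n) (a n) (a (n + 1)) := by
  let State := {s : List ℕ × Sequent × σ // P.node s.1 = some s.2.1 ∧ Inv s.2.1 s.2.2}
  have next : ∀ s : State, ∃ (i : ℕ) (s' : State), s'.1.1 = s.1.1 ++ [i] ∧
      step s.1.2.1 s.1.2.2 s'.1.2.2 := by
    rintro ⟨⟨p, S, a⟩, hS, ha⟩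
    obtain ⟨prems, hrule, hnode⟩ := P.children p S hS
    obtain ⟨S', hS', a', hstep, ha'⟩ := h S prems a hrule ha
    obtain ⟨i, hi⟩ := List.mem_iff_getElem?.1 hS'
    exact ⟨i, ⟨⟨p ++ [i], S', a'⟩, (hnode i).trans hi, ha'⟩, rfl, hstep⟩
  choose index next hpath hstep using next
  let s : ℕ → State := fun n => Nat.rec ⟨([], S₀, a₀), P.root, h₀⟩ (fun _ => next) n
  have path_eq : ∀ n, branchPath (fun n => index (s n)) n = (s n).1.1 := by
    intro n
    induction n with
    | zero => rfl
    | succ n ih =>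
      change _ = (next (s n)).1.1
      rw [hpath, ← ih]
      simp [branchPath, List.range_succ]
  exact ⟨fun n => index (s n), fun n => (s n).1.2.1, fun n => (s n).1.2.2,
    fun n => (path_eq n).symm ▸ (s n).2.1, fun n => (s n).2.2, fun n => hstep (s n)⟩

theorem ksat_mono {W D : Type} {K : Kripke W D} {A : Formula} {w w' : W} {d : D}
    (hle : K.le w w') (h : ksat K w d A) : ksat K w' d A := by
  induction A generalizing d with
  | atom p => exact K.Pr_mono _ _ _ hle h
  | bot => exact h
  | and A B ihA ihB => exact ⟨ihA h.1, ihB h.2⟩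
  | or A B ihA ihB => exact h.imp ihA ihB
  | imp A B => exact fun v hv => h v (K.le_trans _ _ _ hle hv)
  | box A => exact fun v e hv => h v e (K.le_trans _ _ _ hle hv)
  | dia A ih =>
    obtain ⟨e, hrel, hA⟩ := h
    exact ⟨e, K.Rel_mono _ _ _ _ hle hrel, ih hA⟩

/-- The world `w` of `K` falsifies the sequent under the assignment `ρ` of individuals to labels. -/
structure Falsifies {W D : Type} (K : Kripke W D) (w : W) (ρ : ℕ → D) (S : Sequent) : Prop where
  rel : ∀ q ∈ S.rel, K.Rel w (ρ q.1) (ρ q.2)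
  left : ∀ q ∈ S.left, ksat K w (ρ q.1) q.2
  right : ∀ q ∈ S.right, ¬ ksat K w (ρ q.1) q.2

section Falsifies

variable {W D : Type} {K : Kripke W D} {w w' : W} {ρ : ℕ → D} {R : Set (ℕ × ℕ)}
  {Γ Γ' Δ Δ' : Multiset LFormula} {x y : ℕ} {A B : Formula}

theorem falsifies_iff : Falsifies K w ρ ⟨R, Γ, Δ⟩ ↔
    (∀ q ∈ R, K.Rel w (ρ q.1) (ρ q.2)) ∧ (∀ q ∈ Γ, ksat K w (ρ q.1) q.2) ∧
      ∀ q ∈ Δ, ¬ ksat K w (ρ q.1) q.2 :=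
  ⟨fun h => ⟨h.rel, h.left, h.right⟩, fun h => ⟨h.1, h.2.1, h.2.2⟩⟩

theorem falsifies_cons_left :
    Falsifies K w ρ ⟨R, (x, A) ::ₘ Γ, Δ⟩ ↔ ksat K w (ρ x) A ∧ Falsifies K w ρ ⟨R, Γ, Δ⟩ := by
  simp only [falsifies_iff, Multiset.forall_mem_cons]
  tauto

theorem falsifies_cons_right :
    Falsifies K w ρ ⟨R, Γ, (x, A) ::ₘ Δ⟩ ↔ ¬ ksat K w (ρ x) A ∧ Falsifies K w ρ ⟨R, Γ, Δ⟩ := by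
  simp only [falsifies_iff, Multiset.forall_mem_cons]
  tauto

theorem falsifies_insert_rel :
    Falsifies K w ρ ⟨insert (x, y) R, Γ, Δ⟩ ↔
      K.Rel w (ρ x) (ρ y) ∧ Falsifies K w ρ ⟨R, Γ, Δ⟩ := by
  simp only [falsifies_iff, Set.forall_mem_insert]
  tauto

theorem falsifies_add : Falsifies K w ρ ⟨R, Γ + Γ', Δ + Δ'⟩ ↔
    Falsifies K w ρ ⟨R, Γ, Δ⟩ ∧ Falsifies K w ρ ⟨R, Γ', Δ'⟩ := by
  simp only [falsifies_iff, Multiset.mem_add, or_imp, forall_and]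
  tauto

theorem Falsifies.mono (hle : K.le w w') (h : Falsifies K w ρ ⟨R, Γ, Δ⟩) :
    Falsifies K w' ρ ⟨R, Γ, 0⟩ :=
  ⟨fun q hq => K.Rel_mono _ _ _ _ hle (h.rel q hq), fun q hq => ksat_mono hle (h.left q hq),
    by simp⟩

theorem Falsifies.update {S : Sequent} (h : Falsifies K w ρ S) (hy : Fresh y S) (e : D) :
    Falsifies K w (Function.update ρ y e) S := by
  have heq : ∀ v ∈ S.vars, Function.update ρ y e v = ρ v := fun v hv =>
    Function.update_of_ne (by rintro rfl; exact hy hv) _ _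
  refine ⟨fun q hq => ?_, fun q hq => ?_, fun q hq => ?_⟩
  · rw [heq q.1 (.inl (.inl ⟨q.2, .inl hq⟩)), heq q.2 (.inl (.inl ⟨q.1, .inr hq⟩))]
    exact h.rel q hq
  · rw [heq q.1 (.inl (.inr ⟨q.2, hq⟩))]
    exact h.left q hq
  · rw [heq q.1 (.inr ⟨q.2, hq⟩)]
    exact h.right q hq

theorem Fresh.of_subset {S S' : Sequent} (h : Fresh y S) (hrel : S'.rel ⊆ S.rel)
    (hleft : S'.left ⊆ S.left) (hright : S'.right ⊆ S.right) : Fresh y S' := by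
  rintro ((⟨z, hz⟩ | ⟨A, hA⟩) | ⟨A, hA⟩)
  · exact h (.inl (.inl ⟨z, hz.imp (@hrel _) (@hrel _)⟩))
  · exact h (.inl (.inr ⟨A, hleft hA⟩))
  · exact h (.inr ⟨A, hright hA⟩)

theorem Falsifies.diaL_prem (h : Falsifies K w ρ ⟨R, (x, .dia A) ::ₘ Γ, Δ⟩)
    (hy : Fresh y ⟨R, (x, .dia A) ::ₘ Γ, Δ⟩) :
    ∃ e, Falsifies K w (Function.update ρ y e) ⟨insert (x, y) R, (y, A) ::ₘ Γ, Δ⟩ := by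
  obtain ⟨⟨e, hrel, hA⟩, h⟩ := falsifies_cons_left.1 h
  have hxy : x ≠ y := by
    rintro rfl
    exact hy (.inl (.inr ⟨_, Multiset.mem_cons_self ..⟩))
  refine ⟨e, ?_⟩
  rw [falsifies_insert_rel, falsifies_cons_left, Function.update_self, Function.update_of_ne hxy]
  exact ⟨hrel, hA, h.update
    (hy.of_subset subset_rfl (Multiset.subset_cons ..) (Multiset.Subset.refl _)) e⟩

theorem Falsifies.impR_prem (h : Falsifies K w ρ ⟨R, Γ, (x, .imp A B) ::ₘ Δ⟩) :
    ∃ w', K.le w w' ∧ Falsifies K w' ρ ⟨R, (x, A) ::ₘ Γ, (x, B) ::ₘ 0⟩ := by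
  obtain ⟨himp, h⟩ := falsifies_cons_right.1 h
  simp only [ksat, not_forall] at himp
  obtain ⟨w', hle, hA, hB⟩ := himp
  exact ⟨w', hle, falsifies_cons_left.2 ⟨hA, falsifies_cons_right.2 ⟨hB, h.mono hle⟩⟩⟩

theorem Falsifies.boxR_prem (h : Falsifies K w ρ ⟨R, Γ, (x, .box A) ::ₘ Δ⟩)
    (hy : Fresh y ⟨R, Γ, (x, .box A) ::ₘ Δ⟩) :
    ∃ w' e, K.le w w' ∧
      Falsifies K w' (Function.update ρ y e) ⟨insert (x, y) R, Γ, (y, A) ::ₘ 0⟩ := by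
  obtain ⟨hbox, h⟩ := falsifies_cons_right.1 h
  simp only [ksat, not_forall] at hbox
  obtain ⟨w', e, hle, hrel, hA⟩ := hbox
  have hxy : x ≠ y := by
    rintro rfl
    exact hy (.inr ⟨_, Multiset.mem_cons_self ..⟩)
  refine ⟨w', e, hle, ?_⟩
  rw [falsifies_insert_rel, falsifies_cons_right, Function.update_self, Function.update_of_ne hxy]
  exact ⟨hrel, hA, (h.mono hle).update
    (hy.of_subset subset_rfl (Multiset.Subset.refl _) (Multiset.zero_subset _)) e⟩

theorem Falsifies.exists_prem (hK : ∀ w, IsTrans D (K.Rel w)) {S : Sequent} {prems : List Sequent}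
    (hrule : RuleMLIK4 S prems) (h : Falsifies K w ρ S) :
    ∃ S' ∈ prems, ∃ w' ρ', (K.le w w' ∧ Set.EqOn ρ' ρ S.vars) ∧ Falsifies K w' ρ' S' := by
  suffices static : (∃ S' ∈ prems, Falsifies K w ρ S') ∨
      ∃ S' ∈ prems, ∃ w' ρ', (K.le w w' ∧ Set.EqOn ρ' ρ S.vars) ∧ Falsifies K w' ρ' S' by
    rcases static with ⟨S', hS', hfalse⟩ | hmove
    · exact ⟨S', hS', w, ρ, ⟨K.le_refl w, fun _ _ => rfl⟩, hfalse⟩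
    · exact hmove
  have update_eqOn {y} (hy : Fresh y S) (e : D) : Set.EqOn (Function.update ρ y e) ρ S.vars :=
    fun v hv => Function.update_of_ne (by rintro rfl; exact hy hv) _ _
  unfold RuleMLIK4 at hrule
  cases hrule with
  | id R x p => exact absurd (h.left _ (by simp)) (h.right (x, .atom p) (by simp))
  | botL => exact (falsifies_cons_left.1 h).1.elim
  | diaL _ _ _ _ _ _ hy =>
    obtain ⟨e, he⟩ := h.diaL_prem hy
    exact .inr ⟨_, by simp, w, _, ⟨K.le_refl w, update_eqOn hy e⟩, he⟩
  | impR _ _ _ _ _ _ hΔ =>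
    obtain ⟨w', hle, hw'⟩ := h.impR_prem
    exact .inr ⟨_, by simp, w', ρ, ⟨hle, fun _ _ => rfl⟩, hΔ rfl ▸ hw'⟩
  | boxR _ _ _ _ _ _ hΔ hy =>
    obtain ⟨w', e, hle, hw'⟩ := h.boxR_prem hy
    exact .inr ⟨_, by simp, w', _, ⟨hle, update_eqOn hy e⟩, hΔ rfl ▸ hw'⟩
  | th => exact .inl ⟨_, List.mem_singleton_self _, fun q hq => h.rel q (.inl hq), h.left, h.right⟩
  | diaR _ _ _ _ _ _ hxy | boxL _ _ _ _ _ _ hxy =>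
    have hrel := h.rel _ hxy
    have hrefl := K.le_refl w
    simp only [falsifies_cons_left, falsifies_cons_right, ksat] at h
    simp only [List.mem_singleton, exists_eq_left, falsifies_cons_left, falsifies_cons_right]
    grind
  | trans _ _ _ _ _ _ _ hxy hyz =>
    exact .inl ⟨_, by simp, falsifies_insert_rel.2
      ⟨(hK w).trans _ _ _ (h.rel _ hxy) (h.rel _ hyz), h⟩⟩
  | _ =>
    have hrefl := K.le_refl w
    simp only [falsifies_cons_left, falsifies_cons_right, falsifies_add, ksat] at h
    simp only [List.mem_cons, List.not_mem_nil, or_false, exists_eq_or_imp, exists_eq_left,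
      falsifies_cons_left, falsifies_cons_right]
    grind

end Falsifies

theorem not_progressing_of_falsifies {W D : Type} {K : Kripke W D} (hK : PredIGL K)
    {Sb : ℕ → Sequent} {w : ℕ → W} {ρ : ℕ → ℕ → D} (hfalse : ∀ n, Falsifies K (w n) (ρ n) (Sb n))
    (hle : ∀ n, K.le (w n) (w (n + 1))) (hρ : ∀ n, Set.EqOn (ρ (n + 1)) (ρ n) (Sb n).vars) :
    ¬ Progressing Sb := by
  classical
  rintro ⟨k, l, hvars, htrace, hprogress⟩
  let J : ℕ → Prop := fun n => (l (k + n), l (k + n + 1)) ∈ (Sb (k + n)).rel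
  let d : ℕ → D := fun n => ρ (k + n) (l (k + n))
  have J_infinite : (Set.ofPred J).Infinite := by
    refine Nat.frequently_atTop_iff_infinite.1 (frequently_atTop.2 fun N => ?_)
    obtain ⟨i, hNi, hki, hi⟩ := hprogress (k + N)
    obtain ⟨j, rfl⟩ := Nat.exists_eq_add_of_le hki
    exact ⟨j, by omega, hi⟩
  have d_succ_of_not : ∀ n, ¬ J n → d (n + 1) = d n := fun n hn => by
    have hl : l (k + n + 1) = l (k + n) := (htrace (k + n) (by omega)).resolve_right hn
    change ρ (k + n + 1) (l (k + n + 1)) = _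
    rw [hl, hρ _ (hvars _ (by omega))]
  have rel_of_J : ∀ n, J n → K.Rel (w (k + n)) (d n) (d (n + 1)) := fun n hn => by
    change K.Rel _ _ (ρ (k + n + 1) (l (k + n + 1)))
    rw [hρ _ (.inl (.inl ⟨_, .inr hn⟩))]
    exact (hfalse _).rel _ hn
  have w_mono : ∀ {m n}, m ≤ n → K.le (w m) (w n) := fun {m n} hmn =>
    Nat.le_induction (K.le_refl _) (fun n _ ih => K.le_trans _ _ _ ih (hle n)) n hmn
  have rel_nth : ∀ i, K.Rel (w (k + Nat.nth J i)) (d (Nat.nth J i)) (d (Nat.nth J (i + 1))) := by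
    intro i
    have hd := apply_nth_count J_infinite d_succ_of_not (Nat.nth J i + 1)
    rw [Nat.count_nth_succ_of_infinite J_infinite] at hd
    rw [hd]
    exact rel_of_J _ (Nat.nth_mem_of_infinite J_infinite i)
  have nth_le : ∀ i, k + Nat.nth J i ≤ k + Nat.nth J (i + 1) := fun i =>
    Nat.add_le_add_left ((Nat.nth_monotone J_infinite) i.le_succ) k
  exact hK.2 ⟨fun i => w (k + Nat.nth J i), fun i => d (Nat.nth J i), fun i =>
    ⟨(K.Rel_dom _ _ _ (rel_nth i)).1, w_mono (nth_le i),
      K.Rel_mono _ _ _ _ (w_mono (nth_le i)) (rel_nth i)⟩⟩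

theorem InfProof.predValid {A : Formula} {x : ℕ} (h : InfProof RuleMLIK4 ⟨∅, 0, {(x, A)}⟩) :
    PredValid A := by
  intro W D K hK w d _
  obtain ⟨P, hP⟩ := h
  by_contra hA
  have hroot : Falsifies K w (fun _ => d) ⟨∅, 0, {(x, A)}⟩ :=
    ⟨by simp, by simp, by simpa using hA⟩
  obtain ⟨f, Sb, a, hnode, hfalse, hstep⟩ :=
    P.exists_branch (σ := W × (ℕ → D)) (Inv := fun S a => Falsifies K a.1 a.2 S)
      (step := fun S a a' => K.le a.1 a'.1 ∧ Set.EqOn a'.2 a.2 S.vars) (a₀ := (w, fun _ => d))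
      (fun S prems a hrule ha => by
        obtain ⟨S', hS', w', ρ', hstep, hfalse⟩ := ha.exists_prem (fun w => ⟨hK.1 w⟩) hrule
        exact ⟨S', hS', (w', ρ'), hstep, hfalse⟩) hroot
  exact not_progressing_of_falsifies hK hfalse (fun n => (hstep n).1) (fun n => (hstep n).2)
    (hP f Sb hnode)

/-! ### Determinacy of games with countably many recurrence conditions -/

/-- `f` is an infinite path of the relation `r` starting at `p`. -/
def IsPath {P : Type*} (r : P → P → Prop) (p : P) (f : ℕ → P) : Prop :=
  f 0 = p ∧ ∀ n, r (f n) (f (n + 1))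

section IsPath

variable {P : Type*} {r r' : P → P → Prop} {p q : P} {f : ℕ → P}

theorem IsPath.cons (hpq : r p q) (h : IsPath r q f) :
    IsPath r p fun n => Nat.casesOn n p f := by
  refine ⟨rfl, fun n => ?_⟩
  cases n with
  | zero =>
    change r p (f 0)
    rwa [h.1]
  | succ n => exact h.2 n

theorem IsPath.mono (h : IsPath r p f) (hr : ∀ a b, r a b → r' a b) : IsPath r' p f :=
  ⟨h.1, fun n => hr _ _ (h.2 n)⟩

end IsPath

/-- A set of sequences closed under adding and removing a first term. -/
def TailInvariant {P : Type*} (A : (ℕ → P) → Prop) : Prop :=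
  ∀ f, A f ↔ A fun n => f (n + 1)

theorem TailInvariant.drop {P : Type*} {A : (ℕ → P) → Prop} (hA : TailInvariant A) (k : ℕ)
    (f : ℕ → P) : A f ↔ A fun n => f (k + n) := by
  induction k with
  | zero => simp
  | succ k ih =>
    rw [ih, hA]
    simp only [Nat.add_right_comm k 1, Nat.add_assoc]

theorem tailInvariant_frequently {P : Type*} (e : Set P) :
    TailInvariant fun f => ∃ᶠ n in atTop, f n ∈ e := fun f => by
  change (∃ᶠ n in atTop, f n ∈ e) ↔ ∃ᶠ n in atTop, f (n + 1) ∈ e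
  conv_lhs => rw [← map_add_atTop_eq_nat 1, frequently_map]

theorem tailInvariant_exists_frequently {P ι : Type*} (e : ι → Set P) :
    TailInvariant fun f => ∃ v, ∃ᶠ n in atTop, f n ∈ e v :=
  fun f => exists_congr fun v => tailInvariant_frequently (e v) f

/-- A game in which the prover chooses at each position `p` an available move `m` and the opponent
answers with a position `q` such that `reply p m q`. Positions form a forest, so that a position
determines the play leading to it. -/
structure Game (P M : Type) where
  avail : P → M → Prop
  reply : P → M → P → Prop
  parent : P → P
  depth : P → ℕ
  exists_avail : ∀ p, ∃ m, avail p m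
  parent_eq : ∀ {p m q}, reply p m q → parent q = p
  depth_eq : ∀ {p m q}, reply p m q → depth q = depth p + 1

namespace Game

variable {P M : Type} (G : Game P M)

/-- One round of the game in which the prover follows `σ` and the opponent stays in `T`. -/
def Follows (T : Set P) (σ : P → M) (p q : P) : Prop := G.reply p (σ p) q ∧ q ∈ T

/-- One round of the game in which the opponent stays in `T`. -/
def Round (T : Set P) (p q : P) : Prop := (∃ m, G.reply p m q) ∧ q ∈ T

/-- From `p` the prover has a strategy all of whose plays in which the opponent stays in `T`
satisfy `A`. -/
def Win (T : Set P) (A : (ℕ → P) → Prop) (p : P) : Prop :=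
  ∃ σ : P → M, (∀ q, G.avail q (σ q)) ∧ ∀ f, IsPath (G.Follows T σ) p f → A f

variable {G} {T U S e : Set P} {A : (ℕ → P) → Prop} {σ : P → M} {p q : P} {f : ℕ → P}

theorem Follows.round (h : G.Follows T σ p q) : G.Round T p q := ⟨⟨_, h.1⟩, h.2⟩

theorem depth_le_of_isPath_round (hf : IsPath (G.Round T) p f) (n : ℕ) :
    G.depth p ≤ G.depth (f n) := by
  induction n with
  | zero => rw [hf.1]
  | succ n ih =>
    obtain ⟨⟨m, hm⟩, -⟩ := hf.2 n
    rw [G.depth_eq hm]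
    omega

theorem forall_follows_of_reply (hA : TailInvariant A)
    (h : ∀ f, IsPath (G.Follows T σ) p f → A f) (hq : G.Follows T σ p q) :
    ∀ f, IsPath (G.Follows T σ) q f → A f :=
  fun _ hf => (hA _).1 (h _ (hf.cons hq))

theorem exists_memory {α : Type*} (G : Game P M) (p : P) (a₀ : α) (update : α → P → α) :
    ∃ mem : P → α, mem p = a₀ ∧
      ∀ r m q, G.depth p ≤ G.depth r → G.reply r m q → mem q = update (mem r) q := by
  let track : ℕ → P → α := fun n =>
    Nat.rec (fun _ => a₀) (fun _ track q => update (track (G.parent q)) q) n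
  refine ⟨fun q => track (G.depth q - G.depth p) q, by simp [track], fun r m q hr hq => ?_⟩
  have hd : G.depth q - G.depth p = G.depth r - G.depth p + 1 := by rw [G.depth_eq hq]; omega
  simp only [hd, track, G.parent_eq hq]

open Classical in
/-- Update of the memory that keeps the first position in `S`. -/
noncomputable def updateFirst (S : Set P) (o : Option P) (q : P) : Option P :=
  o.or (if q ∈ S then some q else none)

theorem updateFirst_cases {o : ℕ → Option P} (h₀ : o 0 = none)
    (hsucc : ∀ n, o (n + 1) = updateFirst S (o n) (f (n + 1))) :
    (∀ n, o n = none ∧ f (n + 1) ∉ S) ∨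
      ∃ i, f (i + 1) ∈ S ∧ (∀ j ≤ i, o j = none) ∧ ∀ n, o (i + 1 + n) = some (f (i + 1)) := by
  classical
  have none_of_forall : ∀ n, (∀ i < n, f (i + 1) ∉ S) → o n = none := by
    intro n
    induction n with
    | zero => exact fun _ => h₀
    | succ n ih =>
      intro h
      simp [hsucc, ih fun i hi => h i (by omega), updateFirst, h n]
  by_cases hex : ∃ i, f (i + 1) ∈ S
  · have hbefore : ∀ j ≤ Nat.find hex, o j = none := fun j hj =>
      none_of_forall j fun i hi => Nat.find_min hex (by omega)
    refine .inr ⟨Nat.find hex, Nat.find_spec hex, hbefore, fun n => ?_⟩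
    induction n with
    | zero => simp [hsucc, hbefore _ le_rfl, updateFirst, Nat.find_spec hex]
    | succ n ih => simp [← Nat.add_assoc, hsucc, ih, updateFirst]
  · push Not at hex
    exact .inl fun n => ⟨none_of_forall n fun i _ => hex i, hex n⟩

theorem exists_uniform_strategy (G : Game P M) (T : Set P) (A : (ℕ → P) → Prop) :
    ∃ τ : P → P → M, (∀ z q, G.avail q (τ z q)) ∧
      ∀ z, G.Win T A z → ∀ f, IsPath (G.Follows T (τ z)) z f → A f := by
  choose move hmove using G.exists_avail
  have h : ∀ z, ∃ τ : P → M, (∀ q, G.avail q (τ q)) ∧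
      (G.Win T A z → ∀ f, IsPath (G.Follows T τ) z f → A f) := fun z => by
    by_cases hz : G.Win T A z
    · obtain ⟨τ, hτ, hwin⟩ := hz
      exact ⟨τ, hτ, fun _ => hwin⟩
    · exact ⟨move, hmove, fun h => absurd h hz⟩
  choose τ hτ hwin using h
  exact ⟨τ, hτ, hwin⟩

theorem win_of_forall_not_win (hA : ∀ f : ℕ → P, (A fun n => f (n + 1)) → A f)
    (hσ : ∀ q, G.avail q (σ q))
    (h : ∀ f, IsPath (G.Follows T σ) p f → (∀ n, ¬ G.Win T A (f (n + 1))) → A f) :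
    G.Win T A p := by
  obtain ⟨τ, hτ, hwin⟩ := G.exists_uniform_strategy T A
  obtain ⟨mem, hmem, hsucc⟩ := G.exists_memory p none (updateFirst {q | G.Win T A q})
  refine ⟨fun q => (mem q).elim (σ q) fun z => τ z q, fun q => ?_, fun f hf => ?_⟩
  · cases hq : mem q <;> simp [hq, hσ, hτ]
  have hdepth := depth_le_of_isPath_round (hf.mono fun _ _ => Follows.round)
  rcases updateFirst_cases (o := fun n => mem (f n)) (by simp [hf.1, hmem])
    fun n => hsucc _ _ _ (hdepth n) (hf.2 n).1 with hnone | ⟨i, hi, -, hsome⟩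
  · refine h f ⟨hf.1, fun n => ?_⟩ fun n => (hnone n).2
    simpa [Follows, (hnone n).1] using hf.2 n
  · have hA_drop : ∀ k, (A fun n => f (k + n)) → A f := by
      intro k
      induction k with
      | zero => simp
      | succ k ih =>
        refine fun hk => ih (hA _ ?_)
        simpa only [Nat.add_right_comm k 1, Nat.add_assoc] using hk
    refine hA_drop (i + 1) (hwin _ hi _ ⟨rfl, fun n => ?_⟩)
    have hround := hf.2 (i + 1 + n)
    rwa [Follows, hsome n] at hround

theorem exists_last_update {Z : Set P} [DecidablePred (· ∈ Z)] {z : ℕ → P} (h₀ : z 0 = f 0)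
    (hsucc : ∀ n, z (n + 1) = if f (n + 1) ∈ Z then f (n + 1) else z n)
    (hZ : ¬ ∃ᶠ n in atTop, f n ∈ Z) :
    ∃ k, f k ∈ insert (f 0) Z ∧ (∀ n, f (k + n + 1) ∉ Z) ∧ ∀ n, z (k + n) = f k := by
  classical
  have hex : ∃ k, ∀ n, f (k + n + 1) ∉ Z := by
    obtain ⟨N, hN⟩ := eventually_atTop.1 (not_frequently.1 hZ)
    exact ⟨N, fun n => hN _ (by omega)⟩
  obtain ⟨k, hlast, hmin⟩ := Nat.findX hex
  have hk : f k ∈ insert (f 0) Z ∧ z k = f k := by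
    cases k with
    | zero => exact ⟨.inl rfl, h₀⟩
    | succ k =>
      have hmem : f (k + 1) ∈ Z := by
        by_contra hnot
        refine hmin k k.lt_succ_self fun n => ?_
        cases n with
        | zero => exact hnot
        | succ n => simpa only [Nat.add_right_comm k 1, Nat.add_assoc] using hlast n
      exact ⟨.inr hmem, by rw [hsucc, if_pos hmem]⟩
  refine ⟨k, hk.1, hlast, fun n => ?_⟩
  induction n with
  | zero => exact hk.2
  | succ n ih => rw [← Nat.add_assoc, hsucc, if_neg (hlast n), ih]

theorem win_of_restart {Z : Set P} (hA : TailInvariant A)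
    (hZ : ∀ f : ℕ → P, (∃ᶠ n in atTop, f n ∈ Z) → A f)
    (h : ∀ z ∈ insert p Z, G.Win T (fun f => A f ∨ ∃ n, f (n + 1) ∈ Z) z) : G.Win T A p := by
  classical
  obtain ⟨τ, hτ, hwin⟩ := G.exists_uniform_strategy T fun f => A f ∨ ∃ n, f (n + 1) ∈ Z
  obtain ⟨mem, hmem, hsucc⟩ := G.exists_memory p p fun z q => if q ∈ Z then q else z
  refine ⟨fun q => τ (mem q) q, fun q => hτ _ q, fun f hf => ?_⟩
  by_cases hfreq : ∃ᶠ n in atTop, f n ∈ Z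
  · exact hZ f hfreq
  have hdepth := depth_le_of_isPath_round (hf.mono fun _ _ => Follows.round)
  obtain ⟨k, hk, hlast, hmemk⟩ := exists_last_update (z := fun n => mem (f n))
    (by simp only [hf.1, hmem]) (fun n => hsucc _ _ _ (hdepth n) (hf.2 n).1) hfreq
  have hplay : IsPath (G.Follows T (τ (f k))) (f k) fun n => f (k + n) :=
    ⟨rfl, fun n => by
      have hround := hf.2 (k + n)
      rwa [Follows, hmemk] at hround⟩
  rw [hf.1] at hk
  rcases hwin _ (h _ hk) _ hplay with hAk | ⟨n, hn⟩
  · exact (hA.drop k f).2 hAk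
  · exact absurd hn (hlast n)

theorem exists_reply_not_win (hA : TailInvariant A) (h : ¬ G.Win T A p) {m : M}
    (hm : G.avail p m) : ∃ q, G.reply p m q ∧ q ∈ T ∧ ¬ G.Win T A q := by
  classical
  by_contra! hall
  choose move hmove using G.exists_avail
  refine h (win_of_forall_not_win (σ := Function.update move p m) (fun f => (hA f).2)
    (fun q => ?_) fun f hf hnot => ?_)
  · rcases eq_or_ne q p with rfl | hq
    · simpa using hm
    · simpa [hq] using hmove q
  · have hround := hf.2 0
    rw [hf.1, Follows, Function.update_self] at hround
    exact absurd (hall _ hround.1 hround.2) (hnot 0)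

/-- The opponent can keep `q` unwinnable for the prover while visiting `e` only finitely often, by
staying in a suitable subset of `T`. -/
def Avoidable (G : Game P M) (T e : Set P) (A : (ℕ → P) → Prop) (q : P) : Prop :=
  ∃ U ⊆ T, q ∈ U ∧ (∀ f, IsPath (G.Round U) q f → ¬ ∃ᶠ n in atTop, f n ∈ e) ∧ ¬ G.Win U A q

theorem Avoidable.exists_choice (G : Game P M) (T e : Set P) (A : (ℕ → P) → Prop) :
    ∃ U : P → Set P, (∀ q, U q ⊆ T) ∧ (∀ q, G.Avoidable T e A q → q ∈ U q) ∧
      (∀ q f, IsPath (G.Round (U q)) q f → ¬ ∃ᶠ n in atTop, f n ∈ e) ∧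
      ∀ q, G.Avoidable T e A q → ¬ G.Win (U q) A q := by
  have h : ∀ q, ∃ U ⊆ T, (G.Avoidable T e A q → q ∈ U) ∧
      (∀ f, IsPath (G.Round U) q f → ¬ ∃ᶠ n in atTop, f n ∈ e) ∧
      (G.Avoidable T e A q → ¬ G.Win U A q) := by
    intro q
    by_cases hq : G.Avoidable T e A q
    · obtain ⟨U, hUT, hqU, havoid, hnot⟩ := hq
      exact ⟨U, hUT, fun _ => hqU, havoid, fun _ => hnot⟩
    · exact ⟨∅, Set.empty_subset T, fun h => absurd h hq, fun f hf => absurd (hf.2 0).2 id,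
        fun h => absurd h hq⟩
  choose U hUT hU using h
  exact ⟨U, hUT, fun q => (hU q).1, fun q => (hU q).2.1, fun q => (hU q).2.2⟩

/-- The positions to which the opponent is confined who stays in `N` until the play reaches the
first position `q` recorded by `mem`, and in `U q` from then on. -/
def Confined (mem : P → Option P) (N : Set P) (U : P → Set P) : Set P :=
  {r | (mem r).elim (r ∈ N) fun q => r ∈ U q}

section Confined

variable {mem : P → Option P} {N : Set P} {U : P → Set P} {z : P}

theorem mem_confined_of_none {r : P} (hr : mem r = none) : r ∈ Confined mem N U ↔ r ∈ N := by
  simp [Confined, hr]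

theorem mem_confined_of_some {r q : P} (hr : mem r = some q) :
    r ∈ Confined mem N U ↔ r ∈ U q := by
  simp [Confined, hr]

theorem confined_subset (hN : N ⊆ T) (hU : ∀ q, U q ⊆ T) : Confined mem N U ⊆ T := fun r hr => by
  cases hmem : mem r with
  | none => exact hN ((mem_confined_of_none hmem).1 hr)
  | some q => exact hU q ((mem_confined_of_some hmem).1 hr)

theorem not_frequently_of_confined (hmem : mem z = none)
    (hsucc : ∀ r m q, G.depth z ≤ G.depth r → G.reply r m q → mem q = updateFirst e (mem r) q)
    (hU : ∀ q f, IsPath (G.Round (U q)) q f → ¬ ∃ᶠ n in atTop, f n ∈ e)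
    (hf : IsPath (G.Round (Confined mem N U)) z f) : ¬ ∃ᶠ n in atTop, f n ∈ e := by
  have hdepth := depth_le_of_isPath_round hf
  rcases updateFirst_cases (o := fun n => mem (f n)) (by simp only [hf.1, hmem])
    fun n => hsucc _ _ _ (hdepth n) (hf.2 n).1.choose_spec with hnone | ⟨i, -, -, hsome⟩
  · refine mt (tailInvariant_frequently e f).1 (not_frequently.2 ?_)
    exact .of_forall fun n => (hnone n).2
  · refine mt ((tailInvariant_frequently e).drop (i + 1) f).1 (hU (f (i + 1)) _ ⟨rfl, fun n => ?_⟩)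
    obtain ⟨hreply, hconf⟩ := hf.2 (i + 1 + n)
    exact ⟨hreply, (mem_confined_of_some (hsome (n + 1))).1 hconf⟩

theorem isPath_confined_of_some
    (hsucc : ∀ r m q, G.depth z ≤ G.depth r → G.reply r m q → mem q = updateFirst e (mem r) q)
    (hz : G.depth z ≤ G.depth q) (hq : mem q = some q)
    (hf : IsPath (G.Follows (U q) σ) q f) : IsPath (G.Follows (Confined mem N U) σ) q f := by
  have hdepth := depth_le_of_isPath_round (hf.mono fun _ _ => Follows.round)
  have hmem : ∀ n, mem (f n) = some q := by
    intro n
    induction n with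
    | zero => rw [hf.1, hq]
    | succ n ih =>
      rw [hsucc _ _ _ (hz.trans (hdepth n)) (hf.2 n).1, ih, updateFirst, Option.some_or]
  exact ⟨hf.1, fun n => ⟨(hf.2 n).1, (mem_confined_of_some (hmem (n + 1))).2 (hf.2 n).2⟩⟩

end Confined

/-- The positions in `T ∩ e` at which the opponent cannot avoid `e` any longer. -/
def Unavoidable (G : Game P M) (T e : Set P) (A : (ℕ → P) → Prop) : Set P :=
  {q | q ∈ T ∧ q ∈ e ∧ ¬ G.Avoidable T e A q}

theorem win_or_unavoidable_of_not_avoidable {z : P} (hA : TailInvariant A) (hzT : z ∈ T)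
    (hz : ¬ G.Avoidable T e A z) :
    G.Win T (fun f => A f ∨ ∃ n, f (n + 1) ∈ G.Unavoidable T e A) z := by
  set AZ : (ℕ → P) → Prop := fun f => A f ∨ ∃ n, f (n + 1) ∈ G.Unavoidable T e A
  by_contra hnwin
  obtain ⟨U, hUT, hmemU, hUe, hUwin⟩ := Avoidable.exists_choice G T e A
  obtain ⟨mem, hmem, hsucc⟩ := G.exists_memory z none (updateFirst e)
  set C := Confined mem {r | r ∈ T ∧ ¬ G.Win T AZ r} U
  obtain ⟨σ, hσ, hwin⟩ : G.Win C A z := by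
    by_contra hnot
    exact hz ⟨C, confined_subset (fun _ hr => hr.1) hUT,
      (mem_confined_of_none hmem).2 ⟨hzT, hnwin⟩,
      fun f => not_frequently_of_confined hmem hsucc hUe, hnot⟩
  refine hnwin (win_of_forall_not_win (fun f => ?_) hσ fun f hf hnot => ?_)
  · rintro (h | ⟨n, hn⟩)
    exacts [.inl ((hA f).2 h), .inr ⟨n + 1, hn⟩]
  have hdepth := depth_le_of_isPath_round (hf.mono fun _ _ => Follows.round)
  rcases updateFirst_cases (o := fun n => mem (f n)) (by simp only [hf.1, hmem])
    fun n => hsucc _ _ _ (hdepth n) (hf.2 n).1 with hnone | ⟨i, hi, hnone, hsome⟩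
  · exact .inl (hwin f ⟨hf.1, fun n => ⟨(hf.2 n).1,
      (mem_confined_of_none (hnone (n + 1)).1).2 ⟨(hf.2 n).2, hnot n⟩⟩⟩)
  · by_cases hgood : G.Avoidable T e A (f (i + 1))
    swap
    · exact .inr ⟨i, (hf.2 i).2, hi, hgood⟩
    have hwin_before : ∀ j ≤ i, ∀ g, IsPath (G.Follows C σ) (f j) g → A g := by
      intro j
      induction j with
      | zero => exact fun _ => hf.1.symm ▸ hwin
      | succ j ih =>
        exact fun hj => forall_follows_of_reply hA (ih (by omega))
          ⟨(hf.2 j).1, (mem_confined_of_none (hnone _ hj)).2 ⟨(hf.2 j).2, hnot j⟩⟩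
    have hwin_at := forall_follows_of_reply hA (hwin_before i le_rfl)
      ⟨(hf.2 i).1, (mem_confined_of_some (hsome 0)).2 (hmemU _ hgood)⟩
    exact absurd ⟨σ, hσ, fun g hg =>
      hwin_at g (isPath_confined_of_some hsucc (hdepth _) (hsome 0) hg)⟩ (hUwin _ hgood)

theorem avoidable_of_not_win (hA : TailInvariant A)
    (he : ∀ f : ℕ → P, (∃ᶠ n in atTop, f n ∈ e) → A f) (hpT : p ∈ T) (hp : ¬ G.Win T A p) :
    G.Avoidable T e A p := by
  by_contra hbad
  refine hp (win_of_restart (Z := G.Unavoidable T e A) hA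
    (fun f hf => he f (hf.mono fun _ hn => hn.2.1)) ?_)
  rintro z (rfl | hz)
  · exact win_or_unavoidable_of_not_avoidable hA hpT hbad
  · exact win_or_unavoidable_of_not_avoidable hA hz.1 hz.2.2

/-- A position of the opponent's winning strategy: the prover does not win from `pos` against an
opponent staying in `region`, where the conditions `e v` with `v < level` already fail. -/
structure Refutation (G : Game P M) (e : ℕ → Set P) where
  level : ℕ
  region : Set P
  pos : P
  pos_mem : pos ∈ region
  not_win : ¬ G.Win region (fun f => ∃ v, ∃ᶠ n in atTop, f n ∈ e v) pos
  not_frequently : ∀ v < level, ∀ f, IsPath (G.Round region) pos f → ¬ ∃ᶠ n in atTop, f n ∈ e v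

variable {e : ℕ → Set P}

theorem Refutation.exists_reply (o : Refutation G e) {m : M} (hm : G.avail o.pos m) :
    ∃ o' : Refutation G e, G.reply o.pos m o'.pos ∧ o'.region ⊆ o.region ∧
      o'.level = o.level + 1 := by
  have htail := tailInvariant_exists_frequently e
  obtain ⟨q, hreply, hq, hnot⟩ := exists_reply_not_win htail o.not_win hm
  obtain ⟨U, hUT, hqU, havoid, hUwin⟩ :=
    avoidable_of_not_win (e := e o.level) htail (fun f hf => ⟨_, hf⟩) hq hnot
  refine ⟨⟨o.level + 1, U, q, hqU, hUwin, fun v hv f hf => ?_⟩, hreply, hUT, rfl⟩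
  rcases Nat.lt_succ_iff_lt_or_eq.1 hv with hv | rfl
  · have hf' : IsPath (G.Round o.region) q f := hf.mono fun a b hab => ⟨hab.1, hUT hab.2⟩
    exact fun hfreq => o.not_frequently v hv _ (hf'.cons ⟨⟨m, hreply⟩, hq⟩)
      ((tailInvariant_frequently (e v) _).2 hfreq)
  · exact havoid f hf

theorem exists_refuting_strategy
    (h : ¬ G.Win Set.univ (fun f => ∃ v, ∃ᶠ n in atTop, f n ∈ e v) p) :
    ∃ (O : Type) (pos : O → P) (o₀ : O) (resp : O → M → O), pos o₀ = p ∧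
      (∀ o m, G.avail (pos o) m → G.reply (pos o) m (pos (resp o m))) ∧
      ∀ (c : ℕ → O) (m : ℕ → M), (∀ n, G.avail (pos (c n)) (m n)) →
        (∀ n, c (n + 1) = resp (c n) (m n)) → ∀ v, ¬ ∃ᶠ n in atTop, pos (c n) ∈ e v := by
  have hresp : ∀ (o : Refutation G e) (m : M), ∃ o' : Refutation G e, G.avail o.pos m →
      G.reply o.pos m o'.pos ∧ o'.region ⊆ o.region ∧ o'.level = o.level + 1 := fun o m => by
    by_cases hm : G.avail o.pos m
    · exact (o.exists_reply hm).imp fun _ h _ => h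
    · exact ⟨o, fun h => absurd h hm⟩
  choose resp hresp using hresp
  refine ⟨Refutation G e, Refutation.pos, ⟨0, Set.univ, p, trivial, h, fun v hv => by omega⟩, resp,
    rfl, fun o m hm => (hresp o m hm).1, fun c m hm hc v => ?_⟩
  have hstep : ∀ n, G.reply (c n).pos (m n) (c (n + 1)).pos ∧
      (c (n + 1)).region ⊆ (c n).region ∧ (c (n + 1)).level = (c n).level + 1 := fun n =>
    hc n ▸ hresp _ _ (hm n)
  have hlevel : ∀ n, n ≤ (c n).level := by
    intro n
    induction n with
    | zero => exact Nat.zero_le _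
    | succ n ih => rw [(hstep n).2.2]; omega
  have hregion : ∀ k n, (c (k + n)).region ⊆ (c k).region := fun k n =>
    antitone_nat_of_succ_le (f := fun n => (c n).region) (fun n => (hstep n).2.1) (by omega)
  refine mt ((tailInvariant_frequently (e v)).drop (v + 1) fun n => (c n).pos).1 ?_
  exact (c (v + 1)).not_frequently v (hlevel (v + 1)) _ ⟨rfl, fun n =>
    ⟨⟨_, (hstep (v + 1 + n)).1⟩, hregion (v + 1) (n + 1) (c (v + 1 + (n + 1))).pos_mem⟩⟩

end Game

/-! ### The proof-search game -/

noncomputable instance : DecidableEq Formula := Classical.decEq _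

/-- The finite set of subformulas of a formula. -/
noncomputable def Formula.subformulas : Formula → Finset Formula
  | .atom p => {.atom p}
  | .bot => {.bot}
  | .and A B => insert (.and A B) (A.subformulas ∪ B.subformulas)
  | .or A B => insert (.or A B) (A.subformulas ∪ B.subformulas)
  | .imp A B => insert (.imp A B) (A.subformulas ∪ B.subformulas)
  | .box A => insert (.box A) A.subformulas
  | .dia A => insert (.dia A) A.subformulas

theorem Formula.mem_subformulas_self (A : Formula) : A ∈ A.subformulas := by
  cases A <;> simp [Formula.subformulas]

/-- A set of formulas that contains the subformulas of its members. -/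
def SubformulaClosed (Sg : Finset Formula) : Prop := ∀ B ∈ Sg, B.subformulas ⊆ Sg

theorem Formula.subformulaClosed_subformulas (A : Formula) : SubformulaClosed A.subformulas := by
  induction A with
  | atom p => simp [SubformulaClosed, subformulas]
  | bot => simp [SubformulaClosed, subformulas]
  | and A B ihA ihB | or A B ihA ihB | imp A B ihA ihB =>
    intro C hC
    rcases Finset.mem_insert.1 hC with rfl | hC
    · exact subset_rfl
    · refine subset_trans ?_ (Finset.subset_insert _ _)
      rcases Finset.mem_union.1 hC with hC | hC
      · exact (ihA C hC).trans Finset.subset_union_left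
      · exact (ihB C hC).trans Finset.subset_union_right
  | box A ih | dia A ih =>
    intro C hC
    rcases Finset.mem_insert.1 hC with rfl | hC
    · exact subset_rfl
    · exact (ih C hC).trans (Finset.subset_insert _ _)

section SubformulaClosed

variable {Sg : Finset Formula} {A B : Formula}

theorem SubformulaClosed.and_mem (hS : SubformulaClosed Sg) (h : Formula.and A B ∈ Sg) :
    A ∈ Sg ∧ B ∈ Sg := by
  constructor <;> apply hS _ h <;> simp [Formula.subformulas, Formula.mem_subformulas_self]

theorem SubformulaClosed.or_mem (hS : SubformulaClosed Sg) (h : Formula.or A B ∈ Sg) :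
    A ∈ Sg ∧ B ∈ Sg := by
  constructor <;> apply hS _ h <;> simp [Formula.subformulas, Formula.mem_subformulas_self]

theorem SubformulaClosed.imp_mem (hS : SubformulaClosed Sg) (h : Formula.imp A B ∈ Sg) :
    A ∈ Sg ∧ B ∈ Sg := by
  constructor <;> apply hS _ h <;> simp [Formula.subformulas, Formula.mem_subformulas_self]

theorem SubformulaClosed.box_mem (hS : SubformulaClosed Sg) (h : Formula.box A ∈ Sg) :
    A ∈ Sg :=
  hS _ h (by simp [Formula.subformulas, Formula.mem_subformulas_self])

theorem SubformulaClosed.dia_mem (hS : SubformulaClosed Sg) (h : Formula.dia A ∈ Sg) :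
    A ∈ Sg :=
  hS _ h (by simp [Formula.subformulas, Formula.mem_subformulas_self])

end SubformulaClosed

/-- Names for the successors of a label: `dia A` is the witness of a formula `◇A`, and `box A j` is
the `j`-th potential counterexample to `□A`. -/
inductive Child : Type
  | dia (A : Formula)
  | box (A : Formula) (j : ℕ)

noncomputable instance : DecidableEq Child := Classical.decEq _

/-- The formula assumed at a successor when it is introduced. At a counterexample to `□A` this is
`□A` itself, as Löb's rule permits. -/
def Child.assumption : Child → Formula
  | dia A => A
  | box A _ => .box A

/-- Labels of the proof search: the nodes of a tree, the head of the list being the last child. -/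
abbrev Label := List Child

/-- The strict ancestor relation on labels. -/
def Ancestor (x y : Label) : Prop := x <:+ y ∧ x.length < y.length

theorem Ancestor.trans {x y z : Label} (h : Ancestor x y) (h' : Ancestor y z) : Ancestor x z :=
  ⟨h.1.trans h'.1, h.2.trans h'.2⟩

theorem ancestor_cons_of_suffix {x y : Label} (h : x <:+ y) (k : Child) : Ancestor x (k :: y) :=
  ⟨h.trans (List.suffix_cons k y), Nat.lt_succ_of_le h.length_le⟩

theorem ancestor_cons (k : Child) (x : Label) : Ancestor x (k :: x) :=
  ancestor_cons_of_suffix List.suffix_rfl k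

/-- `DiaExtends v y` holds if `y` is obtained from `v` by a series of `◇`-witnesses. -/
inductive DiaExtends (v : Label) : Label → Prop
  | refl : DiaExtends v v
  | cons (A : Formula) {y : Label} : DiaExtends v y → DiaExtends v (.dia A :: y)

theorem DiaExtends.trans {u v y : Label} (huv : DiaExtends u v) (h : DiaExtends v y) :
    DiaExtends u y := by
  induction h with
  | refl => exact huv
  | cons A _ ih => exact ih.cons A

/-- A state of the proof search: a sequent over the tree of `labels` whose left-hand side is `facts`
and whose right-hand side is `goal`. -/
structure State : Type where
  labels : Finset Label
  facts : Finset (Label × Formula)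
  goal : Label × Formula

namespace State

/-- The invariants of the states reached by a proof search among the formulas in `Sg`. -/
structure WF (Sg : Finset Formula) (S : State) : Prop where
  nil_mem : [] ∈ S.labels
  tail_mem : ∀ {k x}, k :: x ∈ S.labels → x ∈ S.labels
  fact_label : ∀ {x A}, (x, A) ∈ S.facts → x ∈ S.labels
  fact_mem : ∀ {x A}, (x, A) ∈ S.facts → A ∈ Sg
  goal_label : S.goal.1 ∈ S.labels
  goal_mem : S.goal.2 ∈ Sg
  assumption_mem : ∀ {k x}, k :: x ∈ S.labels → (k :: x, k.assumption) ∈ S.facts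

/-- The state with the additional fact `q`. -/
noncomputable def assume (S : State) (q : Label × Formula) : State :=
  { S with facts := insert q S.facts }

/-- The state with the additional label `k :: x`. -/
noncomputable def extend (S : State) (k : Child) (x : Label) : State :=
  { S.assume (k :: x, k.assumption) with labels := insert (k :: x) S.labels }

/-- The state with the goal replaced by `q`. -/
def aim (S : State) (q : Label × Formula) : State := { S with goal := q }

namespace WF

variable {Sg : Finset Formula} {S : State} {x y : Label} {A : Formula}

theorem mem_of_suffix (h : S.WF Sg) (hy : y ∈ S.labels) (hxy : x <:+ y) : x ∈ S.labels := by
  induction y with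
  | nil => rwa [List.suffix_nil.1 hxy]
  | cons k y ih =>
    rcases List.suffix_cons_iff.1 hxy with rfl | hxy
    · exact hy
    · exact ih (h.tail_mem hy) hxy

theorem assume (h : S.WF Sg) (hx : x ∈ S.labels) (hA : A ∈ Sg) : (S.assume (x, A)).WF Sg where
  nil_mem := h.nil_mem
  tail_mem := h.tail_mem
  fact_label hq := by
    rcases Finset.mem_insert.1 hq with hq | hq
    · cases hq
      exact hx
    · exact h.fact_label hq
  fact_mem hq := by
    rcases Finset.mem_insert.1 hq with hq | hq
    · cases hq
      exact hA
    · exact h.fact_mem hq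
  goal_label := h.goal_label
  goal_mem := h.goal_mem
  assumption_mem hk := Finset.mem_insert_of_mem (h.assumption_mem hk)

theorem aim (h : S.WF Sg) (hx : x ∈ S.labels) (hA : A ∈ Sg) : (S.aim (x, A)).WF Sg :=
  { h with goal_label := hx, goal_mem := hA }

theorem extend (h : S.WF Sg) (hx : x ∈ S.labels) {k : Child} (hk : k.assumption ∈ Sg) :
    (S.extend k x).WF Sg where
  nil_mem := Finset.mem_insert_of_mem h.nil_mem
  tail_mem hj := by
    rcases Finset.mem_insert.1 hj with hj | hj
    · cases hj
      exact Finset.mem_insert_of_mem hx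
    · exact Finset.mem_insert_of_mem (h.tail_mem hj)
  fact_label hq := by
    rcases Finset.mem_insert.1 hq with hq | hq
    · cases hq
      exact Finset.mem_insert_self _ _
    · exact Finset.mem_insert_of_mem (h.fact_label hq)
  fact_mem hq := by
    rcases Finset.mem_insert.1 hq with hq | hq
    · cases hq
      exact hk
    · exact h.fact_mem hq
  goal_label := Finset.mem_insert_of_mem h.goal_label
  goal_mem := h.goal_mem
  assumption_mem hj := by
    rcases Finset.mem_insert.1 hj with hj | hj
    · cases hj
      exact Finset.mem_insert_self _ _
    · exact Finset.mem_insert_of_mem (h.assumption_mem hj)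

end WF

/-- The goal of the state follows from its facts by a single left or right rule. -/
inductive Closed (S : State) : Prop
  | id : S.goal ∈ S.facts → Closed S
  | botL (x : Label) : (x, .bot) ∈ S.facts → Closed S
  | andL₁ (x : Label) (A B : Formula) : (x, .and A B) ∈ S.facts → S.goal = (x, A) → Closed S
  | andL₂ (x : Label) (A B : Formula) : (x, .and A B) ∈ S.facts → S.goal = (x, B) → Closed S
  | andR (x : Label) (A B : Formula) :
      (x, A) ∈ S.facts → (x, B) ∈ S.facts → S.goal = (x, .and A B) → Closed S
  | orR₁ (x : Label) (A B : Formula) : (x, A) ∈ S.facts → S.goal = (x, .or A B) → Closed S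
  | orR₂ (x : Label) (A B : Formula) : (x, B) ∈ S.facts → S.goal = (x, .or A B) → Closed S
  | impL (x : Label) (A B : Formula) :
      (x, .imp A B) ∈ S.facts → (x, A) ∈ S.facts → S.goal = (x, B) → Closed S
  | boxL (x y : Label) (A : Formula) :
      (x, .box A) ∈ S.facts → Ancestor x y → y ∈ S.labels → S.goal = (y, A) → Closed S
  | diaR (x y : Label) (A : Formula) :
      (y, A) ∈ S.facts → Ancestor x y → S.goal = (x, .dia A) → Closed S
  | four (x y : Label) (A : Formula) :
      (x, .box A) ∈ S.facts → Ancestor x y → y ∈ S.labels → S.goal = (y, .box A) → Closed S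

theorem WF.closed_of_box_suffix {Sg : Finset Formula} {S : State} (h : S.WF Sg) {x y : Label}
    {A : Formula} {j : ℕ} (hgoal : S.goal = (x, .box A)) (hy : .box A j :: y <:+ x) :
    S.Closed := by
  have hx : x ∈ S.labels := by simpa [hgoal] using h.goal_label
  have hfact : (.box A j :: y, .box A) ∈ S.facts := h.assumption_mem (h.mem_of_suffix hx hy)
  rcases hy.length_le.lt_or_eq with hlt | heq
  · exact .four _ x A hfact ⟨hy, hlt⟩ hx hgoal
  · rw [hy.eq_of_length heq] at hfact
    exact .id (hgoal ▸ hfact)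

end State

/-- The moves of the prover. -/
inductive Move : Type
  | close
  | cut (x : Label) (A : Formula)
  | orL (x : Label) (A B : Formula)
  | diaL (x : Label) (A : Formula)
  | impR (x : Label) (A B : Formula)
  | boxR (x : Label) (A : Formula)

/-- The moves available to the prover in a state. -/
inductive Move.Avail (Sg : Finset Formula) (S : State) : Move → Prop
  | close : S.Closed → Avail Sg S .close
  | cut (x : Label) (A : Formula) : x ∈ S.labels → A ∈ Sg → Avail Sg S (.cut x A)
  | orL (x : Label) (A B : Formula) : (x, .or A B) ∈ S.facts → Avail Sg S (.orL x A B)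
  | diaL (x : Label) (A : Formula) :
      (x, .dia A) ∈ S.facts → .dia A :: x ∉ S.labels → Avail Sg S (.diaL x A)
  | impR (x : Label) (A B : Formula) : S.goal = (x, .imp A B) → Avail Sg S (.impR x A B)
  | boxR (x : Label) (A : Formula) : S.goal = (x, .box A) → Avail Sg S (.boxR x A)

/-- The answers of the opponent to a move: the choice of a premiss, and of a new label in the case
of `boxR`. The move `close` has no answer. -/
inductive Move.Reply (S : State) : Move → State → Prop
  | cut_goal (x : Label) (A : Formula) : Reply S (.cut x A) (S.aim (x, A))
  | cut_fact (x : Label) (A : Formula) : Reply S (.cut x A) (S.assume (x, A))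
  | orL₁ (x : Label) (A B : Formula) : Reply S (.orL x A B) (S.assume (x, A))
  | orL₂ (x : Label) (A B : Formula) : Reply S (.orL x A B) (S.assume (x, B))
  | diaL (x : Label) (A : Formula) : Reply S (.diaL x A) (S.extend (.dia A) x)
  | impR (x : Label) (A B : Formula) : Reply S (.impR x A B) ((S.assume (x, A)).aim (x, B))
  | boxR (x : Label) (A : Formula) (j : ℕ) : .box A j :: x ∉ S.labels →
      Reply S (.boxR x A) ((S.extend (.box A j) x).aim (.box A j :: x, A))

namespace Move.Reply

variable {Sg : Finset Formula} {S S' : State} {m : Move}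

theorem labels_subset (h : Reply S m S') : S.labels ⊆ S'.labels := by
  cases h <;> simp [State.aim, State.assume, State.extend]

theorem facts_subset (h : Reply S m S') : S.facts ⊆ S'.facts := by
  cases h <;> simp [State.aim, State.assume, State.extend]

theorem wf (hS : SubformulaClosed Sg) (hm : m.Avail Sg S) (h : Reply S m S') (hwf : S.WF Sg) :
    S'.WF Sg := by
  cases h with
  | cut_goal x A =>
    cases hm with | cut _ _ hx hA => exact hwf.aim hx hA
  | cut_fact x A =>
    cases hm with | cut _ _ hx hA => exact hwf.assume hx hA
  | orL₁ x A B =>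
    cases hm with
    | orL _ _ _ hor => exact hwf.assume (hwf.fact_label hor) (hS.or_mem (hwf.fact_mem hor)).1
  | orL₂ x A B =>
    cases hm with
    | orL _ _ _ hor => exact hwf.assume (hwf.fact_label hor) (hS.or_mem (hwf.fact_mem hor)).2
  | diaL x A =>
    cases hm with
    | diaL _ _ hdia _ => exact hwf.extend (hwf.fact_label hdia) (hS.dia_mem (hwf.fact_mem hdia))
  | impR x A B =>
    cases hm with
    | impR _ _ _ hgoal =>
      have hx : x ∈ S.labels := by simpa [hgoal] using hwf.goal_label
      have hAB : Formula.imp A B ∈ Sg := by simpa [hgoal] using hwf.goal_mem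
      exact (hwf.assume hx (hS.imp_mem hAB).1).aim hx (hS.imp_mem hAB).2
  | boxR x A j _ =>
    cases hm with
    | boxR _ _ hgoal =>
      have hx : x ∈ S.labels := by simpa [hgoal] using hwf.goal_label
      have hA : Formula.box A ∈ Sg := by simpa [hgoal] using hwf.goal_mem
      exact (hwf.extend (k := .box A j) hx hA).aim (Finset.mem_insert_self _ _) (hS.box_mem hA)

end Move.Reply

/-- A position of the proof-search game: a state and the list of its predecessors. -/
abbrev Position (Sg : Finset Formula) := {S : State // S.WF Sg} × List {S : State // S.WF Sg}

/-- The game in which the prover searches bottom-up for a proof and the opponent chooses the branch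
to be continued. -/
def searchGame (Sg : Finset Formula) : Game (Position Sg) Move where
  avail p m := m.Avail Sg p.1
  reply p m q := m.Reply p.1 q.1 ∧ q.2 = p.1 :: p.2
  parent q := match q.2 with
    | [] => q
    | a :: l => (a, l)
  depth q := q.2.length
  exists_avail p := ⟨_, .cut _ _ p.1.2.goal_label p.1.2.goal_mem⟩
  parent_eq := fun ⟨_, h⟩ => by rw [h]
  depth_eq := fun ⟨_, h⟩ => by rw [h, List.length_cons]

/-- The last round has introduced a new label among the `◇`-extensions of `v`. -/
def newDiaExtension (Sg : Finset Formula) (v : Label) : Set (Position Sg) :=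
  {q | ∃ y, DiaExtends v y ∧ y ∈ q.1.1.labels ∧ ∃ S ∈ q.2.head?, y ∉ S.1.labels}

/-- An injective code of formulas by natural numbers. -/
def Formula.code : Formula → ℕ
  | .atom n => Nat.pair 0 n
  | .bot => Nat.pair 1 0
  | .and A B => Nat.pair 2 (Nat.pair A.code B.code)
  | .or A B => Nat.pair 3 (Nat.pair A.code B.code)
  | .imp A B => Nat.pair 4 (Nat.pair A.code B.code)
  | .box A => Nat.pair 5 A.code
  | .dia A => Nat.pair 6 A.code

theorem Formula.code_injective : Function.Injective Formula.code := by
  intro A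
  induction A <;> intro B h <;> cases B <;> grind [code, Nat.pair_eq_pair]

instance : Countable Formula := Formula.code_injective.countable

instance : Countable Child :=
  Function.Injective.countable (β := Formula ⊕ Formula × ℕ)
    (f := fun | .dia A => .inl A | .box A j => .inr (A, j))
    (by rintro (A | ⟨A, i⟩) (B | ⟨B, j⟩) h <;> simp_all)

/-! ### The Henkin model of a winning strategy of the opponent -/

open Relation

theorem depth_le_of_reflTransGen {α : Type*} {r : α → α → Prop} {depth : α → ℕ}
    (hr : ∀ a b, r a b → depth b = depth a + 1) {a b : α} (h : ReflTransGen r a b) :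
    depth a ≤ depth b ∧ (depth a = depth b → a = b) := by
  induction h with
  | refl => exact ⟨le_rfl, fun _ => rfl⟩
  | tail _ hbc ih =>
    have := hr _ _ hbc
    exact ⟨by omega, fun _ => by omega⟩

theorem reflTransGen_of_le {α : Type*} {r : α → α → Prop} {f : ℕ → α}
    (hf : ∀ n, ReflTransGen r (f n) (f (n + 1))) {m n : ℕ} (h : m ≤ n) :
    ReflTransGen r (f m) (f n) := by
  induction n, h using Nat.le_induction with
  | base => exact .refl
  | succ n _ ih => exact ih.trans (hf n)

theorem exists_path_through {α : Type*} {r : α → α → Prop} {depth : α → ℕ}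
    (hr : ∀ a b, r a b → depth b = depth a + 1) {f : ℕ → α}
    (hf : ∀ n, ReflTransGen r (f n) (f (n + 1))) (hdepth : ∀ d, ∃ n, d < depth (f n)) :
    ∃ c, IsPath r (f 0) c ∧ ∀ n, ∃ m, c m = f n := by
  classical
  let OnRoute (a : α) : Prop := ∀ n, depth a ≤ depth (f n) → ReflTransGen r a (f n)
  have hstep : ∀ a : {a // OnRoute a}, ∃ b : {a // OnRoute a}, r a b := by
    rintro ⟨a, ha⟩
    obtain ⟨n, hn, hmin⟩ := Nat.findX (hdepth (depth a))
    rcases (ha n hn.le).cases_head with rfl | ⟨b, hab, hb⟩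
    · exact absurd hn (lt_irrefl _)
    refine ⟨⟨b, fun k hk => hb.trans (reflTransGen_of_le hf ?_)⟩, hab⟩
    by_contra hlt
    have := hr _ _ hab
    exact hmin k (by omega) (by omega)
  choose next hnext using hstep
  let c : ℕ → {a // OnRoute a} := fun n =>
    Nat.rec ⟨f 0, fun n _ => reflTransGen_of_le hf n.zero_le⟩ (fun _ => next) n
  have hc : ∀ n, r (c n).1 (c (n + 1)).1 := fun n => hnext (c n)
  have hdepth_c : ∀ n, depth (c n).1 = depth (f 0) + n := by
    intro n
    induction n with
    | zero => rfl
    | succ n ih => rw [hr _ _ (hc n), ih, Nat.add_assoc]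
  refine ⟨fun n => (c n).1, ⟨rfl, hc⟩, fun n => ⟨depth (f n) - depth (f 0), ?_⟩⟩
  have hle := (depth_le_of_reflTransGen hr (reflTransGen_of_le hf n.zero_le)).1
  have heq : depth (c (depth (f n) - depth (f 0))).1 = depth (f n) := by rw [hdepth_c]; omega
  exact (depth_le_of_reflTransGen hr ((c _).2 n heq.le)).2 heq

/-- A winning strategy of the opponent in the proof-search game, as the tree of the plays that
follow it. -/
structure CounterStrategy (Sg : Finset Formula) where
  Node : Type
  state : Node → State
  step : Node → Node → Prop
  depth : Node → ℕ
  wf : ∀ o, (state o).WF Sg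
  depth_step : ∀ o o', step o o' → depth o' = depth o + 1
  exists_move : ∀ {o o'}, step o o' → ∃ m : Move,
    m.Avail Sg (state o) ∧ m.Reply (state o) (state o')
  exists_reply : ∀ {o} {m : Move}, m.Avail Sg (state o) → ∃ o',
    step o o' ∧ m.Reply (state o) (state o')
  not_frequently_new : ∀ {c : ℕ → Node}, (∀ n, step (c n) (c (n + 1))) → ∀ v,
    ¬ ∃ᶠ n in atTop, ∃ y, DiaExtends v y ∧ y ∈ (state (c (n + 1))).labels ∧
      y ∉ (state (c n)).labels

namespace CounterStrategy

variable {Sg : Finset Formula} {C : CounterStrategy Sg} {o o' : C.Node} {c : ℕ → C.Node}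
  {x y : Label} {A B : Formula}

theorem not_closed (o : C.Node) : ¬ (C.state o).Closed := fun h => by
  obtain ⟨o', -, hreply⟩ := C.exists_reply (.close h)
  cases hreply

theorem labels_mono (h : ReflTransGen C.step o o') :
    (C.state o).labels ⊆ (C.state o').labels := by
  induction h with
  | refl => exact subset_rfl
  | tail _ hstep ih =>
    obtain ⟨m, -, hm⟩ := C.exists_move hstep
    exact ih.trans hm.labels_subset

theorem facts_mono (h : ReflTransGen C.step o o') : (C.state o).facts ⊆ (C.state o').facts := by
  induction h with
  | refl => exact subset_rfl
  | tail _ hstep ih =>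
    obtain ⟨m, -, hm⟩ := C.exists_move hstep
    exact ih.trans hm.facts_subset

theorem labels_mono_nat (hc : ∀ n, C.step (c n) (c (n + 1))) {i j : ℕ} (h : i ≤ j) :
    (C.state (c i)).labels ⊆ (C.state (c j)).labels :=
  labels_mono (reflTransGen_of_le (fun n => .single (hc n)) h)

theorem exists_forall_diaExtends (hc : ∀ n, C.step (c n) (c (n + 1))) (v : Label) :
    ∃ N, ∀ M y, DiaExtends v y → y ∈ (C.state (c M)).labels → y ∈ (C.state (c N)).labels := by
  obtain ⟨N, hN⟩ := eventually_atTop.1 (not_frequently.1 (C.not_frequently_new hc v))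
  refine ⟨N, fun M y hvy hy => ?_⟩
  rcases le_total M N with hMN | hNM
  · exact labels_mono_nat hc hMN hy
  · induction M, hNM using Nat.le_induction with
    | base => exact hy
    | succ M hNM ih =>
      refine ih (by_contra fun hnot => hN M hNM ⟨y, hvy, hy, hnot⟩)

/-- A step that keeps the goal and adds facts, creating only `◇`-witnesses. -/
structure Grows (C : CounterStrategy Sg) (o o' : C.Node) : Prop where
  step : C.step o o'
  goal_eq : (C.state o').goal = (C.state o).goal
  facts_ssubset : (C.state o).facts ⊂ (C.state o').facts
  diaExtends : ∀ y ∈ (C.state o').labels, ∃ v ∈ (C.state o).labels, DiaExtends v y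

/-- No move of the prover makes the opponent add facts without changing the goal. -/
def Saturated (C : CounterStrategy Sg) (o : C.Node) : Prop := ∀ o', ¬ C.Grows o o'

theorem wellFounded_grows (C : CounterStrategy Sg) : WellFounded fun o' o => C.Grows o o' := by
  refine wellFounded_iff_isEmpty_descending_chain.2 ⟨fun ⟨c, hgrows⟩ => ?_⟩
  have hc : ∀ n, C.step (c n) (c (n + 1)) := fun n => (hgrows n).step
  have hext : ∀ n, ∀ y ∈ (C.state (c n)).labels, ∃ v ∈ (C.state (c 0)).labels,
      DiaExtends v y := by
    intro n
    induction n with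
    | zero => exact fun y hy => ⟨y, hy, .refl⟩
    | succ n ih =>
      intro y hy
      obtain ⟨v, hv, hvy⟩ := (hgrows n).diaExtends y hy
      obtain ⟨u, hu, huv⟩ := ih v hv
      exact ⟨u, hu, huv.trans hvy⟩
  choose bound hbound using exists_forall_diaExtends hc
  set N := (C.state (c 0)).labels.sup bound
  have hlabels : ∀ n, (C.state (c n)).labels ⊆ (C.state (c N)).labels := fun n y hy => by
    obtain ⟨v, hv, hvy⟩ := hext n y hy
    exact labels_mono_nat hc (Finset.le_sup (f := bound) hv) (hbound v n y hvy hy)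
  have hfacts : ∀ n, (C.state (c n)).facts ⊆ (C.state (c N)).labels ×ˢ Sg := fun n q hq =>
    Finset.mem_product.2 ⟨hlabels n ((C.wf _).fact_label hq), (C.wf _).fact_mem hq⟩
  have hcard : StrictMono fun n => (C.state (c n)).facts.card :=
    strictMono_nat_of_lt_succ fun n => Finset.card_lt_card (hgrows n).facts_ssubset
  have hlarge := hcard.le_apply (x := ((C.state (c N)).labels ×ˢ Sg).card + 1)
  have hsmall := Finset.card_le_card (hfacts (((C.state (c N)).labels ×ˢ Sg).card + 1))
  omega

theorem exists_saturated (o : C.Node) : ∃ o', ReflTransGen C.step o o' ∧ C.Saturated o' ∧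
    (C.state o').goal = (C.state o).goal := by
  induction o using C.wellFounded_grows.induction with
  | _ o ih =>
    by_cases hsat : C.Saturated o
    · exact ⟨o, .refl, hsat, rfl⟩
    · simp only [Saturated, not_forall, not_not] at hsat
      obtain ⟨o₁, hgrows⟩ := hsat
      obtain ⟨o₂, hreach, hsat, hgoal⟩ := ih o₁ hgrows
      exact ⟨o₂, hreach.head hgrows.step, hsat, hgoal.trans hgrows.goal_eq⟩

namespace Saturated

theorem mem_facts_of_assume (h : C.Saturated o) (hstep : C.step o o') {q : Label × Formula}
    (hq : C.state o' = (C.state o).assume q) : q ∈ (C.state o).facts := by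
  by_contra hnot
  refine h o' ⟨hstep, by rw [hq, State.assume], ?_, fun y hy => ⟨y, ?_, .refl⟩⟩
  · rw [hq]
    exact Finset.ssubset_insert hnot
  · rwa [hq] at hy

theorem exists_aim (h : C.Saturated o) (hx : x ∈ (C.state o).labels) (hA : A ∈ Sg)
    (hnot : (x, A) ∉ (C.state o).facts) :
    ∃ o', C.step o o' ∧ C.state o' = (C.state o).aim (x, A) := by
  obtain ⟨o', hstep, hreply⟩ := C.exists_reply (.cut x A hx hA)
  generalize hs : C.state o' = s at hreply
  cases hreply with
  | cut_goal => exact ⟨o', hstep, hs⟩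
  | cut_fact => exact absurd (h.mem_facts_of_assume hstep hs) hnot

theorem mem_facts_of_closed (h : C.Saturated o) (hx : x ∈ (C.state o).labels) (hA : A ∈ Sg)
    (hclosed : ((C.state o).aim (x, A)).Closed) : (x, A) ∈ (C.state o).facts := by
  by_contra hnot
  obtain ⟨o', -, ho'⟩ := h.exists_aim hx hA hnot
  exact not_closed o' (ho' ▸ hclosed)

theorem or_mem_facts (h : C.Saturated o) (hor : (x, .or A B) ∈ (C.state o).facts) :
    (x, A) ∈ (C.state o).facts ∨ (x, B) ∈ (C.state o).facts := by
  obtain ⟨o', hstep, hreply⟩ := C.exists_reply (.orL x A B hor)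
  generalize hs : C.state o' = s at hreply
  cases hreply with
  | orL₁ => exact .inl (h.mem_facts_of_assume hstep hs)
  | orL₂ => exact .inr (h.mem_facts_of_assume hstep hs)

theorem dia_mem_facts (h : C.Saturated o) (hdia : (x, .dia A) ∈ (C.state o).facts) :
    (.dia A :: x, A) ∈ (C.state o).facts := by
  have hx := (C.wf o).fact_label hdia
  by_cases hmem : .dia A :: x ∈ (C.state o).labels
  · exact (C.wf o).assumption_mem hmem
  obtain ⟨o', hstep, hreply⟩ := C.exists_reply (.diaL x A hdia hmem)
  generalize hs : C.state o' = s at hreply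
  cases hreply
  refine absurd ⟨hstep, ?_, ?_, fun y hy => ?_⟩ (h o')
  · rw [hs]
    rfl
  · rw [hs]
    exact Finset.ssubset_insert fun hfact => hmem ((C.wf o).fact_label hfact)
  · rw [hs] at hy
    rcases Finset.mem_insert.1 hy with rfl | hy
    · exact ⟨x, hx, .cons A .refl⟩
    · exact ⟨y, hy, .refl⟩

theorem exists_of_imp_not_mem (h : C.Saturated o) (hx : x ∈ (C.state o).labels)
    (hAB : .imp A B ∈ Sg) (hnot : (x, .imp A B) ∉ (C.state o).facts) :
    ∃ o', ReflTransGen C.step o o' ∧ C.Saturated o' ∧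
      (x, A) ∈ (C.state o').facts ∧ (x, B) ∉ (C.state o').facts := by
  obtain ⟨o₁, hstep₁, ho₁⟩ := h.exists_aim hx hAB hnot
  obtain ⟨o₂, hstep₂, hreply⟩ := C.exists_reply (o := o₁) (.impR x A B (by rw [ho₁, State.aim]))
  obtain ⟨o₃, hreach, hsat, hgoal⟩ := exists_saturated o₂
  refine ⟨o₃, (hreach.head hstep₂).head hstep₁, hsat, facts_mono hreach ?_, fun hB => ?_⟩
  · generalize C.state o₂ = s at hreply
    cases hreply
    exact Finset.mem_insert_self _ _
  · refine not_closed o₃ (.id ?_)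
    rw [hgoal]
    generalize C.state o₂ = s at hreply
    cases hreply
    exact hB

theorem exists_of_box_not_mem (h : C.Saturated o) (hx : x ∈ (C.state o).labels)
    (hA : .box A ∈ Sg) (hnot : (x, .box A) ∉ (C.state o).facts) :
    ∃ o' y, ReflTransGen C.step o o' ∧ C.Saturated o' ∧ Ancestor x y ∧
      y ∈ (C.state o').labels ∧ (y, A) ∉ (C.state o').facts := by
  obtain ⟨o₁, hstep₁, ho₁⟩ := h.exists_aim hx hA hnot
  obtain ⟨o₂, hstep₂, hreply⟩ := C.exists_reply (o := o₁) (.boxR x A (by rw [ho₁, State.aim]))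
  obtain ⟨o₃, hreach, hsat, hgoal⟩ := exists_saturated o₂
  obtain ⟨j, hj, hgoal₂⟩ : ∃ j, .box A j :: x ∈ (C.state o₂).labels ∧
      (C.state o₂).goal = (.box A j :: x, A) := by
    generalize C.state o₂ = s at hreply
    cases hreply with
    | boxR _ _ j _ => exact ⟨j, Finset.mem_insert_self _ _, rfl⟩
  refine ⟨o₃, .box A j :: x, (hreach.head hstep₂).head hstep₁, hsat, ancestor_cons _ x,
    labels_mono hreach hj, fun hfact => not_closed o₃ (.id ?_)⟩
  rwa [hgoal, hgoal₂]

end Saturated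

/-- The Kripke structure of the saturated nodes; the domain of a node is the set of its labels. -/
def henkin (C : CounterStrategy Sg) : Kripke {o : C.Node // C.Saturated o} Label where
  le w w' := ReflTransGen C.step w w'
  le_refl _ := .refl
  le_trans _ _ _ := .trans
  le_antisymm u v huv hvu := by
    have hdepth := depth_le_of_reflTransGen C.depth_step huv
    exact Subtype.ext (hdepth.2
      (hdepth.1.antisymm (depth_le_of_reflTransGen C.depth_step hvu).1))
  Dom w := {x | x ∈ (C.state w).labels}
  Dom_ne w := ⟨[], (C.wf w).nil_mem⟩
  Dom_mono _ _ h _ hx := labels_mono h hx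
  Pr w p := {x | (x, Formula.atom p) ∈ (C.state w).facts}
  Pr_sub w _ _ hx := (C.wf w).fact_label hx
  Pr_mono _ _ _ h _ hx := facts_mono h hx
  Rel w x y := Ancestor x y ∧ x ∈ (C.state w).labels ∧ y ∈ (C.state w).labels
  Rel_dom _ _ _ h := h.2
  Rel_mono _ _ _ _ h hxy := ⟨hxy.1, labels_mono h hxy.2.1, labels_mono h hxy.2.2⟩

theorem ksat_henkin_imp_iff (hS : SubformulaClosed Sg) (hAB : .imp A B ∈ Sg)
    (w : {o : C.Node // C.Saturated o}) {x : Label} (hx : x ∈ (C.state w).labels)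
    (ihA : ∀ w', x ∈ (C.state w'.1).labels →
      (ksat C.henkin w' x A ↔ (x, A) ∈ (C.state w').facts))
    (ihB : ∀ w', x ∈ (C.state w'.1).labels →
      (ksat C.henkin w' x B ↔ (x, B) ∈ (C.state w').facts)) :
    ksat C.henkin w x (.imp A B) ↔ (x, .imp A B) ∈ (C.state w).facts := by
  refine ⟨fun hsat => by_contra fun hnot => ?_, fun h w' hle => ?_⟩
  · obtain ⟨o', hreach, ho', hA, hB⟩ := w.2.exists_of_imp_not_mem hx hAB hnot
    have hx' := labels_mono hreach hx
    exact hB ((ihB ⟨o', ho'⟩ hx').1 (hsat ⟨o', ho'⟩ hreach ((ihA ⟨o', ho'⟩ hx').2 hA)))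
  · have hx' := labels_mono hle hx
    rw [ihA w' hx', ihB w' hx']
    exact fun hA => w'.2.mem_facts_of_closed hx' (hS.imp_mem hAB).2
      (.impL x A B (facts_mono hle h) hA rfl)

theorem ksat_henkin_box_iff (hS : SubformulaClosed Sg) (hA : .box A ∈ Sg)
    (w : {o : C.Node // C.Saturated o}) {x : Label} (hx : x ∈ (C.state w).labels)
    (ih : ∀ w' y, y ∈ (C.state w'.1).labels →
      (ksat C.henkin w' y A ↔ (y, A) ∈ (C.state w').facts)) :
    ksat C.henkin w x (.box A) ↔ (x, .box A) ∈ (C.state w).facts := by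
  refine ⟨fun hsat => by_contra fun hnot => ?_, fun h w' y hle hxy => ?_⟩
  · obtain ⟨o', y, hreach, ho', hxy, hy, hAy⟩ := w.2.exists_of_box_not_mem hx hA hnot
    exact hAy ((ih ⟨o', ho'⟩ y hy).1
      (hsat ⟨o', ho'⟩ y hreach ⟨hxy, labels_mono hreach hx, hy⟩))
  · rw [ih w' y hxy.2.2]
    exact w'.2.mem_facts_of_closed hxy.2.2 (hS.box_mem hA)
      (.boxL x y A (facts_mono hle h) hxy.1 hxy.2.2 rfl)

theorem ksat_henkin_iff (hS : SubformulaClosed Sg) (B : Formula) (hB : B ∈ Sg)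
    (w : {o : C.Node // C.Saturated o}) {x : Label} (hx : x ∈ (C.state w).labels) :
    ksat C.henkin w x B ↔ (x, B) ∈ (C.state w).facts := by
  induction B generalizing w x with
  | atom p => exact Iff.rfl
  | bot => exact ⟨False.elim, fun h => not_closed w.1 (.botL x h)⟩
  | and A B ihA ihB =>
    obtain ⟨hA, hB'⟩ := hS.and_mem hB
    rw [ksat, ihA hA w hx, ihB hB' w hx]
    exact ⟨fun h => w.2.mem_facts_of_closed hx hB (.andR x A B h.1 h.2 rfl),
      fun h => ⟨w.2.mem_facts_of_closed hx hA (.andL₁ x A B h rfl),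
        w.2.mem_facts_of_closed hx hB' (.andL₂ x A B h rfl)⟩⟩
  | or A B ihA ihB =>
    obtain ⟨hA, hB'⟩ := hS.or_mem hB
    rw [ksat, ihA hA w hx, ihB hB' w hx]
    refine ⟨?_, w.2.or_mem_facts⟩
    rintro (h | h)
    · exact w.2.mem_facts_of_closed hx hB (.orR₁ x A B h rfl)
    · exact w.2.mem_facts_of_closed hx hB (.orR₂ x A B h rfl)
  | imp A B ihA ihB =>
    obtain ⟨hA, hB'⟩ := hS.imp_mem hB
    exact ksat_henkin_imp_iff hS hB w hx (fun w' => ihA hA w') fun w' => ihB hB' w'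
  | box A ih => exact ksat_henkin_box_iff hS hB w hx fun w' _ => ih (hS.box_mem hB) w'
  | dia A ih =>
    have hA := hS.dia_mem hB
    refine ⟨fun ⟨y, hxy, hy⟩ => ?_, fun h => ?_⟩
    · rw [ih hA w hxy.2.2] at hy
      exact w.2.mem_facts_of_closed hx hB (.diaR x y A hy hxy.1 rfl)
    · have hfact := w.2.dia_mem_facts h
      have hlabel := (C.wf w).fact_label hfact
      exact ⟨_, ⟨ancestor_cons _ x, hx, hlabel⟩, (ih hA w hlabel).2 hfact⟩

theorem goal_eq_of_new_box_label (hstep : C.step o o') {j : ℕ}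
    (hnew : .box A j :: x ∈ (C.state o').labels) (hold : .box A j :: x ∉ (C.state o).labels) :
    (C.state o).goal = (x, .box A) := by
  obtain ⟨m, havail, hreply⟩ := C.exists_move hstep
  generalize C.state o' = s at hreply hnew
  cases hreply <;> rcases havail
  case boxR.boxR _ _ _ _ hgoal =>
    rcases Finset.mem_insert.1 hnew with heq | hmem
    · cases heq
      exact hgoal
    · exact absurd hmem hold
  case diaL.diaL =>
    rcases Finset.mem_insert.1 hnew with heq | hmem
    · cases heq
    · exact absurd hmem hold
  all_goals exact absurd hnew hold

theorem not_box_suffix_of_new_box_label (hc : ∀ n, C.step (c n) (c (n + 1))) {i j M : ℕ}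
    (hnew : .box A j :: x ∈ (C.state (c M)).labels)
    (hold : .box A j :: x ∉ (C.state (c 0)).labels) : ¬ .box A i :: y <:+ x := fun hyx => by
  induction M with
  | zero => exact hold hnew
  | succ M ih =>
    by_cases hmem : .box A j :: x ∈ (C.state (c M)).labels
    · exact ih hmem
    · exact not_closed (c M)
        ((C.wf _).closed_of_box_suffix (goal_eq_of_new_box_label (hc M) hnew hmem) hyx)

/-- An infinite branch `u` of labels, `a k` being the child taken at `u k`. -/
def IsBranch (u : ℕ → Label) (a : ℕ → Child) : Prop := ∀ k, u (k + 1) = a k :: u k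

namespace IsBranch

variable {u : ℕ → Label} {a : ℕ → Child}

theorem suffix_of_le (h : IsBranch u a) {i j : ℕ} (hij : i ≤ j) : u i <:+ u j := by
  induction j, hij using Nat.le_induction with
  | base => exact List.suffix_rfl
  | succ j _ ih =>
    rw [h j]
    exact ih.trans (List.suffix_cons _ _)

theorem injective (h : IsBranch u a) : Function.Injective u := by
  refine Function.Injective.of_comp (f := List.length) (StrictMono.injective ?_)
  exact strictMono_nat_of_lt_succ fun k => by simp [h k]

theorem finite_mem (h : IsBranch u a) (s : Finset Label) : {k | u k ∈ s}.Finite :=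
  s.finite_toSet.preimage h.injective.injOn

theorem diaExtends (h : IsBranch u a) {K : ℕ} (hdia : ∀ k ≥ K, ∃ A, a k = .dia A) {k : ℕ}
    (hk : K ≤ k) : DiaExtends (u K) (u k) := by
  induction k, hk using Nat.le_induction with
  | base => exact .refl
  | succ k hk ih =>
    obtain ⟨A, hA⟩ := hdia k hk
    rw [h k, hA]
    exact ih.cons A

theorem exists_of_ancestor {g : ℕ → Label} (hg : ∀ n, Ancestor (g n) (g (n + 1))) :
    ∃ u a, IsBranch u a ∧ ∀ k, u k <:+ g k := by
  let u (k : ℕ) : Label := (g k).drop ((g k).length - k)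
  have hsuffix : ∀ k, u k <:+ g k := fun k => List.drop_suffix _ _
  have hlen : ∀ k, (u k).length = k := fun k => by
    have : k ≤ (g k).length := (strictMono_nat_of_lt_succ fun n => (hg n).2).le_apply
    rw [List.length_drop]
    omega
  have hcons : ∀ k, ∃ b, u (k + 1) = b :: u k := fun k => by
    obtain ⟨l, hl⟩ := List.suffix_of_suffix_length_le ((hsuffix k).trans (hg k).1)
      (hsuffix (k + 1)) (by simp only [hlen, Nat.le_succ])
    have hlength := congrArg List.length hl
    rw [List.length_append, hlen, hlen, Nat.add_comm, Nat.add_left_cancel_iff] at hlength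
    obtain ⟨b, rfl⟩ := List.length_eq_one_iff.1 hlength
    exact ⟨b, hl.symm⟩
  choose a ha using hcons
  exact ⟨u, a, ha, hsuffix⟩

end IsBranch

section Branch

variable {u : ℕ → Label} {a : ℕ → Child}

-- Below a counterexample to `□A` the formula `□A` is a fact, which closes every state with such
-- a goal.
theorem not_lt_of_box_of_box (hc : ∀ n, C.step (c n) (c (n + 1)))
    (hu : ∀ k, ∃ M, u k ∈ (C.state (c M)).labels) (hbranch : IsBranch u a) {i j p q : ℕ}
    (hnew : u (j + 1) ∉ (C.state (c 0)).labels)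
    (hi : a i = .box A p) (hj : a j = .box A q) : ¬ i < j := fun hij => by
  obtain ⟨M, hM⟩ := hu (j + 1)
  rw [hbranch j, hj] at hM hnew
  refine not_box_suffix_of_new_box_label hc hM hnew (i := p) (y := u i) ?_
  rw [← hi, ← hbranch i]
  exact hbranch.suffix_of_le hij

theorem finite_box_steps (hc : ∀ n, C.step (c n) (c (n + 1)))
    (hu : ∀ k, ∃ M, u k ∈ (C.state (c M)).labels) (hbranch : IsBranch u a) :
    {k | ∃ A j, a k = .box A j}.Finite := by
  have hold : {k | u (k + 1) ∈ (C.state (c 0)).labels}.Finite :=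
    (C.state (c 0)).labels.finite_toSet.preimage
      (hbranch.injective.comp (add_left_injective 1)).injOn
  suffices hnew : {k | u (k + 1) ∉ (C.state (c 0)).labels ∧ ∃ A j, a k = .box A j}.Finite from
    (hold.union hnew).subset fun k hk => or_iff_not_imp_left.2 fun hk' => ⟨hk', hk⟩
  refine Set.Finite.of_injOn (f := fun k => (a k).assumption) (t := Sg) ?_ ?_ Sg.finite_toSet
  · intro k _
    obtain ⟨M, hM⟩ := hu (k + 1)
    rw [hbranch k] at hM
    exact (C.wf _).fact_mem ((C.wf _).assumption_mem hM)
  · rintro i ⟨hi, A, p, hA⟩ j ⟨hj, B, q, hB⟩ heq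
    obtain rfl : A = B := by simpa [hA, hB, Child.assumption] using heq
    exact le_antisymm (not_lt.1 (not_lt_of_box_of_box hc hu hbranch hi hB hA))
      (not_lt.1 (not_lt_of_box_of_box hc hu hbranch hj hA hB))

theorem false_of_isBranch (hc : ∀ n, C.step (c n) (c (n + 1)))
    (hu : ∀ k, ∃ M, u k ∈ (C.state (c M)).labels) (hbranch : IsBranch u a) : False := by
  obtain ⟨K, hK⟩ : ∃ K, ∀ k ≥ K, ∃ A, a k = .dia A := by
    obtain ⟨K, hK⟩ := (finite_box_steps hc hu hbranch).bddAbove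
    refine ⟨K + 1, fun k hk => ?_⟩
    rcases hak : a k with A | ⟨A, j⟩
    · exact ⟨A, rfl⟩
    · exact absurd (hK ⟨A, j, hak⟩) (by omega)
  obtain ⟨N, hN⟩ := exists_forall_diaExtends hc (u K)
  refine Set.infinite_of_injective_forall_mem (f := fun k => K + k) (add_right_injective K)
    (fun k => ?_) (hbranch.finite_mem (C.state (c N)).labels)
  obtain ⟨M, hM⟩ := hu (K + k)
  exact hN M _ (hbranch.diaExtends hK le_self_add) hM

end Branch

theorem exists_depth_gt {f : ℕ → C.Node} {g : ℕ → Label}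
    (hf : ∀ n, ReflTransGen C.step (f n) (f (n + 1))) (hg : Function.Injective g)
    (hmem : ∀ n, g n ∈ (C.state (f n)).labels) (d : ℕ) : ∃ n, d < C.depth (f n) := by
  by_contra! hbound
  have hbdd : BddAbove (Set.range fun n => C.depth (f n)) := ⟨d, Set.forall_mem_range.2 hbound⟩
  obtain ⟨N, hN⟩ := Nat.sSup_mem (Set.range_nonempty _) hbdd
  have hconst : ∀ n, f N = f (N + n) := fun n => by
    obtain ⟨hle, heq⟩ := depth_le_of_reflTransGen C.depth_step
      (reflTransGen_of_le hf (N.le_add_right n))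
    exact heq (hle.antisymm ((le_csSup hbdd ⟨N + n, rfl⟩).trans hN.ge))
  refine Set.infinite_of_injective_forall_mem (f := fun n => g (N + n))
    (hg.comp (add_right_injective N)) (fun n => ?_) (C.state (f N)).labels.finite_toSet
  rw [hconst n]
  exact hmem (N + n)

theorem predIGL_henkin (C : CounterStrategy Sg) : PredIGL C.henkin := by
  refine ⟨fun w x y z hxy hyz => ⟨hxy.1.trans hyz.1, hxy.2.1, hyz.2.2⟩, ?_⟩
  rintro ⟨f, g, hfg⟩
  have hg : ∀ n, Ancestor (g n) (g (n + 1)) := fun n => (hfg n).2.2.1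
  have hinj : Function.Injective g := Function.Injective.of_comp (f := List.length)
    (strictMono_nat_of_lt_succ fun n => (hg n).2).injective
  have hf : ∀ n, ReflTransGen C.step (f n) (f (n + 1)) := fun n => (hfg n).2.1
  obtain ⟨c, ⟨-, hc⟩, hthrough⟩ := exists_path_through C.depth_step hf
    (exists_depth_gt hf hinj fun n => (hfg n).1)
  obtain ⟨u, a, hbranch, hu⟩ := IsBranch.exists_of_ancestor hg
  refine false_of_isBranch hc (fun k => ?_) hbranch
  obtain ⟨M, hM⟩ := hthrough k
  exact ⟨M, (C.wf _).mem_of_suffix (hM ▸ (hfg k).1) (hu k)⟩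

end CounterStrategy

/-- The initial position of the search for a proof of `A`. -/
def initialPosition (A : Formula) : Position A.subformulas :=
  (⟨⟨{[]}, ∅, ([], A)⟩, by simp, by simp, by simp, by simp, by simp,
    A.mem_subformulas_self, by simp⟩, [])

/-- The winning condition of the prover: below some label, new `◇`-extensions are introduced
infinitely often. -/
def ProverWins (Sg : Finset Formula) (f : ℕ → Position Sg) : Prop :=
  ∃ v, ∃ᶠ n in atTop, f n ∈ newDiaExtension Sg v

theorem exists_counterStrategy {Sg : Finset Formula} {p : Position Sg}
    (h : ¬ (searchGame Sg).Win Set.univ (ProverWins Sg) p) :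
    ∃ (C : CounterStrategy Sg) (o : C.Node), C.state o = p.1 := by
  obtain ⟨enum, henum⟩ := exists_surjective_nat Label
  have hcond : ProverWins Sg = fun f => ∃ k, ∃ᶠ n in atTop, f n ∈ newDiaExtension Sg (enum k) :=
    funext fun f => propext henum.exists
  obtain ⟨O, pos, o₀, resp, hpos, hresp, hlose⟩ := Game.exists_refuting_strategy (hcond ▸ h)
  refine ⟨{
    Node := O
    state := fun o => (pos o).1
    step := fun o o' => ∃ m, (searchGame Sg).avail (pos o) m ∧ o' = resp o m
    depth := fun o => (searchGame Sg).depth (pos o)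
    wf := fun o => (pos o).1.2
    depth_step := ?_
    exists_move := ?_
    exists_reply := fun {o m} hm => ⟨resp o m, ⟨m, hm, rfl⟩, (hresp o m hm).1⟩
    not_frequently_new := ?_ }, o₀, congrArg (fun q => q.1.1) hpos⟩
  · rintro o o' ⟨m, hm, rfl⟩
    exact (searchGame Sg).depth_eq (hresp o m hm)
  · rintro o o' ⟨m, hm, rfl⟩
    exact ⟨m, hm, (hresp o m hm).1⟩
  · intro c hc v hnew
    choose m hm hcm using hc
    obtain ⟨k, rfl⟩ := henum v
    refine hlose c m hm hcm k ((tendsto_add_atTop_nat 1).frequently (hnew.mono ?_))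
    rintro n ⟨y, hvy, hy, hny⟩
    refine ⟨y, hvy, hy, (pos (c n)).1, ?_, hny⟩
    rw [hcm n, (hresp (c n) (m n) (hm n)).2]
    rfl

theorem PredValid.win {A : Formula} (h : PredValid A) :
    (searchGame A.subformulas).Win Set.univ (ProverWins A.subformulas) (initialPosition A) := by
  by_contra hlose
  obtain ⟨C, o, ho⟩ := exists_counterStrategy hlose
  obtain ⟨o', hreach, hsat, hgoal⟩ := C.exists_saturated o
  have hlabel := C.labels_mono hreach (C.wf o).nil_mem
  refine C.not_closed o' (.id ?_)
  rw [hgoal, ho]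
  exact (C.ksat_henkin_iff A.subformulaClosed_subformulas A A.mem_subformulas_self
    ⟨o', hsat⟩ hlabel).1 (h _ _ C.henkin C.predIGL_henkin _ _ hlabel)

/-! ### Infinite proofs from finite derivations -/

theorem exists_counter_slower_than (T : ℕ → ℕ) : ∃ pos : ℕ → ℕ, (∀ n, T (pos n) ≤ T 0 + n) ∧
    (∀ n, pos (n + 1) = pos n ∨ pos (n + 1) = pos n + 1) ∧
    ∀ n, ∃ i ≥ n, pos (i + 1) = pos i + 1 := by
  let pos : ℕ → ℕ := fun n =>
    Nat.rec 0 (fun n i => if T (i + 1) ≤ T 0 + (n + 1) then i + 1 else i) n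
  have pos_succ (n) :
      pos (n + 1) = if T (pos n + 1) ≤ T 0 + (n + 1) then pos n + 1 else pos n := rfl
  refine ⟨pos, fun n => ?_, fun n => ?_, fun n => ?_⟩
  · induction n with
    | zero => exact le_rfl
    | succ n ih =>
      rw [pos_succ]
      split_ifs with h
      · exact h
      · omega
  · rw [pos_succ]
    split_ifs <;> simp
  · by_contra! hstay
    have hconst : ∀ m, pos (n + m) = pos n := by
      intro m
      induction m with
      | zero => rfl
      | succ m ih =>
        have hne := hstay (n + m) le_self_add
        rw [pos_succ] at hne
        rw [← Nat.add_assoc, pos_succ, if_neg fun h => hne (if_pos h), ih]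
    refine hstay (n + T (pos n + 1)) le_self_add ?_
    rw [pos_succ, hconst, if_pos (by omega)]

theorem progressing_of_eventually {Sb : ℕ → Sequent} {u : ℕ → ℕ}
    (hu : ∀ i, ∀ᶠ n in atTop, (u i, u (i + 1)) ∈ (Sb n).rel) : Progressing Sb := by
  choose T hT using fun i => eventually_atTop.1 (hu i)
  obtain ⟨pos, hpos, hstep, hmove⟩ := exists_counter_slower_than T
  have hrel : ∀ n, (u (pos n), u (pos n + 1)) ∈ (Sb (T 0 + n)).rel := fun n => hT _ _ (hpos n)
  have hshift : ∀ n, u (pos (T 0 + n - T 0)) = u (pos n) := fun n => by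
    rw [Nat.add_sub_cancel_left]
  refine ⟨T 0, fun n => u (pos (n - T 0)), fun n hn => ?_, fun n hn => ?_, fun n => ?_⟩
  · obtain ⟨m, rfl⟩ := Nat.exists_eq_add_of_le hn
    simp only [hshift]
    exact .inl (.inl ⟨_, .inl (hrel m)⟩)
  · obtain ⟨m, rfl⟩ := Nat.exists_eq_add_of_le hn
    simp only [Nat.add_assoc, hshift]
    rcases hstep m with h | h <;> rw [h]
    · exact .inl rfl
    · exact .inr (hrel m)
  · obtain ⟨m, hm, hpm⟩ := hmove n
    refine ⟨T 0 + m, by omega, le_self_add, ?_⟩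
    simp only [Nat.add_assoc, hshift, hpm]
    exact hrel m

theorem InfProof.of_coalgebra {rule : Sequent → List Sequent → Prop} {X : Type*}
    {sq : X → Sequent} {children : X → List X} {a₀ : X}
    (hrule : ∀ a, rule (sq a) ((children a).map sq))
    (hrun : ∀ b, IsPath (fun a a' => a' ∈ children a) a₀ b → Progressing fun n => sq (b n)) :
    InfProof rule (sq a₀) := by
  let follow (o : Option X) (i : ℕ) : Option X := o.bind fun a => (children a)[i]?
  let node (p : List ℕ) : Option X := p.foldl follow (some a₀)
  have node_append (p : List ℕ) (i : ℕ) : node (p ++ [i]) = follow (node p) i :=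
    List.foldl_concat ..
  refine ⟨⟨fun p => (node p).map sq, rfl, fun p S hS => ?_⟩, fun f Sb hSb => ?_⟩
  · obtain ⟨a, ha, rfl⟩ := Option.map_eq_some_iff.1 hS
    refine ⟨_, hrule a, fun i => ?_⟩
    rw [node_append, ha, List.getElem?_map]
    rfl
  · choose b hb hsq using fun n => Option.map_eq_some_iff.1 (hSb n)
    obtain rfl : (fun n => sq (b n)) = Sb := funext hsq
    refine hrun b ⟨Option.some_injective _ (hb 0).symm, fun n => ?_⟩
    have hnext := hb (n + 1)
    rw [branchPath, List.range_succ, List.map_append, List.map_singleton, node_append] at hnext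
    change follow (node (branchPath f n)) (f n) = _ at hnext
    rw [hb n] at hnext
    exact List.mem_of_getElem? hnext

-- `κ n` is the number of steps taken before time `n`.
theorem exists_path_of_stuttering {α : Type*} {r : α → α → Prop} {d : ℕ → α} {J : ℕ → Prop}
    (hJ : ∃ᶠ n in atTop, J n) (hmove : ∀ n, J n → r (d n) (d (n + 1)))
    (hstay : ∀ n, ¬ J n → d (n + 1) = d n) :
    ∃ (f : ℕ → α) (κ : ℕ → ℕ), IsPath r (d 0) f ∧ Tendsto κ atTop atTop ∧
      ∀ n, f (κ n) = d n := by
  classical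
  have hinf : (Set.ofPred J).Infinite := Nat.frequently_atTop_iff_infinite.1 hJ
  have hnth := apply_nth_count hinf hstay
  refine ⟨fun i => d (Nat.nth J i), Nat.count J, ⟨hnth 0, fun i => ?_⟩, ?_, hnth⟩
  · have hsucc := hnth (Nat.nth J i + 1)
    rw [Nat.count_nth_succ_of_infinite hinf] at hsucc
    beta_reduce
    rw [hsucc]
    exact hmove _ (Nat.nth_mem_of_infinite hinf i)
  · exact (Nat.count_monotone J).tendsto_atTop_atTop fun i =>
      ⟨Nat.nth J i, (Nat.count_nth_of_infinite hinf i).ge⟩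

/-- `Derivable E R S` holds if `S` has a finite derivation in ℓIK4 from sequents in `E` in which
the relational atoms `R` occur in all conclusions of rules. -/
inductive Derivable (E : Set Sequent) (R : Set (ℕ × ℕ)) : Sequent → Prop
  | hyp {S : Sequent} : S ∈ E → Derivable E R S
  | rule {S : Sequent} {prems : List Sequent} : R ⊆ S.rel → RuleLIK4 S prems →
      (∀ S' ∈ prems, Derivable E R S') → Derivable E R S

/-- `Derivable` with a bound on the height of the derivation. -/
def DerivableIn (E : Set Sequent) (R : Set (ℕ × ℕ)) : ℕ → Sequent → Prop
  | 0, S => S ∈ E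
  | n + 1, S => S ∈ E ∨
      R ⊆ S.rel ∧ ∃ prems, RuleLIK4 S prems ∧ ∀ S' ∈ prems, DerivableIn E R n S'

section Derivable

variable {E : Set Sequent} {R : Set (ℕ × ℕ)} {S : Sequent}

theorem DerivableIn.mono {m n : ℕ} (hmn : m ≤ n) (h : DerivableIn E R m S) :
    DerivableIn E R n S := by
  induction m generalizing n S with
  | zero =>
    cases n with
    | zero => exact h
    | succ n => exact .inl h
  | succ m ih =>
    obtain ⟨n, rfl⟩ := Nat.exists_eq_add_of_lt hmn
    rcases h with h | ⟨hR, prems, hrule, hprems⟩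
    · exact .inl h
    · exact .inr ⟨hR, prems, hrule, fun S' hS' => ih (by omega) (hprems S' hS')⟩

theorem Derivable.exists_derivableIn (h : Derivable E R S) : ∃ n, DerivableIn E R n S := by
  induction h with
  | hyp hS => exact ⟨0, hS⟩
  | @rule S prems hR hrule _ ih =>
    choose! height hheight using ih
    refine ⟨(prems.map height).sum + 1, .inr ⟨hR, prems, hrule, fun S' hS' => ?_⟩⟩
    exact (hheight S' hS').mono (List.single_le_sum (by simp) _ (List.mem_map_of_mem hS'))

end Derivable

theorem ruleLIK4_self {S : Sequent} (hS : SingleRHS S) : RuleLIK4 S [S] := by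
  refine ⟨?_, hS, by simpa using hS⟩
  have h := Rule.th (tr := true) (thn := true) (ir := false) S.rel ∅ S.left S.right rfl
  rwa [Set.union_empty] at h

section Assembly

variable {X : Type*} {sq : X → Sequent} {next : X → X → Prop}

/-- A stage of the infinite proof assembled from derivations of the sequents `sq a` from sequents
`sq b` with `next a b`: a sequent of the derivation for the point `a`, with its height. -/
structure Stage (sq : X → Sequent) (next : X → X → Prop) where
  point : X
  height : ℕ
  sequent : Sequent
  derivableIn : DerivableIn {S | ∃ b, next point b ∧ sq b = S} (sq point).rel height sequent

/-- The stage `t` starts the derivation for a successor of the point of `s`. -/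
def Stage.Jump (s t : Stage sq next) : Prop :=
  next s.point t.point ∧ t.sequent = sq t.point ∧ s.sequent = sq t.point

/-- The stage `t` lies above `s` in the same derivation. -/
def Stage.Climb (s t : Stage sq next) : Prop :=
  t.point = s.point ∧ t.height < s.height ∧ (sq s.point).rel ⊆ s.sequent.rel

theorem Stage.exists_children (hsingle : ∀ a, SingleRHS (sq a))
    (hder : ∀ a, Derivable {S | ∃ b, next a b ∧ sq b = S} (sq a).rel (sq a))
    (s : Stage sq next) : ∃ cs : List (Stage sq next),
      RuleLIK4 s.sequent (cs.map Stage.sequent) ∧ ∀ t ∈ cs, s.Jump t ∨ s.Climb t := by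
  have hjump (h : ∃ b, next s.point b ∧ sq b = s.sequent) : ∃ cs : List (Stage sq next),
      RuleLIK4 s.sequent (cs.map Stage.sequent) ∧ ∀ t ∈ cs, s.Jump t ∨ s.Climb t := by
    obtain ⟨b, hnext, hb⟩ := h
    obtain ⟨n, hn⟩ := (hder b).exists_derivableIn
    refine ⟨[⟨b, n, sq b, hn⟩], ?_, by simp [Jump, hnext, hb]⟩
    rw [← hb]
    exact ruleLIK4_self (hsingle b)
  obtain ⟨a, n, S, h⟩ := s
  cases n with
  | zero => exact hjump h
  | succ n =>
    rcases h with h | ⟨hR, prems, hrule, hprems⟩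
    · exact hjump h
    · refine ⟨prems.attach.map fun S' => ⟨a, n, S'.1, hprems S'.1 S'.2⟩, ?_, fun t ht => ?_⟩
      · simpa [Function.comp_def] using hrule
      · obtain ⟨S', -, rfl⟩ := List.mem_map.1 ht
        exact .inr ⟨rfl, Nat.lt_succ_self n, hR⟩

theorem Stage.frequently_not_climb (s : ℕ → Stage sq next) :
    ∃ᶠ n in atTop, ¬ (s n).Climb (s (n + 1)) := fun hclimb => by
  obtain ⟨N, hN⟩ := eventually_atTop.1 hclimb
  obtain ⟨k, hk⟩ := WellFounded.not_rel_apply_succ (r := (· < ·)) fun n => (s (N + n)).height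
  exact hk (not_not.1 (hN (N + k) le_self_add)).2.1

theorem InfProof.of_derivable {a₀ : X} (hsingle : ∀ a, SingleRHS (sq a))
    (hder : ∀ a, Derivable {S | ∃ b, next a b ∧ sq b = S} (sq a).rel (sq a))
    (hrun : ∀ b, IsPath next a₀ b →
      ∃ u : ℕ → ℕ, ∀ i, ∀ᶠ k in atTop, (u i, u (i + 1)) ∈ (sq (b k)).rel) :
    InfProof RuleLIK4 (sq a₀) := by
  choose children hrule hchildren using Stage.exists_children hsingle hder
  obtain ⟨n₀, hn₀⟩ := (hder a₀).exists_derivableIn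
  refine InfProof.of_coalgebra (a₀ := (⟨a₀, n₀, sq a₀, hn₀⟩ : Stage sq next)) hrule
    fun s ⟨hs₀, hs⟩ => ?_
  have hjump (n) (hn : ¬ (s n).Climb (s (n + 1))) : (s n).Jump (s (n + 1)) :=
    (hchildren _ _ (hs n)).resolve_right hn
  obtain ⟨b, κ, hb, hκ, hbκ⟩ := exists_path_of_stuttering (r := next)
    (d := fun n => (s n).point) (Stage.frequently_not_climb s) (fun n hn => (hjump n hn).1)
    fun n hn => (not_not.1 hn).1
  rw [hs₀] at hb
  obtain ⟨u, hu⟩ := hrun b hb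
  refine progressing_of_eventually (u := u) fun i => ?_
  have hpoint : ∀ᶠ n in atTop, (u i, u (i + 1)) ∈ (sq (s n).point).rel := by
    simpa only [hbκ] using hκ.eventually (hu i)
  filter_upwards [hpoint, (tendsto_add_atTop_nat 1).eventually hpoint] with n hn hn'
  by_cases hclimb : (s n).Climb (s (n + 1))
  · exact hclimb.2.2 hn
  · rwa [(hjump n hclimb).2.2]

end Assembly

/-! ### Derived rules of the single-succedent calculus -/

theorem relVars_finite {R : Set (ℕ × ℕ)} (h : R.Finite) : (relVars R).Finite :=
  ((h.image Prod.fst).union (h.image Prod.snd)).subset fun z ⟨w, hw⟩ =>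
    hw.imp (fun hw => ⟨(z, w), hw, rfl⟩) fun hw => ⟨(w, z), hw, rfl⟩

theorem mLabels_finite (Γ : Multiset LFormula) : (mLabels Γ).Finite :=
  (Γ.finite_toSet.image Prod.fst).subset fun z ⟨A, hA⟩ => ⟨(z, A), hA, rfl⟩

theorem Sequent.vars_finite {S : Sequent} (h : S.rel.Finite) : S.vars.Finite :=
  ((relVars_finite h).union (mLabels_finite _)).union (mLabels_finite _)

namespace Derivable

variable {E : Set Sequent} {R₀ R R' R'' : Set (ℕ × ℕ)} {Γ Γ' Γ'' Θ : Multiset LFormula}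
  {g g' g'' : LFormula} {x y : ℕ} {A B : Formula}

theorem of_rule_nil (hR : R₀ ⊆ R) (hrule : RuleLK4 ⟨R, Γ, {g}⟩ []) :
    Derivable E R₀ ⟨R, Γ, {g}⟩ :=
  .rule hR ⟨hrule, rfl, by simp⟩ (by simp)

theorem of_rule_singleton (hR : R₀ ⊆ R) (hrule : RuleLK4 ⟨R, Γ, {g}⟩ [⟨R', Γ', {g'}⟩])
    (h : Derivable E R₀ ⟨R', Γ', {g'}⟩) : Derivable E R₀ ⟨R, Γ, {g}⟩ :=
  .rule hR ⟨hrule, rfl, by simp [SingleRHS]⟩ (by simpa using h)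

theorem of_rule_pair (hR : R₀ ⊆ R)
    (hrule : RuleLK4 ⟨R, Γ, {g}⟩ [⟨R', Γ', {g'}⟩, ⟨R'', Γ'', {g''}⟩])
    (h : Derivable E R₀ ⟨R', Γ', {g'}⟩) (h' : Derivable E R₀ ⟨R'', Γ'', {g''}⟩) :
    Derivable E R₀ ⟨R, Γ, {g}⟩ :=
  .rule hR ⟨hrule, rfl, by simp [SingleRHS]⟩ (by simpa using ⟨h, h'⟩)

theorem add_left (hR : R₀ ⊆ R) (h : Derivable E R₀ ⟨R, Γ, {g}⟩) (Θ : Multiset LFormula) :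
    Derivable E R₀ ⟨R, Θ + Γ, {g}⟩ := by
  induction Θ using Multiset.induction with
  | empty => rwa [Multiset.zero_add]
  | cons q Θ ih =>
    rw [Multiset.cons_add]
    exact of_rule_singleton hR (.wkL _ _ _ _ _) ih

theorem contract_left (hR : R₀ ⊆ R) (hΘ : Θ ⊆ Γ) (h : Derivable E R₀ ⟨R, Θ + Γ, {g}⟩) :
    Derivable E R₀ ⟨R, Γ, {g}⟩ := by
  induction Θ using Multiset.induction with
  | empty => rwa [Multiset.zero_add] at h
  | cons q Θ ih =>
    obtain ⟨hq, hΘ⟩ := Multiset.cons_subset.1 hΘ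
    refine ih hΘ ?_
    obtain ⟨Γ', rfl⟩ := Multiset.exists_cons_of_mem hq
    rw [Multiset.add_cons] at h ⊢
    refine of_rule_singleton hR (.ctrL _ _ _ _ _) ?_
    rwa [Multiset.cons_add] at h

theorem of_subset (hR : R₀ ⊆ R) (hR' : R' ⊆ R) (hΓ : Γ' ⊆ Γ)
    (h : Derivable E R₀ ⟨R', Γ', {g}⟩) : Derivable E R₀ ⟨R, Γ, {g}⟩ := by
  have thinning : RuleLK4 ⟨R, Γ', {g}⟩ [⟨R', Γ', {g}⟩] := by
    have hth : RuleLK4 ⟨R' ∪ R, Γ', {g}⟩ [⟨R', Γ', {g}⟩] := .th _ _ _ _ rfl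
    rwa [Set.union_eq_self_of_subset_left hR'] at hth
  refine contract_left hR hΓ ?_
  rw [Multiset.add_comm]
  exact add_left hR (of_rule_singleton hR thinning h) Γ

theorem of_mem (hR : R₀ ⊆ R) {q : LFormula} (hq : q ∈ Γ)
    (h : Derivable E R₀ ⟨R, q ::ₘ Γ, {g}⟩) : Derivable E R₀ ⟨R, Γ, {g}⟩ :=
  of_subset hR subset_rfl (Multiset.cons_subset.2 ⟨hq, Multiset.Subset.refl Γ⟩) h

theorem cut (hR : R₀ ⊆ R) (h : Derivable E R₀ ⟨R, Γ, {(x, A)}⟩)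
    (h' : Derivable E R₀ ⟨R, (x, A) ::ₘ Γ, {g}⟩) : Derivable E R₀ ⟨R, Γ, {g}⟩ :=
  contract_left hR (Multiset.Subset.refl Γ) (of_rule_pair hR (.cut R Γ Γ 0 {g} x A) h h')

theorem botL (hR : R₀ ⊆ R) (hx : (x, .bot) ∈ Γ) : Derivable E R₀ ⟨R, Γ, {g}⟩ :=
  of_mem hR hx (of_rule_nil hR (.botL _ _ _ _))

theorem andL₁ (hR : R₀ ⊆ R) (hx : (x, .and A B) ∈ Γ)
    (h : Derivable E R₀ ⟨R, (x, A) ::ₘ Γ, {g}⟩) : Derivable E R₀ ⟨R, Γ, {g}⟩ :=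
  of_mem hR hx (of_rule_singleton hR (.andL₁ _ _ _ _ _ _) h)

theorem andL₂ (hR : R₀ ⊆ R) (hx : (x, .and A B) ∈ Γ)
    (h : Derivable E R₀ ⟨R, (x, B) ::ₘ Γ, {g}⟩) : Derivable E R₀ ⟨R, Γ, {g}⟩ :=
  of_mem hR hx (of_rule_singleton hR (.andL₂ _ _ _ _ _ _) h)

theorem orL (hR : R₀ ⊆ R) (hx : (x, .or A B) ∈ Γ) (h : Derivable E R₀ ⟨R, (x, A) ::ₘ Γ, {g}⟩)
    (h' : Derivable E R₀ ⟨R, (x, B) ::ₘ Γ, {g}⟩) : Derivable E R₀ ⟨R, Γ, {g}⟩ :=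
  of_mem hR hx (of_rule_pair hR (.orL _ _ _ _ _ _) h h')

theorem impL (hR : R₀ ⊆ R) (hx : (x, .imp A B) ∈ Γ) (h : Derivable E R₀ ⟨R, Γ, {(x, A)}⟩)
    (h' : Derivable E R₀ ⟨R, (x, B) ::ₘ Γ, {g}⟩) : Derivable E R₀ ⟨R, Γ, {g}⟩ :=
  of_mem hR hx <| contract_left hR (Multiset.subset_cons Γ _) <| by
    rw [Multiset.add_cons]
    exact of_rule_pair hR (.impL R Γ Γ 0 {g} x A B) h h'

theorem boxL (hR : R₀ ⊆ R) (hx : (x, .box A) ∈ Γ) (hxy : (x, y) ∈ R)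
    (h : Derivable E R₀ ⟨R, (y, A) ::ₘ Γ, {g}⟩) : Derivable E R₀ ⟨R, Γ, {g}⟩ :=
  of_mem hR hx (of_rule_singleton hR (.boxL _ _ _ _ _ _ hxy) h)

theorem diaL (hR : R₀ ⊆ R) (hx : (x, .dia A) ∈ Γ) (hy : Fresh y ⟨R, Γ, {g}⟩)
    (h : Derivable E R₀ ⟨insert (x, y) R, (y, A) ::ₘ Γ, {g}⟩) : Derivable E R₀ ⟨R, Γ, {g}⟩ :=
  of_mem hR hx (of_rule_singleton hR (.diaL _ _ _ _ _ _ (hy.of_subset subset_rfl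
    (Multiset.cons_subset.2 ⟨hx, Multiset.Subset.refl Γ⟩) (Multiset.Subset.refl _))) h)

theorem andR (hR : R₀ ⊆ R) (h : Derivable E R₀ ⟨R, Γ, {(x, A)}⟩)
    (h' : Derivable E R₀ ⟨R, Γ, {(x, B)}⟩) : Derivable E R₀ ⟨R, Γ, {(x, .and A B)}⟩ :=
  of_rule_pair hR (.andR _ _ 0 _ _ _) h h'

theorem orR₁ (hR : R₀ ⊆ R) (h : Derivable E R₀ ⟨R, Γ, {(x, A)}⟩) :
    Derivable E R₀ ⟨R, Γ, {(x, .or A B)}⟩ :=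
  of_rule_singleton hR (.orR₁ _ _ 0 _ _ _) h

theorem orR₂ (hR : R₀ ⊆ R) (h : Derivable E R₀ ⟨R, Γ, {(x, B)}⟩) :
    Derivable E R₀ ⟨R, Γ, {(x, .or A B)}⟩ :=
  of_rule_singleton hR (.orR₂ _ _ 0 _ _ _) h

theorem impR (hR : R₀ ⊆ R) (h : Derivable E R₀ ⟨R, (x, A) ::ₘ Γ, {(x, B)}⟩) :
    Derivable E R₀ ⟨R, Γ, {(x, .imp A B)}⟩ :=
  of_rule_singleton hR (.impR _ _ 0 _ _ _ fun _ => rfl) h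

theorem boxR (hR : R₀ ⊆ R) (hy : Fresh y ⟨R, Γ, {(x, .box A)}⟩)
    (h : Derivable E R₀ ⟨insert (x, y) R, Γ, {(y, A)}⟩) :
    Derivable E R₀ ⟨R, Γ, {(x, .box A)}⟩ :=
  of_rule_singleton hR (.boxR _ _ 0 _ _ _ (fun _ => rfl) hy) h

theorem diaR (hR : R₀ ⊆ R) (hxy : (x, y) ∈ R) (h : Derivable E R₀ ⟨R, Γ, {(y, A)}⟩) :
    Derivable E R₀ ⟨R, Γ, {(x, .dia A)}⟩ :=
  of_rule_singleton hR (.diaR _ _ 0 _ _ _ hxy) h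

theorem trans_left {z z' : ℕ} (hR : R₀ ⊆ R) (hz : (z, z') ∈ R) {s : Set ℕ} (hs : s.Finite)
    (hsz : ∀ a ∈ s, (a, z) ∈ R) (h : Derivable E R₀ ⟨R ∪ (fun a => (a, z')) '' s, Γ, {g}⟩) :
    Derivable E R₀ ⟨R, Γ, {g}⟩ := by
  induction s, hs using Set.Finite.induction_on with
  | empty => rwa [Set.image_empty, Set.union_empty] at h
  | @insert a s _ _ ih =>
    refine ih (fun b hb => hsz b (Set.mem_insert_of_mem _ hb)) ?_
    rw [Set.image_insert_eq, Set.union_insert] at h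
    exact of_rule_singleton (hR.trans Set.subset_union_left)
      (.trans _ _ _ a z z' rfl (.inl (hsz a (Set.mem_insert _ _))) (.inl hz)) h

theorem id (hR : R₀ ⊆ R) (hfin : R.Finite) (h : (x, A) ∈ Γ) :
    Derivable E R₀ ⟨R, Γ, {(x, A)}⟩ := by
  induction A generalizing R Γ x with
  | atom p =>
    exact of_subset (Γ' := {(x, Formula.atom p)}) hR subset_rfl (Multiset.singleton_subset.2 h)
      (of_rule_nil hR (.id R x p))
  | bot => exact botL hR h
  | and A B ihA ihB =>
    exact andR hR (andL₁ hR h (ihA hR hfin (Multiset.mem_cons_self _ _)))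
      (andL₂ hR h (ihB hR hfin (Multiset.mem_cons_self _ _)))
  | or A B ihA ihB =>
    exact orL hR h (orR₁ hR (ihA hR hfin (Multiset.mem_cons_self _ _)))
      (orR₂ hR (ihB hR hfin (Multiset.mem_cons_self _ _)))
  | imp A B ihA ihB =>
    exact impR hR (impL hR (Multiset.mem_cons_of_mem h) (ihA hR hfin (Multiset.mem_cons_self _ _))
      (ihB hR hfin (Multiset.mem_cons_self _ _)))
  | box A ih =>
    obtain ⟨y, hy⟩ := (Sequent.vars_finite (S := ⟨R, Γ, {(x, .box A)}⟩) hfin).exists_notMem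
    have hR' := hR.trans (Set.subset_insert (x, y) R)
    exact boxR hR hy (boxL hR' h (Set.mem_insert _ _)
      (ih hR' (hfin.insert _) (Multiset.mem_cons_self _ _)))
  | dia A ih =>
    obtain ⟨y, hy⟩ := (Sequent.vars_finite (S := ⟨R, Γ, {(x, .dia A)}⟩) hfin).exists_notMem
    have hR' := hR.trans (Set.subset_insert (x, y) R)
    exact diaL hR h hy (diaR hR' (Set.mem_insert _ _)
      (ih hR' (hfin.insert _) (Multiset.mem_cons_self _ _)))

theorem four (hR : R₀ ⊆ R) (hfin : R.Finite) (hx : (x, .box A) ∈ Γ) (hxy : (x, y) ∈ R) :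
    Derivable E R₀ ⟨R, Γ, {(y, .box A)}⟩ := by
  obtain ⟨z, hz⟩ := (Sequent.vars_finite (S := ⟨R, Γ, {(y, .box A)}⟩) hfin).exists_notMem
  have hR₁ := hR.trans (Set.subset_insert (y, z) R)
  have hR₂ := hR₁.trans (Set.subset_insert (x, z) _)
  exact boxR hR hz <| of_rule_singleton hR₁
    (.trans _ _ _ x y z rfl (Set.mem_insert_of_mem _ hxy) (Set.mem_insert _ _)) <|
    boxL hR₂ hx (Set.mem_insert _ _)
      (id hR₂ ((hfin.insert _).insert _) (Multiset.mem_cons_self _ _))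

end Derivable

/-! ### Sequents of states -/

section StateSequent

variable {ν : Label → ℕ} {Sg : Finset Formula} {S : State} {E : Set Sequent}
  {R₀ R : Set (ℕ × ℕ)} {Γ : Multiset LFormula} {g : LFormula} {x : Label} {A : Formula}

/-- The ancestor relation on a set of labels, renamed by `ν`. -/
def ancestorRel (ν : Label → ℕ) (V : Finset Label) : Set (ℕ × ℕ) :=
  {e | ∃ x ∈ V, ∃ y ∈ V, Ancestor x y ∧ (ν x, ν y) = e}

theorem ancestorRel_finite (V : Finset Label) : (ancestorRel ν V).Finite :=
  ((V ×ˢ V).finite_toSet.image fun e => (ν e.1, ν e.2)).subset fun _ ⟨x, hx, y, hy, _, he⟩ =>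
    ⟨(x, y), Finset.mk_mem_product hx hy, he⟩

theorem relVars_ancestorRel_subset (V : Finset Label) : relVars (ancestorRel ν V) ⊆ ν '' V := by
  rintro _ ⟨_, ⟨x, hx, y, -, -, he⟩ | ⟨x, -, y, hy, -, he⟩⟩ <;> cases he
  exacts [⟨x, hx, rfl⟩, ⟨y, hy, rfl⟩]

namespace State

/-- The facts of a state as the left-hand side of a sequent. -/
def left (ν : Label → ℕ) (S : State) : Multiset LFormula := S.facts.val.map fun q => (ν q.1, q.2)

/-- The sequent of a state, with labels renamed by `ν`. -/
def sequent (ν : Label → ℕ) (S : State) : Sequent :=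
  ⟨ancestorRel ν S.labels, S.left ν, {(ν S.goal.1, S.goal.2)}⟩

theorem mem_left (h : (x, A) ∈ S.facts) : (ν x, A) ∈ S.left ν :=
  Multiset.mem_map_of_mem (fun q : Label × Formula => (ν q.1, q.2)) h

theorem left_assume_subset : (S.assume (x, A)).left ν ⊆ (ν x, A) ::ₘ S.left ν := by
  intro q hq
  obtain ⟨⟨y, B⟩, hy, rfl⟩ := Multiset.mem_map.1 hq
  rcases Finset.mem_insert.1 hy with h | h
  · cases h
    exact Multiset.mem_cons_self _ _
  · exact Multiset.mem_cons_of_mem (mem_left h)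

namespace WF

theorem mLabels_left_subset (h : S.WF Sg) : mLabels (S.left ν) ⊆ ν '' S.labels := by
  rintro z ⟨A, hA⟩
  obtain ⟨⟨x, B⟩, hx, he⟩ := Multiset.mem_map.1 hA
  cases he
  exact ⟨x, h.fact_label hx, rfl⟩

theorem vars_sequent_subset (h : S.WF Sg) : (S.sequent ν).vars ⊆ ν '' S.labels := by
  rintro z ((hz | hz) | ⟨A, hA⟩)
  · exact relVars_ancestorRel_subset _ hz
  · exact h.mLabels_left_subset hz
  · cases Multiset.mem_singleton.1 hA
    exact ⟨_, h.goal_label, rfl⟩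

theorem eq_or_mem_ancestorRel (h : S.WF Sg) (hx : x ∈ S.labels) {a : Label} (ha : a <:+ x) :
    ν a = ν x ∨ (ν a, ν x) ∈ ancestorRel ν S.labels := by
  rcases ha.length_le.lt_or_eq with hlt | heq
  · exact .inr ⟨a, h.mem_of_suffix hx ha, x, hx, ⟨ha, hlt⟩, rfl⟩
  · exact .inl (congrArg ν (ha.eq_of_length heq))

theorem ancestorRel_extend_subset (h : S.WF Sg) {k : Child} (hk : k :: x ∉ S.labels) :
    ancestorRel ν (S.extend k x).labels ⊆
      ancestorRel ν S.labels ∪ (fun a => (a, ν (k :: x))) '' (ν '' {a | a <:+ x}) := by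
  rintro _ ⟨a, ha, b, hb, hab, rfl⟩
  rcases Finset.mem_insert.1 hb with rfl | hb
  · rcases List.suffix_cons_iff.1 hab.1 with rfl | hax
    · exact absurd hab.2 (lt_irrefl _)
    · exact .inr ⟨_, ⟨a, hax, rfl⟩, rfl⟩
  · rcases Finset.mem_insert.1 ha with rfl | ha
    · exact absurd (h.mem_of_suffix hb hab.1) hk
    · exact .inl ⟨a, ha, b, hb, hab, rfl⟩

end WF

theorem Closed.derivable (hS : S.WF Sg) (hc : S.Closed) :
    Derivable E (S.sequent ν).rel (S.sequent ν) := by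
  have hfin : (ancestorRel ν S.labels).Finite := ancestorRel_finite _
  have hrel {x y : Label} (h : Ancestor x y) (hy : y ∈ S.labels) :
      (ν x, ν y) ∈ ancestorRel ν S.labels := ⟨x, hS.mem_of_suffix hy h.1, y, hy, h, rfl⟩
  have hself {q : LFormula} : q ∈ q ::ₘ S.left ν := Multiset.mem_cons_self _ _
  unfold sequent
  cases hc with
  | id h => exact .id subset_rfl hfin (mem_left h)
  | botL x h => exact .botL subset_rfl (mem_left h)
  | andL₁ x A B h hg =>
    rw [hg]
    exact .andL₁ subset_rfl (mem_left h) (.id subset_rfl hfin hself)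
  | andL₂ x A B h hg =>
    rw [hg]
    exact .andL₂ subset_rfl (mem_left h) (.id subset_rfl hfin hself)
  | andR x A B hA hB hg =>
    rw [hg]
    exact .andR subset_rfl (.id subset_rfl hfin (mem_left hA)) (.id subset_rfl hfin (mem_left hB))
  | orR₁ x A B h hg =>
    rw [hg]
    exact .orR₁ subset_rfl (.id subset_rfl hfin (mem_left h))
  | orR₂ x A B h hg =>
    rw [hg]
    exact .orR₂ subset_rfl (.id subset_rfl hfin (mem_left h))
  | impL x A B h hA hg =>
    rw [hg]
    exact .impL subset_rfl (mem_left h) (.id subset_rfl hfin (mem_left hA))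
      (.id subset_rfl hfin hself)
  | boxL x y A h hxy hy hg =>
    rw [hg]
    exact .boxL subset_rfl (mem_left h) (hrel hxy hy) (.id subset_rfl hfin hself)
  | diaR x y A h hxy hg =>
    rw [hg]
    exact .diaR subset_rfl (hrel hxy (hS.fact_label h)) (.id subset_rfl hfin (mem_left h))
  | four x y A h hxy hy hg =>
    rw [hg]
    exact .four subset_rfl hfin (mem_left h) (hrel hxy hy)

end State

theorem finite_suffixes {α : Type*} (l : List α) : {a | a <:+ l}.Finite :=
  l.tails.finite_toSet.subset fun a ha => (List.mem_tails a l).2 ha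

theorem Derivable.of_suffixes {z z' : ℕ} (hR : R₀ ⊆ R) (hz : (z, z') ∈ R)
    (hx : ∀ a, a <:+ x → ν a = z ∨ (ν a, z) ∈ R)
    (h : Derivable E R₀ ⟨R ∪ (fun a => (a, z')) '' (ν '' {a | a <:+ x}), Γ, {g}⟩) :
    Derivable E R₀ ⟨R, Γ, {g}⟩ := by
  refine trans_left hR hz (s := {b ∈ ν '' {a | a <:+ x} | (b, z) ∈ R})
    (((finite_suffixes x).image ν).subset fun b hb => hb.1) (fun b hb => hb.2) ?_
  refine of_subset (hR.trans Set.subset_union_left) ?_ (Multiset.Subset.refl Γ) h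
  rintro _ (he | ⟨_, ⟨a, ha, rfl⟩, rfl⟩)
  · exact .inl he
  · rcases hx a ha with rfl | hax
    · exact .inl hz
    · exact .inr ⟨_, ⟨⟨a, ha, rfl⟩, hax⟩, rfl⟩

namespace State

theorem derivable_diaL (hν : Function.Injective ν) (hS : S.WF Sg) (hx : (x, .dia A) ∈ S.facts)
    (hnew : .dia A :: x ∉ S.labels) (hE : (S.extend (.dia A) x).sequent ν ∈ E) :
    Derivable E (S.sequent ν).rel (S.sequent ν) := by
  have hfresh : Fresh (ν (.dia A :: x)) (S.sequent ν) := fun h =>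
    hnew (hν.mem_set_image.1 (hS.vars_sequent_subset h))
  have hins := Set.subset_insert (ν x, ν (.dia A :: x)) (ancestorRel ν S.labels)
  refine .diaL subset_rfl (mem_left hx) hfresh (.of_suffixes (ν := ν) (x := x) hins
    (Set.mem_insert _ _) (fun a ha => ?_) ?_)
  · exact (hS.eq_or_mem_ancestorRel (hS.fact_label hx) ha).imp_right (@hins _)
  · exact .of_subset (hins.trans Set.subset_union_left)
      ((hS.ancestorRel_extend_subset hnew).trans (Set.union_subset_union_left _ hins))
      left_assume_subset (.hyp hE)

theorem derivable_of_avail (hν : Function.Injective ν) (hS : S.WF Sg) {m : Move}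
    (hm : m.Avail Sg S) (hbox : ∀ x A, m ≠ .boxR x A)
    (hE : ∀ S', m.Reply S S' → S'.sequent ν ∈ E) :
    Derivable E (S.sequent ν).rel (S.sequent ν) := by
  have hassume {q : Label × Formula} (h : (S.assume q).sequent ν ∈ E) :
      Derivable E (S.sequent ν).rel
        ⟨ancestorRel ν S.labels, (ν q.1, q.2) ::ₘ S.left ν, {(ν S.goal.1, S.goal.2)}⟩ :=
    .of_subset subset_rfl subset_rfl left_assume_subset (.hyp h)
  cases hm with
  | close hc => exact hc.derivable hS
  | cut x A =>
    exact .cut (x := ν x) (A := A) subset_rfl (.hyp (hE _ (.cut_goal x A)))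
      (hassume (hE _ (.cut_fact x A)))
  | orL x A B h =>
    exact .orL subset_rfl (mem_left h) (hassume (hE _ (.orL₁ x A B))) (hassume (hE _ (.orL₂ x A B)))
  | diaL x A h hnew => exact derivable_diaL hν hS h hnew (hE _ (.diaL x A))
  | impR x A B hgoal =>
    unfold sequent
    rw [hgoal]
    exact .impR subset_rfl (.of_subset subset_rfl subset_rfl left_assume_subset
      (.hyp (hE _ (.impR x A B))))
  | boxR x A => exact absurd rfl (hbox x A)

-- Cutting on `□A` at the new label provides the additional fact of the game; the left premiss of
-- the cut repeats the conclusion one step further along the relation.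
theorem derivable_boxR (hν : Function.Injective ν) (hS : S.WF Sg) {z : ℕ} (hfin : R.Finite)
    (hsub : ancestorRel ν S.labels ⊆ R) (hx : ∀ a, a <:+ x → ν a = z ∨ (ν a, z) ∈ R)
    (hgame : ∀ S', Move.Reply S (.boxR x A) S' → S'.sequent ν ∈ E)
    (hloop : ∀ R' z', R'.Finite → R ⊆ R' → (z, z') ∈ R' → (∀ a, a <:+ x → (ν a, z') ∈ R') →
      ⟨R', S.left ν, {(z', .box A)}⟩ ∈ E) :
    Derivable E R ⟨R, S.left ν, {(z, .box A)}⟩ := by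
  have hinj : Function.Injective fun j => ν (.box A j :: x) := fun i j h => by simpa using hν h
  obtain ⟨j, hj⟩ := (((Sequent.vars_finite (S := ⟨R, S.left ν, {(z, .box A)}⟩) hfin).union
    (S.labels.finite_toSet.image ν)).preimage hinj.injOn).exists_notMem
  obtain ⟨hfresh, hnew⟩ := not_or.1 hj
  have hnew : .box A j :: x ∉ S.labels := fun h => hnew ⟨_, h, rfl⟩
  set z' := ν (.box A j :: x)
  let R' : Set (ℕ × ℕ) := insert (z, z') R ∪ (fun a => (a, z')) '' (ν '' {a | a <:+ x})
  have hins : R ⊆ insert (z, z') R := Set.subset_insert _ _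
  have hR' : R ⊆ R' := hins.trans Set.subset_union_left
  have hfin' : R'.Finite := (hfin.insert _).union (((finite_suffixes x).image ν).image _)
  refine .boxR subset_rfl hfresh (.of_suffixes (ν := ν) (x := x) hins (Set.mem_insert _ _)
    (fun a ha => (hx a ha).imp_right (@hins _)) ?_)
  refine .cut (x := z') (A := .box A) hR' (.hyp (hloop R' z' hfin' hR'
    (.inl (Set.mem_insert _ _)) fun a ha => .inr ⟨_, ⟨a, ha, rfl⟩, rfl⟩)) ?_
  exact .of_subset hR' ((hS.ancestorRel_extend_subset hnew).trans
    (Set.union_subset_union_left _ (hsub.trans hins))) left_assume_subset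
    (.hyp (hgame _ (.boxR x A j hnew)))

end State

end StateSequent

/-! ### Infinite proofs from winning strategies of the prover -/

theorem DiaExtends.suffix {v y : Label} (h : DiaExtends v y) : v <:+ y := by
  induction h with
  | refl => exact List.suffix_rfl
  | cons A _ ih => exact ih.trans (List.suffix_cons _ _)

theorem DiaExtends.eq_or_exists {v y : Label} (h : DiaExtends v y) :
    y = v ∨ ∃ A, DiaExtends (.dia A :: v) y := by
  induction h with
  | refl => exact .inl rfl
  | cons A _ ih =>
    rcases ih with rfl | ⟨B, hB⟩
    · exact .inr ⟨A, .refl⟩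
    · exact .inr ⟨B, hB.cons A⟩

theorem exists_ancestor_chain {Y : Set Label} {Sg : Finset Formula}
    (hsuffix : ∀ {x y}, y ∈ Y → x <:+ y → x ∈ Y) (hdia : ∀ {A x}, .dia A :: x ∈ Y → A ∈ Sg)
    {v : Label} (hv : {y ∈ Y | DiaExtends v y}.Infinite) :
    ∃ u : ℕ → Label, ∀ i, Ancestor (u i) (u (i + 1)) ∧ u i ∈ Y := by
  let P := {v // {y ∈ Y | DiaExtends v y}.Infinite}
  have hstep (v : P) : ∃ w : P, Ancestor v.1 w.1 := by
    by_contra! hfin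
    refine v.2 (((Set.finite_singleton v.1).union (Sg.finite_toSet.biUnion fun A _ =>
      Set.not_infinite.1 fun h => hfin ⟨_, h⟩ (ancestor_cons (.dia A) v.1))).subset ?_)
    rintro y ⟨hyY, hy⟩
    rcases hy.eq_or_exists with rfl | ⟨A, hA⟩
    · exact .inl rfl
    · exact .inr (Set.mem_biUnion (hdia (hsuffix hyY hA.suffix)) ⟨hyY, hA⟩)
  choose next hnext using hstep
  refine ⟨fun i => (next^[i] ⟨v, hv⟩).1, fun i => ⟨?_, ?_⟩⟩
  · simp only [Function.iterate_succ_apply']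
    exact hnext _
  · obtain ⟨y, hyY, hy⟩ := (next^[i] ⟨v, hv⟩).2.nonempty
    exact hsuffix hyY hy.suffix

section Follows

variable {Sg : Finset Formula} {σ : Position Sg → Move} {p : Position Sg} {f : ℕ → Position Sg}

theorem monotone_labels_of_isPath (hf : IsPath ((searchGame Sg).Follows Set.univ σ) p f) :
    Monotone fun n => (f n).1.1.labels :=
  monotone_nat_of_le_succ fun n => (hf.2 n).1.1.labels_subset

theorem ProverWins.exists_infinite (hf : IsPath ((searchGame Sg).Follows Set.univ σ) p f)
    (hwin : ProverWins Sg f) :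
    ∃ v, {y | (∃ n, y ∈ (f n).1.1.labels) ∧ DiaExtends v y}.Infinite := by
  obtain ⟨v, hv⟩ := hwin
  refine ⟨v, fun hfin => ?_⟩
  have hmono := monotone_labels_of_isPath hf
  have hbound : ∀ᶠ n in atTop, ∀ y ∈ {y | (∃ n, y ∈ (f n).1.1.labels) ∧ DiaExtends v y},
      y ∈ (f n).1.1.labels :=
    (eventually_all_finite hfin).2 fun y ⟨⟨N, hN⟩, _⟩ =>
      eventually_atTop.2 ⟨N, fun n hn => hmono hn hN⟩
  obtain ⟨N, hN⟩ := eventually_atTop.1 hbound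
  obtain ⟨n, hn, y, hvy, hy, S, hS, hyS⟩ := frequently_atTop.1 hv (N + 1)
  obtain ⟨m, rfl⟩ := Nat.exists_eq_add_of_le' hn
  rw [← Nat.add_assoc, (hf.2 (m + N)).1.2] at hS
  cases hS
  exact hyS (hN _ (Nat.le_add_left N m) y ⟨⟨_, hy⟩, hvy⟩)

theorem ProverWins.exists_ancestor_chain (hf : IsPath ((searchGame Sg).Follows Set.univ σ) p f)
    (hwin : ProverWins Sg f) : ∃ u : ℕ → Label, ∀ i,
      Ancestor (u i) (u (i + 1)) ∧ ∀ᶠ n in atTop, u i ∈ (f n).1.1.labels := by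
  obtain ⟨v, hv⟩ := hwin.exists_infinite hf
  obtain ⟨u, hu⟩ := IGL.exists_ancestor_chain (Y := {y | ∃ n, y ∈ (f n).1.1.labels}) (Sg := Sg)
    (fun ⟨n, hn⟩ hxy => ⟨n, (f n).1.2.mem_of_suffix hn hxy⟩)
    (fun ⟨n, hn⟩ => (f n).1.2.fact_mem ((f n).1.2.assumption_mem hn)) hv
  refine ⟨u, fun i => ⟨(hu i).1, ?_⟩⟩
  obtain ⟨N, hN⟩ := (hu i).2
  exact eventually_atTop.2 ⟨N, fun n hn => monotone_labels_of_isPath hf hn hN⟩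

end Follows

section Configuration

variable {ν : Label → ℕ} {Sg : Finset Formula} {σ : Position Sg → Move}

/-- A point of the infinite proof built from a strategy `σ` of the prover. Its sequent is that of
the state of `pos`, except that during a series of `□`-right rules at the same position there may
be more relational atoms and the goal may have moved on to a new label `target`. -/
structure Configuration (ν : Label → ℕ) (σ : Position Sg → Move) where
  pos : Position Sg
  rel : Set (ℕ × ℕ)
  target : ℕ
  rel_finite : rel.Finite
  ancestorRel_subset : ancestorRel ν pos.1.1.labels ⊆ rel
  suffix_target : ∀ a, a <:+ pos.1.1.goal.1 → ν a = target ∨ (ν a, target) ∈ rel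
  eq_or_boxR : rel = ancestorRel ν pos.1.1.labels ∧ target = ν pos.1.1.goal.1 ∨
    ∃ x A, σ pos = .boxR x A

namespace Configuration

/-- The sequent of a configuration. -/
def sequent (c : Configuration ν σ) : Sequent :=
  ⟨c.rel, c.pos.1.1.left ν, {(c.target, c.pos.1.1.goal.2)}⟩

/-- The configuration whose sequent is that of the state of a position. -/
def ofPosition (p : Position Sg) : Configuration ν σ where
  pos := p
  rel := ancestorRel ν p.1.1.labels
  target := ν p.1.1.goal.1
  rel_finite := ancestorRel_finite _
  ancestorRel_subset := subset_rfl
  suffix_target _ ha := p.1.2.eq_or_mem_ancestorRel p.1.2.goal_label ha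
  eq_or_boxR := .inl ⟨rfl, rfl⟩

/-- A step of the series of `□`-right rules at a position. -/
def Loop (c d : Configuration ν σ) : Prop :=
  d.pos = c.pos ∧ c.rel ⊆ d.rel ∧ (c.target, d.target) ∈ d.rel

/-- The successors of a configuration in the infinite proof. -/
def Next (c d : Configuration ν σ) : Prop :=
  (searchGame Sg).Follows Set.univ σ c.pos d.pos ∨ c.Loop d

theorem derivable (hν : Function.Injective ν) (hS : SubformulaClosed Sg)
    (hσ : ∀ p, (searchGame Sg).avail p (σ p)) (c : Configuration ν σ) :
    Derivable {S | ∃ d, c.Next d ∧ d.sequent = S} c.sequent.rel c.sequent := by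
  have hgame (S' : State) (h : (σ c.pos).Reply c.pos.1 S') :
      S'.sequent ν ∈ {S | ∃ d, c.Next d ∧ d.sequent = S} :=
    ⟨ofPosition (⟨S', h.wf hS (hσ c.pos) c.pos.1.2⟩, c.pos.1 :: c.pos.2),
      .inl ⟨⟨h, rfl⟩, trivial⟩, rfl⟩
  by_cases hbox : ∃ x A, σ c.pos = .boxR x A
  · obtain ⟨x, A, hσc⟩ := hbox
    have hgoal : c.pos.1.1.goal = (x, .box A) := by
      have havail := hσ c.pos
      rw [hσc] at havail
      cases havail with | boxR _ _ h => exact h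
    have hx := c.suffix_target
    unfold sequent
    rw [hgoal] at hx ⊢
    refine State.derivable_boxR hν c.pos.1.2 c.rel_finite c.ancestorRel_subset hx
      (hσc ▸ hgame) fun R' z' hfin hsub hz hx' => ?_
    refine ⟨⟨c.pos, R', z', hfin, c.ancestorRel_subset.trans hsub, ?_, .inr ⟨x, A, hσc⟩⟩,
      .inr ⟨rfl, hsub, hz⟩, ?_⟩
    · rw [hgoal]
      exact fun a ha => .inr (hx' a ha)
    · simp only [hgoal]
  · obtain ⟨hrel, htarget⟩ := c.eq_or_boxR.resolve_right hbox
    have hseq : c.sequent = c.pos.1.1.sequent ν := by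
      simp only [sequent, State.sequent, hrel, htarget]
    rw [hseq]
    exact State.derivable_of_avail hν c.pos.1.2 (hσ c.pos) (fun x A h => hbox ⟨x, A, h⟩) hgame

theorem exists_trace_of_loop {b : ℕ → Configuration ν σ}
    (hb : ∀ᶠ n in atTop, (b n).Loop (b (n + 1))) :
    ∃ u : ℕ → ℕ, ∀ i, ∀ᶠ n in atTop, (u i, u (i + 1)) ∈ (b n).rel := by
  obtain ⟨K, hK⟩ := eventually_atTop.1 hb
  refine ⟨fun i => (b (K + i)).target, fun i => eventually_atTop.2 ⟨K + i + 1, fun n hn => ?_⟩⟩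
  induction n, hn using Nat.le_induction with
  | base => exact (hK (K + i) le_self_add).2.2
  | succ n hn ih => exact (hK n (by omega)).2.1 ih

theorem exists_trace {p : Position Sg}
    (hwin : ∀ f, IsPath ((searchGame Sg).Follows Set.univ σ) p f → ProverWins Sg f)
    {b : ℕ → Configuration ν σ} (hb : IsPath Next (ofPosition p) b) :
    ∃ u : ℕ → ℕ, ∀ i, ∀ᶠ n in atTop, (u i, u (i + 1)) ∈ (b n).rel := by
  by_cases hloop : ∀ᶠ n in atTop, (b n).Loop (b (n + 1))
  · exact exists_trace_of_loop hloop
  · obtain ⟨f, κ, hf, hκ, hfκ⟩ := exists_path_of_stuttering (d := fun n => (b n).pos)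
      (not_eventually.1 hloop) (fun n hn => (hb.2 n).resolve_right hn) fun n hn => (not_not.1 hn).1
    rw [hb.1] at hf
    obtain ⟨u, hu⟩ := (hwin f hf).exists_ancestor_chain hf
    refine ⟨fun i => ν (u i), fun i => ?_⟩
    filter_upwards [hκ.eventually (hu i).2, hκ.eventually (hu (i + 1)).2] with n hi hi'
    rw [hfκ n] at hi hi'
    exact (b n).ancestorRel_subset ⟨_, hi, _, hi', (hu i).1, rfl⟩

end Configuration

end Configuration

theorem exists_injective_apply_eq {α : Type*} [Countable α] (a : α) (n : ℕ) :
    ∃ ν : α → ℕ, Function.Injective ν ∧ ν a = n := by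
  obtain ⟨ν, hν⟩ := exists_injective_nat α
  exact ⟨Equiv.swap (ν a) n ∘ ν, (Equiv.injective _).comp hν, Equiv.swap_apply_left _ _⟩

theorem InfProof.of_win {A : Formula} (x : ℕ)
    (h : (searchGame A.subformulas).Win Set.univ (ProverWins A.subformulas) (initialPosition A)) :
    InfProof RuleLIK4 ⟨∅, 0, {(x, A)}⟩ := by
  obtain ⟨σ, hσ, hwin⟩ := h
  obtain ⟨ν, hν, hνx⟩ := exists_injective_apply_eq ([] : Label) x
  have hproof := InfProof.of_derivable (a₀ := (.ofPosition (initialPosition A) : Configuration ν σ))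
    (sq := Configuration.sequent) (next := Configuration.Next) (fun _ => rfl)
    (Configuration.derivable hν A.subformulaClosed_subformulas hσ)
    fun _ hb => Configuration.exists_trace hwin hb
  have hroot : (initialPosition A).1.1.sequent ν = ⟨∅, 0, {(x, A)}⟩ := by
    simp [initialPosition, State.sequent, State.left, ancestorRel, Ancestor, hνx]
  rwa [← hroot]

/-! ### The equivalences -/

theorem tfae_provable_valid (A : Formula) (x : ℕ) : List.TFAE
    [InfProof RuleLIK4 ⟨∅, 0, {(x, A)}⟩, BirelValid A, PredValid A,
      InfProof RuleMLIK4 ⟨∅, 0, {(x, A)}⟩] := by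
  tfae_have 1 → 4 := InfProof.multi_of_single
  tfae_have 4 → 3 := InfProof.predValid
  tfae_have 3 → 2 := PredValid.birelValid
  tfae_have 2 → 3 := BirelValid.predValid
  tfae_have 3 → 1 := fun h => .of_win x h.win
  tfae_finish

/-- **From the multi-succedent to the single-succedent system, and the grand
equivalence.** mℓIGL ⊢ x:A implies ℓIGL ⊢ x:A; consequently the following are
equivalent: (i) ℓIGL ⊢ x:A; (ii) birel-IGL ⊨ A; (iii) pred-IGL ⊨ A;
(iv) mℓIGL ⊢ x:A. -/
theorem grand_tour (A : Formula) (x : ℕ) :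
    (InfProof RuleMLIK4 ⟨∅, 0, {(x, A)}⟩ → InfProof RuleLIK4 ⟨∅, 0, {(x, A)}⟩) ∧
    (InfProof RuleLIK4 ⟨∅, 0, {(x, A)}⟩ ↔
      ∀ (W : Type) (B : Birel W), Nonempty W → BirelIGL B → ∀ w, bsat B w A) ∧
    ((∀ (W : Type) (B : Birel W), Nonempty W → BirelIGL B → ∀ w, bsat B w A) ↔
      ∀ (W D : Type) (K : Kripke W D), Nonempty W → PredIGL K →
        ∀ (w : W) (ρ : ℕ → D), (∀ v, ρ v ∈ K.Dom w) → ksat K w (ρ x) A) ∧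
    ((∀ (W D : Type) (K : Kripke W D), Nonempty W → PredIGL K →
        ∀ (w : W) (ρ : ℕ → D), (∀ v, ρ v ∈ K.Dom w) → ksat K w (ρ x) A) ↔
      InfProof RuleMLIK4 ⟨∅, 0, {(x, A)}⟩) := by
  have hbirel : (∀ (W : Type) (B : Birel W), Nonempty W → BirelIGL B → ∀ w, bsat B w A) ↔
      BirelValid A :=
    ⟨fun h W B hB w => h W B ⟨w⟩ hB w, fun h W B _ => h W B⟩
  have hpred : (∀ (W D : Type) (K : Kripke W D), Nonempty W → PredIGL K →
      ∀ (w : W) (ρ : ℕ → D), (∀ v, ρ v ∈ K.Dom w) → ksat K w (ρ x) A) ↔ PredValid A :=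
    ⟨fun h W D K hK w d hd => h W D K ⟨w⟩ hK w (fun _ => d) fun _ => hd,
      fun h W D K _ hK w ρ hρ => h W D K hK w (ρ x) (hρ x)⟩
  have tfae := tfae_provable_valid A x
  rw [hbirel, hpred]
  exact ⟨(tfae.out 3 0).1, tfae.out 0 1, tfae.out 1 2, tfae.out 2 3⟩

end IGL
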